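/- arXiv:2010.00429 — 3 statements merged into one kernel-verified Lean document; each statement's English description precedes it below -/
import Mathlib

section
/- For every subcubic graph G (a finite simple graph of maximum degree at most 3), the injective chromatic index of G satisfies χ'_inj(G) ≤ 7. -/
open SimpleGraph

/-- Two distinct edges of `G` *conflict* if they are at distance exactly 1 in `G`
(they share no endpoint but some endpoint of one is adjacent to some endpoint of the
other), or they lie in a common triangle of `G`. -/
def EdgeConflict {V : Type*} (G : SimpleGraph V) (e₁ e₂ : Sym2 V) : Prop :=
  e₁ ≠ e₂ ∧
    (((∀ u ∈ e₁, u ∉ e₂) ∧ ∃ u ∈ e₁, ∃ v ∈ e₂, G.Adj u v) ∨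
      (∃ a b c : V, G.Adj a b ∧ G.Adj b c ∧ G.Adj a c ∧
        e₁ ∈ ({s(a, b), s(b, c), s(a, c)} : Set (Sym2 V)) ∧
        e₂ ∈ ({s(a, b), s(b, c), s(a, c)} : Set (Sym2 V))))

/-- An injective edge-coloring of `G` with `k` colors. -/
def IsInjEdgeColoring {V : Type*} (G : SimpleGraph V) {k : ℕ} (f : Sym2 V → Fin k) : Prop :=
  ∀ e₁ ∈ G.edgeSet, ∀ e₂ ∈ G.edgeSet, EdgeConflict G e₁ e₂ → f e₁ ≠ f e₂

/-- The injective chromatic index of `G`. -/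
noncomputable def injChromIndex {V : Type*} (G : SimpleGraph V) : ℕ :=
  sInf {k : ℕ | ∃ f : Sym2 V → Fin k, IsInjEdgeColoring G f}


section Brooks
open Classical

/-- `f` is a proper colouring of the part of `H` inside `A`. -/
def PCol {α : Type*} (H : SimpleGraph α) {d : ℕ} (A : Finset α) (f : α → Fin d) : Prop :=
  ∀ x ∈ A, ∀ y ∈ A, H.Adj x y → f x ≠ f y

theorem PCol.extend {α : Type*} {H : SimpleGraph α} {d : ℕ} {A : Finset α} {f : α → Fin d}
    (hf : PCol H A f) (v : α) (hv : v ∉ A)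
    (hc : ((A.filter (H.Adj v)).image f).card < d) :
    ∃ g : α → Fin d, PCol H (insert v A) g ∧ ∀ x ∈ A, g x = f x := by
  obtain ⟨c, hc'⟩ : ∃ c : Fin d, c ∉ (A.filter (H.Adj v)).image f := by
    by_contra hcon
    push Not at hcon
    have : (A.filter (H.Adj v)).image f = Finset.univ := by
      ext c; simp only [hcon c, Finset.mem_univ]
    rw [this] at hc
    simp at hc
  have hne : ∀ x ∈ A, x ≠ v := fun x hx h => hv (h ▸ hx)
  have hc2 : ∀ x ∈ A, H.Adj v x → f x ≠ c := by
    intro x hx hvx h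
    exact hc' (Finset.mem_image.2 ⟨x, Finset.mem_filter.2 ⟨hx, hvx⟩, h⟩)
  refine ⟨Function.update f v c, ?_, ?_⟩
  · intro x hx y hy hxy
    rcases Finset.mem_insert.1 hx with hx1 | hx1
    · rcases Finset.mem_insert.1 hy with hy1 | hy1
      · subst hx1; subst hy1; exact absurd hxy (H.loopless.irrefl _)
      · subst hx1
        rw [Function.update_self, Function.update_of_ne (hne y hy1)]
        exact (hc2 y hy1 hxy).symm
    · rcases Finset.mem_insert.1 hy with hy1 | hy1
      · subst hy1
        rw [Function.update_self, Function.update_of_ne (hne x hx1)]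
        exact hc2 x hx1 hxy.symm
      · rw [Function.update_of_ne (hne y hy1), Function.update_of_ne (hne x hx1)]
        exact hf x hx1 y hy1 hxy
  · intro x hx
    exact Function.update_of_ne (hne x hx) _ _

theorem card_lt_of_next {α : Type*} [Fintype α] {H : SimpleGraph α} {d : ℕ} {A : Finset α}
    (f : α → Fin d) (hdeg : ∀ v, (Finset.univ.filter (H.Adj v)).card ≤ d)
    (v w : α) (hw : w ∉ A) (hvw : H.Adj v w) :
    ((A.filter (H.Adj v)).image f).card < d := by
  refine lt_of_le_of_lt Finset.card_image_le (lt_of_lt_of_le ?_ (hdeg v))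
  apply Finset.card_lt_card
  refine ⟨fun x hx => ?_, fun h => ?_⟩
  · simp at hx ⊢; exact hx.2
  · have := h (Finset.mem_filter.2 ⟨Finset.mem_univ w, hvw⟩)
    exact hw (Finset.mem_filter.1 this).1

theorem card_lt_of_same {α : Type*} [Fintype α] {H : SimpleGraph α} {d : ℕ} {A : Finset α}
    (f : α → Fin d) (hdeg : ∀ v, (Finset.univ.filter (H.Adj v)).card ≤ d)
    (v y w : α) (hyw : y ≠ w) (hvw : H.Adj v w) (hvy : H.Adj v y)
    (hf : f y = f w) :
    ((A.filter (H.Adj v)).image f).card < d := by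
  have h1 : (A.filter (H.Adj v)).image f ⊆ ((Finset.univ.filter (H.Adj v)).erase w).image f := by
    intro c hc
    obtain ⟨x, hx, rfl⟩ := Finset.mem_image.1 hc
    by_cases hxw : x = w
    · subst hxw
      rw [← hf]
      exact Finset.mem_image_of_mem _ (Finset.mem_erase.2 ⟨hyw, by simpa using hvy⟩)
    · exact Finset.mem_image_of_mem _ (Finset.mem_erase.2 ⟨hxw, by simp at hx ⊢; exact hx.2⟩)
  refine lt_of_le_of_lt (Finset.card_le_card h1) (lt_of_le_of_lt Finset.card_image_le ?_)
  exact lt_of_lt_of_le (Finset.card_erase_lt_of_mem (by simpa using hvw)) (hdeg v)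

theorem PCol.extend_chain {α : Type*} [Fintype α] {H : SimpleGraph α} {d : ℕ}
    (hdeg : ∀ v, (Finset.univ.filter (H.Adj v)).card ≤ d) (w : α) :
    ∀ (l : List α) (A : Finset α) (f : α → Fin d), PCol H A f → l.Nodup → (∀ x ∈ l, x ∉ A) →
      w ∉ A → w ∉ l → List.IsChain H.Adj (l ++ [w]) →
      ∃ g : α → Fin d, PCol H (A ∪ l.toFinset) g ∧ ∀ x ∈ A, g x = f x := by
  intro l
  induction l with
  | nil => intro A f hf _ _ _ _ _; exact ⟨f, by simpa using hf, fun _ _ => rfl⟩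
  | cons v l ih =>
    intro A f hf hnd hA hwA hwl hch
    have hnext : ∃ u, u ∉ A ∧ H.Adj v u := by
      cases l with
      | nil => 
        simp at hch
        exact ⟨w, hwA, hch⟩
      | cons u l => 
        simp at hch
        exact ⟨u, hA u (by simp), hch.1⟩
    obtain ⟨u, huA, hvu⟩ := hnext
    obtain ⟨g, hg, hgf⟩ := hf.extend v (hA v (by simp)) (card_lt_of_next f hdeg v u huA hvu)
    have hnd' := List.nodup_cons.1 hnd
    obtain ⟨g', hg', hgg'⟩ := ih (insert v A) g hg hnd'.2 
      (by 
        intro x hx hxA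
        rcases Finset.mem_insert.1 hxA with rfl | hxA
        · exact hnd'.1 hx
        · exact hA x (by simp [hx]) hxA)
      (by 
        intro h
        rcases Finset.mem_insert.1 h with rfl | h
        · exact hwl (by simp)
        · exact hwA h)
      (fun h => hwl (by simp [h]))
      (by rw [List.cons_append] at hch; exact hch.tail)
    refine ⟨g', ?_, fun x hx => by rw [hgg' x (by simp [hx]), hgf x hx]⟩
    convert hg' using 1
    ext x; simp

theorem exists_split_last {α : Type*} (P : α → Prop) : ∀ l : List α, (∃ x ∈ l, P x) →
    ∃ l1 x l2, l = l1 ++ x :: l2 ∧ P x ∧ ∀ y ∈ l2, ¬ P y := by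
  intro l
  induction l with
  | nil => rintro ⟨x, hx, _⟩; simp at hx
  | cons a l ih =>
    intro h
    by_cases h' : ∃ x ∈ l, P x
    · obtain ⟨l1, x, l2, rfl, hx, hl⟩ := ih h'
      exact ⟨a :: l1, x, l2, rfl, hx, hl⟩
    · push Not at h'
      obtain ⟨x, hx, hP⟩ := h
      rcases List.mem_cons.1 hx with rfl | hx
      · exact ⟨[], x, l, rfl, hP, h'⟩
      · exact absurd hP (h' x hx)

theorem exists_split_first {α : Type*} (P : α → Prop) : ∀ l : List α, (∃ x ∈ l, P x) →
    ∃ l1 x l2, l = l1 ++ x :: l2 ∧ P x ∧ ∀ y ∈ l1, ¬ P y := by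
  intro l
  induction l with
  | nil => rintro ⟨x, hx, _⟩; simp at hx
  | cons a l ih =>
    intro h
    by_cases ha : P a
    · exact ⟨[], a, l, rfl, ha, by simp⟩
    · obtain ⟨l1, x, l2, rfl, hx, hl⟩ := ih (by
        obtain ⟨x, hx, hP⟩ := h
        rcases List.mem_cons.1 hx with rfl | hx
        · exact absurd hP ha
        · exact ⟨x, hx, hP⟩)
      refine ⟨a :: l1, x, l2, rfl, hx, ?_⟩
      intro y hy
      rcases List.mem_cons.1 hy with rfl | hy
      · exact ha
      · exact hl y hy

theorem exists_maximal_path {α : Type*} [Fintype α] (H : SimpleGraph α) :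
    ∀ (n : ℕ) (p : List α), p.Nodup → List.IsChain H.Adj p → p ≠ [] → Fintype.card α - p.length ≤ n →
      ∃ q : List α, (q ++ p).Nodup ∧ List.IsChain H.Adj (q ++ p) ∧
        ∀ h t, q ++ p = h :: t → ∀ y, H.Adj h y → y ∈ q ++ p := by
  intro n
  induction n with
  | zero =>
    intro p hnd hch hne hlen
    refine ⟨[], by simpa using hnd, by simpa using hch, ?_⟩
    intro h t hp y hy
    by_contra hcon
    have h1 : (y :: p).Nodup := List.nodup_cons.2 ⟨by simpa using hcon, hnd⟩
    have := h1.length_le_card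
    simp at this
    omega
  | succ n ih =>
    intro p hnd hch hne hlen
    by_cases hmax : ∀ h t, p = h :: t → ∀ y, H.Adj h y → y ∈ p
    · exact ⟨[], by simpa using hnd, by simpa using hch, by simpa using hmax⟩
    · push Not at hmax
      obtain ⟨h, t, hp, y, hy, hyp⟩ := hmax
      have h1 : (y :: p).Nodup := List.nodup_cons.2 ⟨hyp, hnd⟩
      have h2 := h1.length_le_card
      simp only [List.length_cons] at h2
      obtain ⟨q, hq1, hq2, hq3⟩ := ih (y :: p) h1
        (by subst hp; exact List.isChain_cons_cons.2 ⟨hy.symm, hch⟩) (by simp)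
        (by simp only [List.length_cons]; omega)
      have e : q ++ y :: p = (q ++ [y]) ++ p := by simp
      rw [e] at hq1 hq2 hq3
      exact ⟨q ++ [y], hq1, hq2, hq3⟩

set_option maxHeartbeats 1000000 in
theorem brooks_aux {α : Type*} [Fintype α] (H : SimpleGraph α) (d : ℕ) (hd : 3 ≤ d)
    (hdeg : ∀ v, (Finset.univ.filter (H.Adj v)).card ≤ d) (hcl : H.CliqueFree (d + 1)) :
    ∀ (n : ℕ) (W : Finset α), W.card ≤ n → ∃ f : α → Fin d, PCol H W f := by
  intro n
  induction n with
  | zero =>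
    intro W hW
    refine ⟨fun _ => ⟨0, by omega⟩, ?_⟩
    intro x hx
    simp at hW
    simp [hW] at hx
  | succ n ih =>
    intro W hW
    by_cases hlow : ∃ v ∈ W, (W.filter (H.Adj v)).card < d
    · obtain ⟨v, hv, hvd⟩ := hlow
      have := Finset.card_erase_lt_of_mem hv
      obtain ⟨f, hf⟩ := ih (W.erase v) (by omega)
      obtain ⟨g, hg, -⟩ := hf.extend v (by simp) (lt_of_le_of_lt Finset.card_image_le
        (lt_of_le_of_lt (Finset.card_le_card (Finset.filter_subset_filter _ (Finset.erase_subset _ _))) hvd))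
      rw [Finset.insert_erase hv] at hg
      exact ⟨g, hg⟩
    push Not at hlow
    -- `W` is closed under adjacency
    have hclosed : ∀ v ∈ W, ∀ y, H.Adj v y → y ∈ W := by
      intro v hv y hvy
      have h1 : W.filter (H.Adj v) = Finset.univ.filter (H.Adj v) :=
        Finset.eq_of_subset_of_card_le (Finset.filter_subset_filter _ (Finset.subset_univ _))
          ((hdeg v).trans (hlow v hv))
      have h2 : y ∈ W.filter (H.Adj v) := by rw [h1]; simpa using hvy
      exact (Finset.mem_filter.1 h2).1
    rcases W.eq_empty_or_nonempty with rfl | ⟨x2, hx2⟩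
    · exact ⟨fun _ => ⟨0, by omega⟩, by intro x hx; simp at hx⟩
    have hcard2 : (Finset.univ.filter (H.Adj x2)).card = d :=
      le_antisymm (hdeg x2) ((hlow x2 hx2).trans
        (Finset.card_le_card (Finset.filter_subset_filter _ (Finset.subset_univ _))))
    obtain ⟨x1, x3, h21, h23, h13, hn13⟩ : ∃ x1 x3, H.Adj x2 x1 ∧ H.Adj x2 x3 ∧ x1 ≠ x3 ∧ ¬ H.Adj x1 x3 := by
      by_contra hcon
      push Not at hcon
      refine hcl (insert x2 (Finset.univ.filter (H.Adj x2))) ⟨?_, ?_⟩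
      · intro a ha b hb hab
        simp only [Finset.coe_insert, Finset.coe_filter, Finset.mem_univ, true_and,
          Set.mem_insert_iff, Set.mem_ofPred_eq] at ha hb
        rcases ha with rfl | ha
        · rcases hb with rfl | hb
          · exact absurd rfl hab
          · exact hb
        · rcases hb with rfl | hb
          · exact ha.symm
          · exact hcon a b ha hb hab
      · rw [Finset.card_insert_of_notMem (by simp), hcard2]
    have hnd0 : [x3, x2, x1].Nodup := by
      simp [h13.symm, h23.ne', h21.ne]
    have hch0 : List.IsChain H.Adj [x3, x2, x1] := by
      simp [h23.symm, h21]
    obtain ⟨q, hnd, hch, hmax⟩ := exists_maximal_path H _ [x3, x2, x1] hnd0 hch0 (by simp) le_rfl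
    set p := q ++ [x3, x2, x1] with hp
    obtain ⟨h, t, hpt⟩ : ∃ h t, p = h :: t := by
      cases hq : p with
      | nil => simp [hp] at hq
      | cons h t => exact ⟨h, t, rfl⟩
    have hhN := hmax h t hpt
    -- the path lies in `W`
    have hpW : ∀ x ∈ p, x ∈ W := by
      have key : ∀ l : List α, List.IsChain H.Adj l → (∃ x ∈ l, x ∈ W) → ∀ x ∈ l, x ∈ W := by
        intro l
        induction l with
        | nil => intro _ _ x hx; simp at hx
        | cons a l ihl =>
          intro hc hex x hx
          cases l with
          | nil => 
            obtain ⟨y, hy, hyW⟩ := hex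
            simp at hx hy
            subst hx; subst hy; exact hyW
          | cons b l =>
            have hab := (List.isChain_cons_cons.1 hc).1
            have hc' := (List.isChain_cons_cons.1 hc).2
            have hbl : ∃ y ∈ b :: l, y ∈ W := by
              obtain ⟨y, hy, hyW⟩ := hex
              rcases List.mem_cons.1 hy with rfl | hy
              · exact ⟨b, by simp, hclosed _ hyW _ hab⟩
              · exact ⟨y, hy, hyW⟩
            rcases List.mem_cons.1 hx with rfl | hx
            · exact hclosed b (ihl hc' hbl b (by simp)) _ hab.symm
            · exact ihl hc' hbl x hx
      exact key p hch ⟨x2, by simp [hp], hx2⟩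
    have hhp : h ∈ p := by rw [hpt]; simp
    have hhW : h ∈ W := hpW h hhp
    obtain ⟨l1, x, rest, hps, hhx, hrest⟩ := exists_split_last (H.Adj h) p (by
      have h1 := hlow h hhW
      have h2 : (W.filter (H.Adj h)).Nonempty := Finset.card_pos.1 (by omega)
      obtain ⟨y, hy⟩ := h2
      exact ⟨y, hhN y (Finset.mem_filter.1 hy).2, (Finset.mem_filter.1 hy).2⟩)
    set C : List α := l1 ++ [x] with hC
    have hpC : p = C ++ rest := by rw [hps, hC]; simp
    have hndC : C.Nodup := by rw [hpC] at hnd; exact hnd.of_append_left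
    have hchC : List.IsChain H.Adj C := by rw [hpC] at hch; exact hch.left_of_append
    have hCW : ∀ y ∈ C, y ∈ W := fun y hy => hpW y (by rw [hpC]; simp [hy])
    obtain ⟨C', hC'⟩ : ∃ C', C = h :: C' := by
      rw [hpt] at hpC
      cases hl : l1 with
      | nil =>
        rw [hC, hl] at hpC
        simp at hpC
        exact absurd hhx (by rw [hpC.1]; exact H.loopless.irrefl _)
      | cons a l =>
        rw [hC, hl] at hpC
        simp at hpC
        exact ⟨l ++ [x], by rw [hC, hl, hpC.1]; rfl⟩
    have hhC : ∀ y, H.Adj h y → y ∈ C := by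
      intro y hy
      have h1 := hhN y hy
      rw [hpC] at h1
      rcases List.mem_append.1 h1 with h1 | h1
      · exact h1
      · exact absurd hy (hrest y h1)
    have hWC : (W \ C.toFinset).card ≤ n := by
      have : (W \ C.toFinset).card < W.card := Finset.card_lt_card
        ⟨Finset.sdiff_subset, fun hh => by
          have := hh hhW
          rw [Finset.mem_sdiff] at this
          exact this.2 (by rw [hC']; simp)⟩
      omega
    by_cases hout : ∃ u ∈ C, ∃ y, H.Adj u y ∧ y ∉ C
    · -- extend a colouring of `W \ C`
      obtain ⟨f, hf⟩ := ih (W \ C.toFinset) hWC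
      obtain ⟨A1, u, A2, hCs, ⟨y, huy, hyC⟩, hA1⟩ := exists_split_first _ C hout
      obtain ⟨A0, w, hA0⟩ : ∃ A0 w, A1 = A0 ++ [w] := by
        rcases List.eq_nil_or_concat A1 with h0 | ⟨A0, w, h0⟩
        · rw [h0, hC'] at hCs
          simp at hCs
          rw [← hCs.1] at huy
          exact absurd (hhC y huy) hyC
        · exact ⟨A0, w, by simpa using h0⟩
      subst hA0
      have huC : u ∈ C := by rw [hCs]; simp
      have hwC : w ∈ C := by rw [hCs]; simp
      have hyW : y ∈ W := hclosed u (hCW u huC) y huy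
      have hwout : ∀ z, H.Adj w z → z ∈ C := by
        intro z hz
        by_contra hzC
        exact hA1 w (by simp) ⟨z, hz, hzC⟩
      have hf1 : PCol H (insert w (W \ C.toFinset)) (Function.update f w (f y)) := by
        have hwz : ∀ z, z ∈ W \ C.toFinset → z ≠ w := by
          intro z hz hzw
          subst hzw
          simp at hz
          exact hz.2 hwC
        have hwz' : ∀ z, z ∈ W \ C.toFinset → ¬ H.Adj w z := by
          intro z hz hwz
          simp at hz
          exact hz.2 (hwout z hwz)
        intro a ha b hb hab
        rcases Finset.mem_insert.1 ha with ha1 | ha1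
        · rcases Finset.mem_insert.1 hb with hb1 | hb1
          · exact absurd (ha1.trans hb1.symm) hab.ne
          · subst ha1; exact absurd hab (hwz' b hb1)
        · rcases Finset.mem_insert.1 hb with hb1 | hb1
          · subst hb1; exact absurd hab.symm (hwz' a ha1)
          · rw [Function.update_of_ne (hwz a ha1), Function.update_of_ne (hwz b hb1)]
            exact hf a ha1 b hb1 hab
      have hyw : y ≠ w := fun h => hyC (h ▸ hwC)
      have hndS : (A0 ++ (w :: u :: A2)).Nodup := by
        have : A0 ++ [w] ++ u :: A2 = A0 ++ (w :: u :: A2) := by simp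
        rw [← this, ← hCs]; exact hndC
      have hmemC : ∀ z, z ∈ C ↔ z ∈ A0 ∨ z = w ∨ z = u ∨ z ∈ A2 := by
        intro z; rw [hCs]; simp
      have huw : H.Adj w u := by
        have h1 : C = A0 ++ ([w, u] ++ A2) := by rw [hCs]; simp
        rw [h1] at hchC
        have := hchC.right_of_append.left_of_append
        simpa using this
      have hchU : List.IsChain H.Adj (u :: A2) := by
        rw [hCs] at hchC; exact hchC.right_of_append
      have hchA0 : List.IsChain H.Adj A0 := by
        rw [hCs] at hchC; exact hchC.left_of_append.left_of_append
      have hlast : (u :: A2).getLast (by simp) = x := by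
        have h1 : C.getLast (by rw [hC']; simp) = x := by simp [hC]
        rw [← h1]
        simp only [hCs]
        simp
      have hchain : List.IsChain H.Adj ((A0.reverse ++ A2.reverse) ++ [u]) := by
        have h1 : (A0.reverse ++ A2.reverse) ++ [u] = ((u :: A2) ++ A0).reverse := by simp
        rw [h1, List.isChain_reverse]
        have h2 : List.IsChain H.Adj ((u :: A2) ++ A0) := by
          rw [List.isChain_append]
          refine ⟨hchU, hchA0, ?_⟩
          intro a ha b hb
          rw [List.getLast?_eq_getLast_of_ne_nil (by simp), hlast] at ha
          simp at ha
          subst ha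
          cases hA : A0 with
          | nil => rw [hA] at hb; simp at hb
          | cons a0 A0' =>
            rw [hA] at hb hCs
            rw [hC'] at hCs
            simp at hb hCs
            rw [← hb, ← hCs.1]
            exact hhx.symm
        exact h2.imp (fun a b hab => hab.symm)
      have hdisj : ∀ z, z ∈ C → z ≠ w → z ∉ insert w (W \ C.toFinset) := by
        intro z hz hzw hcon
        rcases Finset.mem_insert.1 hcon with h | h
        · exact hzw h
        · simp at h; exact h.2 hz
      have hndS' := hndS
      rw [List.nodup_append] at hndS'
      simp only [List.nodup_cons, List.mem_cons, not_or] at hndS'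
      obtain ⟨hn0, ⟨⟨hwu, hwA2⟩, huA2, hnA2⟩, hdis⟩ := hndS'
      obtain ⟨g, hg, hgf⟩ := PCol.extend_chain hdeg u (A0.reverse ++ A2.reverse) _ _ hf1
        (by
          rw [List.nodup_append]
          refine ⟨by simpa using hn0, by simpa using hnA2, ?_⟩
          intro a ha b hb
          exact hdis a (by simpa using ha) b (by right; right; simpa using hb))
        (by
          intro z hz
          simp at hz
          apply hdisj z ((hmemC z).2 (by tauto))
          rintro rfl
          rcases hz with hz | hz
          · exact hdis z hz z (by simp) rfl
          · exact hwA2 hz)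
        (hdisj u huC (fun h => hwu h.symm))
        (by
          simp only [List.mem_append, List.mem_reverse, not_or]
          exact ⟨fun h => hdis u h u (by simp) rfl, huA2⟩)
        hchain
      have hyI : y ∈ insert w (W \ C.toFinset) := by simp [hyW, hyC]
      have hgy : g y = g w := by
        rw [hgf y hyI, hgf w (by simp), Function.update_self, Function.update_of_ne hyw]
      obtain ⟨g', hg', -⟩ := hg.extend u (by
          rw [Finset.mem_union, not_or]
          refine ⟨hdisj u huC (fun h => hwu h.symm), ?_⟩
          simp only [List.mem_toFinset, List.mem_append, List.mem_reverse, not_or]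
          exact ⟨fun h => hdis u h u (by simp) rfl, huA2⟩)
        (card_lt_of_same g hdeg u y w hyw huw.symm huy hgy)
      refine ⟨g', fun a ha b hb => hg' a ?_ b ?_⟩
      all_goals
        simp only [Finset.mem_insert, Finset.mem_union, Finset.mem_sdiff, List.mem_toFinset,
          List.mem_append, List.mem_reverse]
      · have := hmemC a; tauto
      · have := hmemC b; tauto
    · push Not at hout
      by_cases hCall : ∃ z ∈ W, z ∉ C
      · obtain ⟨z, hz, hzC⟩ := hCall
        obtain ⟨f, hf⟩ := ih (W \ C.toFinset) hWC
        obtain ⟨g, hg⟩ := ih C.toFinset (by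
          have : C.toFinset.card < W.card := Finset.card_lt_card
            ⟨fun y hy => hCW y (by simpa using hy), fun hh => hzC (by simpa using hh hz)⟩
          omega)
        refine ⟨fun a => if a ∈ C then g a else f a, ?_⟩
        intro a ha b hb hab
        by_cases haC : a ∈ C
        · have hbC := hout a haC b hab
          simp only [haC, hbC, if_true]
          exact hg a (by simpa using haC) b (by simpa using hbC) hab
        · have hbC : b ∉ C := fun h => haC (hout b h a hab.symm)
          simp only [haC, hbC, if_false]
          exact hf a (by simp [ha, haC]) b (by simp [hb, hbC]) hab
      · push Not at hCall
        have hpall : ∀ z ∈ W, z ∈ p := fun z hz => by rw [hpC]; simp [hCall z hz]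
        -- another neighbour of `x2`
        obtain ⟨z, hz2, hz1, hz3⟩ : ∃ z, H.Adj x2 z ∧ z ≠ x1 ∧ z ≠ x3 := by
          by_contra hcon
          push Not at hcon
          have : Finset.univ.filter (H.Adj x2) ⊆ {x1, x3} := by
            intro z hz
            simp at hz ⊢
            by_cases h : z = x1
            · exact Or.inl h
            · exact Or.inr (hcon z hz h)
          have h1 := Finset.card_le_card this
          have h2 : ({x1, x3} : Finset α).card ≤ 2 := Finset.card_le_two
          omega
        have hzq : z ∈ q := by
          have h1 := hpall z (hclosed x2 hx2 z hz2)
          rw [hp] at h1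
          simp at h1
          rcases h1 with h1 | h1 | h1 | h1
          · exact h1
          · exact absurd h1 hz3
          · exact absurd h1 hz2.ne'
          · exact absurd h1 hz1
        obtain ⟨B1, B2, rfl⟩ := List.append_of_mem hzq
        have hf0 : PCol H {x1, x3} (fun _ => (⟨0, by omega⟩ : Fin d)) := by
          intro a ha b hb hab
          simp at ha hb
          rcases ha with rfl | rfl <;> rcases hb with rfl | rfl
          · exact absurd hab (H.loopless.irrefl _)
          · exact absurd hab hn13
          · exact absurd hab.symm hn13
          · exact absurd hab (H.loopless.irrefl _)
        have hmem : ∀ v, v ∈ p ↔ v ∈ B1 ∨ v = z ∨ v ∈ B2 ∨ v = x3 ∨ v = x2 ∨ v = x1 := by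
          intro v; rw [hp]; simp
        rw [hp] at hnd hch
        have hndQ := hnd
        rw [List.nodup_append, List.nodup_append] at hndQ
        simp only [List.nodup_cons, List.mem_cons, List.mem_append, List.not_mem_nil, not_or,
          or_false] at hndQ
        obtain ⟨⟨hB1, ⟨hzB2, hB2⟩, hB12⟩, -, hBx⟩ := hndQ
        have hchz : List.IsChain H.Adj (z :: B2) := hch.left_of_append.right_of_append
        have hchB1 : List.IsChain H.Adj (B1 ++ [z]) := by
          have h1 : B1 ++ z :: B2 = (B1 ++ [z]) ++ B2 := by simp
          have h2 := hch.left_of_append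
          rw [h1] at h2
          exact h2.left_of_append
        obtain ⟨f1, hf1, hff1⟩ := PCol.extend_chain hdeg z B2.reverse _ _ hf0
          (by simpa using hB2)
          (by
            intro v hv hv'
            simp at hv hv'
            rcases hv' with hv' | hv'
            · exact hBx v (by simp [hv]) x1 (by simp) hv'
            · exact hBx v (by simp [hv]) x3 (by simp) hv')
          (by simp [hz1, hz3])
          (by simpa using hzB2)
          (by
            have h1 : B2.reverse ++ [z] = (z :: B2).reverse := by simp
            rw [h1, List.isChain_reverse]
            exact hchz.imp (fun a b hab => hab.symm))
        obtain ⟨f2, hf2, hff2⟩ := PCol.extend_chain hdeg x2 (B1 ++ [z]) _ _ hf1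
          (by
            rw [List.nodup_append]
            refine ⟨hB1, by simp, ?_⟩
            intro a ha b hb
            simp at hb
            exact hB12 a ha b (Or.inl hb))
          (by
            intro v hv hv'
            simp only [Finset.mem_union, Finset.mem_insert, Finset.mem_singleton, List.mem_toFinset, List.mem_append, List.mem_reverse, List.mem_singleton] at hv hv'
            rcases hv' with (hv' | hv') | hv'
            · exact hBx v (by tauto) x1 (by simp) hv'
            · exact hBx v (by tauto) x3 (by simp) hv'
            · rcases hv with hv | hv
              · exact hB12 v hv v (Or.inr hv') rfl
              · rw [hv] at hv'; exact hzB2 hv')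
          (by
            intro hv'
            simp only [Finset.mem_union, Finset.mem_insert, Finset.mem_singleton, List.mem_toFinset, List.mem_append, List.mem_reverse, List.mem_singleton] at hv'
            rcases hv' with (hv' | hv') | hv'
            · exact h21.ne hv'
            · exact h23.ne hv'
            · exact hBx x2 (by simp [hv']) x2 (by simp) rfl)
          (by
            intro hv'
            simp at hv'
            exact hBx x2 (by tauto) x2 (by simp) rfl)
          (by
            rw [List.isChain_append]
            refine ⟨hchB1, by simp, ?_⟩
            intro a ha b hb
            simp at ha hb
            subst ha; subst hb
            exact hz2.symm)
        have hsame : f2 x1 = f2 x3 := by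
          rw [hff2 x1 (by simp), hff2 x3 (by simp), hff1 x1 (by simp), hff1 x3 (by simp)]
        obtain ⟨f3, hf3, -⟩ := hf2.extend x2
          (by
            intro hv'
            simp only [Finset.mem_union, Finset.mem_insert, Finset.mem_singleton, List.mem_toFinset, List.mem_append, List.mem_reverse, List.mem_singleton] at hv'
            rcases hv' with ((hv' | hv') | hv') | hv'
            · exact h21.ne hv'
            · exact h23.ne hv'
            · exact hBx x2 (by simp [hv']) x2 (by simp) rfl
            · exact hBx x2 (by rcases hv' with hv' | hv' <;> simp [hv']) x2 (by simp) rfl)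
          (card_lt_of_same f2 hdeg x2 x1 x3 h13 h23 h21 hsame)
        refine ⟨f3, fun a ha b hb => hf3 a ?_ b ?_⟩
        all_goals
          simp only [Finset.mem_insert, Finset.mem_union, List.mem_toFinset,
            List.mem_append, List.mem_reverse, Finset.mem_singleton, List.mem_singleton]
        · rcases (hmem a).1 (hpall a ha) with h | h | h | h | h | h <;> simp only [h, true_or, or_true]
        · rcases (hmem b).1 (hpall b hb) with h | h | h | h | h | h <;> simp only [h, true_or, or_true]

/-- The theorem of Brooks. -/
theorem brooks {α : Type*} [Fintype α] (H : SimpleGraph α) (d : ℕ) (hd : 3 ≤ d)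
    (hdeg : ∀ v, (Finset.univ.filter (H.Adj v)).card ≤ d) (hcl : H.CliqueFree (d + 1)) :
    ∃ f : α → Fin d, ∀ x y, H.Adj x y → f x ≠ f y := by
  obtain ⟨f, hf⟩ := brooks_aux H d hd hdeg hcl _ Finset.univ le_rfl
  exact ⟨f, fun x y => hf x (Finset.mem_univ _) y (Finset.mem_univ _)⟩

end Brooks

section Lovasz
open Classical

theorem lovasz_flip {α : Type*} [Fintype α] (A : α → α → ℤ) (hs : ∀ x y, A x y = A y x)
    (h0 : ∀ x, A x x = 0) (p : α → ℤ) (v : α) (ε : ℤ) :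
    (∑ x, ∑ y, A x y * (2 * (p x + if x = v then ε else 0) * (p y + if y = v then ε else 0)
        - (p x + if x = v then ε else 0) - (p y + if y = v then ε else 0)) +
        2 * ∑ x, (p x + if x = v then ε else 0))
      = (∑ x, ∑ y, A x y * (2 * p x * p y - p x - p y) + 2 * ∑ x, p x) +
        2 * ε * (2 * (∑ y, A v y * p y) - (∑ y, A v y) + 1) := by
  have e1 : ∀ x y, A x y * (2 * (p x + if x = v then ε else 0) * (p y + if y = v then ε else 0)
        - (p x + if x = v then ε else 0) - (p y + if y = v then ε else 0)) =
      A x y * (2 * p x * p y - p x - p y) + (if x = v then A x y * (2 * ε * p y - ε) else 0) +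
        (if y = v then A x y * (2 * ε * p x - ε) else 0) := by
    intro x y
    by_cases hx : x = v <;> by_cases hy : y = v
    · subst hx; subst hy; simp [h0]
    · simp [hx, hy]; ring
    · simp [hx, hy]; ring
    · simp [hx, hy]
  simp only [e1, Finset.sum_add_distrib]
  have e2 : ∑ x, ∑ y, (if x = v then A x y * (2 * ε * p y - ε) else 0) =
      2 * ε * (∑ y, A v y * p y) - ε * ∑ y, A v y := by
    rw [Finset.sum_comm]
    simp only [Finset.sum_ite_eq', Finset.mem_univ, if_true]
    rw [Finset.mul_sum, Finset.mul_sum, ← Finset.sum_sub_distrib]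
    exact Finset.sum_congr rfl (fun y _ => by ring)
  have e3 : ∑ x, ∑ y, (if y = v then A x y * (2 * ε * p x - ε) else 0) =
      2 * ε * (∑ y, A v y * p y) - ε * ∑ y, A v y := by
    simp only [Finset.sum_ite_eq', Finset.mem_univ, if_true]
    rw [Finset.mul_sum, Finset.mul_sum, ← Finset.sum_sub_distrib]
    exact Finset.sum_congr rfl (fun y _ => by rw [hs]; ring)
  rw [e2, e3]
  simp
  ring

theorem lovasz_partition {α : Type*} [Fintype α] (Γ : SimpleGraph α) :
    ∃ P : α → Prop,
      (∀ v, P v → (Finset.univ.filter (fun y => Γ.Adj v y ∧ P y)).card + 1 ≤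
        (Finset.univ.filter (fun y => Γ.Adj v y ∧ ¬ P y)).card) ∧
      (∀ v, ¬ P v → (Finset.univ.filter (fun y => Γ.Adj v y ∧ ¬ P y)).card ≤
        (Finset.univ.filter (fun y => Γ.Adj v y ∧ P y)).card + 1) := by
  let A : α → α → ℤ := fun x y => if Γ.Adj x y then 1 else 0
  let p : (α → Prop) → α → ℤ := fun P x => if P x then 1 else 0
  let E : (α → Prop) → ℤ := fun P =>
    ∑ x, ∑ y, A x y * (2 * p P x * p P y - p P x - p P y) + 2 * ∑ x, p P x
  obtain ⟨P, hP⟩ := Finite.exists_min E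
  have hs : ∀ x y, A x y = A y x := fun x y => by simp only [A, Γ.adj_comm]
  have h0 : ∀ x, A x x = 0 := fun x => by simp [A]
  have hsum1 : ∀ v, ∑ y, A v y * p P y = (Finset.univ.filter (fun y => Γ.Adj v y ∧ P y)).card := by
    intro v
    rw [Finset.card_filter]
    push_cast
    refine Finset.sum_congr rfl (fun y _ => ?_)
    by_cases h1 : Γ.Adj v y <;> by_cases h2 : P y <;> simp [A, p, h1, h2]
  have hsum2 : ∀ v, ∑ y, A v y = (Finset.univ.filter (fun y => Γ.Adj v y ∧ P y)).card +
      (Finset.univ.filter (fun y => Γ.Adj v y ∧ ¬ P y)).card := by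
    intro v
    rw [Finset.card_filter, Finset.card_filter]
    push_cast
    rw [← Finset.sum_add_distrib]
    refine Finset.sum_congr rfl (fun y _ => ?_)
    by_cases h1 : Γ.Adj v y <;> by_cases h2 : P y <;> simp [A, h1, h2]
  have hflip : ∀ v, 0 ≤ (if P v then -1 else 1 : ℤ) *
      (((Finset.univ.filter (fun y => Γ.Adj v y ∧ P y)).card : ℤ) -
        (Finset.univ.filter (fun y => Γ.Adj v y ∧ ¬ P y)).card + 1) := by
    intro v
    have h1 := hP (fun x => if x = v then ¬ P x else P x)
    have h2 := lovasz_flip A hs h0 (p P) v (if P v then -1 else 1)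
    have h3 : ∀ x, p (fun x => if x = v then ¬ P x else P x) x =
        p P x + if x = v then (if P v then -1 else 1 : ℤ) else 0 := by
      intro x
      by_cases hx : x = v
      · subst hx
        by_cases h : P x <;> simp [p, h]
      · simp [p, hx]
    simp only [E, h3] at h1
    rw [h2, hsum1, hsum2] at h1
    nlinarith
  refine ⟨P, fun v hv => ?_, fun v hv => ?_⟩
  · have := hflip v
    simp only [hv, if_true] at this
    omega
  · have := hflip v
    simp only [hv, if_false] at this
    omega
end Lovasz


section Comb
variable {κ : Type*} [DecidableEq κ]

theorem pick_out (L : Finset κ) (l : List κ) (h : l.length < L.card) : ∃ x ∈ L, x ∉ l := by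
  by_contra hcon
  push Not at hcon
  have h1 : L ⊆ l.toFinset := fun x hx => List.mem_toFinset.2 (hcon x hx)
  have := (Finset.card_le_card h1).trans (List.toFinset_card_le _)
  omega

theorem pick1 (L : Finset κ) (p : κ) (h : 2 ≤ L.card) : ∃ x ∈ L, x ≠ p := by
  obtain ⟨x, hx, h1⟩ := pick_out L [p] (by simp only [List.length_cons, List.length_nil]; omega)
  exact ⟨x, hx, by simpa using h1⟩

theorem pick2 (L : Finset κ) (p q : κ) (h : 3 ≤ L.card) : ∃ x ∈ L, x ≠ p ∧ x ≠ q := by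
  obtain ⟨x, hx, h1⟩ := pick_out L [p, q] (by simp only [List.length_cons, List.length_nil]; omega)
  exact ⟨x, hx, by simpa using h1⟩

theorem pick3 (L : Finset κ) (p q r : κ) (h : 4 ≤ L.card) :
    ∃ x ∈ L, x ≠ p ∧ x ≠ q ∧ x ≠ r := by
  obtain ⟨x, hx, h1⟩ := pick_out L [p, q, r] (by simp only [List.length_cons, List.length_nil]; omega)
  exact ⟨x, hx, by simpa using h1⟩

theorem exists_diff {A B : Finset κ} (hA : A.card = 3) (hB : B.card = 3) (h : A ≠ B) :
    ∃ x ∈ A, x ∉ B := by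
  by_contra hcon
  push Not at hcon
  exact h (Finset.eq_of_subset_of_card_le hcon (by omega))

/-- The prism is 3-choosable. -/
theorem prism_choose (A0 A1 A2 B0 B1 B2 : Finset κ) (hA0 : 3 ≤ A0.card) (hA1 : 3 ≤ A1.card)
    (hA2 : 3 ≤ A2.card) (hB0 : 3 ≤ B0.card) (hB1 : 3 ≤ B1.card) (hB2 : 3 ≤ B2.card) :
    ∃ a0 ∈ A0, ∃ a1 ∈ A1, ∃ a2 ∈ A2, ∃ b0 ∈ B0, ∃ b1 ∈ B1, ∃ b2 ∈ B2,
      a0 ≠ a1 ∧ a0 ≠ a2 ∧ a1 ≠ a2 ∧ b0 ≠ b1 ∧ b0 ≠ b2 ∧ b1 ≠ b2 ∧ a0 ≠ b0 ∧ a1 ≠ b1 ∧ a2 ≠ b2 := by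
  have vert : ∀ A0 A1 A2 B0 B1 B2 : Finset κ, A0.card = 3 → A1.card = 3 → A2.card = 3 →
      B0.card = 3 → B1.card = 3 → B2.card = 3 → A0 ≠ B0 →
      ∃ a0 ∈ A0, ∃ a1 ∈ A1, ∃ a2 ∈ A2, ∃ b0 ∈ B0, ∃ b1 ∈ B1, ∃ b2 ∈ B2,
      a0 ≠ a1 ∧ a0 ≠ a2 ∧ a1 ≠ a2 ∧ b0 ≠ b1 ∧ b0 ≠ b2 ∧ b1 ≠ b2 ∧ a0 ≠ b0 ∧ a1 ≠ b1 ∧ a2 ≠ b2 := by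
    intro A0 A1 A2 B0 B1 B2 hA0 hA1 hA2 hB0 hB1 hB2 hne
    obtain ⟨a0, h0, h0'⟩ := exists_diff hA0 hB0 hne
    obtain ⟨a1, h1, h1'⟩ := pick1 A1 a0 (by omega)
    obtain ⟨a2, h2, h2', h2''⟩ := pick2 A2 a0 a1 (by omega)
    obtain ⟨b1, h3, h3'⟩ := pick1 B1 a1 (by omega)
    obtain ⟨b2, h4, h4', h4''⟩ := pick2 B2 a2 b1 (by omega)
    obtain ⟨b0, h5, h5', h5''⟩ := pick2 B0 b1 b2 (by omega)
    refine ⟨a0, h0, a1, h1, a2, h2, b0, h5, b1, h3, b2, h4, h1'.symm, h2'.symm, h2''.symm, h5', h5'',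
      h4''.symm, ?_, h3'.symm, h4'.symm⟩
    rintro rfl; exact h0' h5
  have hor : ∀ A0 A1 A2 B0 B1 B2 : Finset κ, A0.card = 3 → A1.card = 3 → A2.card = 3 →
      B0.card = 3 → B1.card = 3 → B2.card = 3 → A0 ≠ A1 →
      ∃ a0 ∈ A0, ∃ a1 ∈ A1, ∃ a2 ∈ A2, ∃ b0 ∈ B0, ∃ b1 ∈ B1, ∃ b2 ∈ B2,
      a0 ≠ a1 ∧ a0 ≠ a2 ∧ a1 ≠ a2 ∧ b0 ≠ b1 ∧ b0 ≠ b2 ∧ b1 ≠ b2 ∧ a0 ≠ b0 ∧ a1 ≠ b1 ∧ a2 ≠ b2 := by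
    intro A0 A1 A2 B0 B1 B2 hA0 hA1 hA2 hB0 hB1 hB2 hne
    obtain ⟨a0, h0, h0'⟩ := exists_diff hA0 hA1 hne
    obtain ⟨b0, h1, h1'⟩ := pick1 B0 a0 (by omega)
    obtain ⟨b2, h2, h2'⟩ := pick1 B2 b0 (by omega)
    obtain ⟨a2, h3, h3', h3''⟩ := pick2 A2 a0 b2 (by omega)
    obtain ⟨b1, h4, h4', h4''⟩ := pick2 B1 b0 b2 (by omega)
    obtain ⟨a1, h5, h5', h5''⟩ := pick2 A1 a2 b1 (by omega)
    refine ⟨a0, h0, a1, h5, a2, h3, b0, h1, b1, h4, b2, h2, ?_, h3'.symm, h5', h4'.symm, h2'.symm,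
      h4'', h1'.symm, h5'', h3''⟩
    rintro rfl; exact h0' h5
  obtain ⟨A0', sA0, cA0⟩ := Finset.exists_subset_card_eq hA0
  obtain ⟨A1', sA1, cA1⟩ := Finset.exists_subset_card_eq hA1
  obtain ⟨A2', sA2, cA2⟩ := Finset.exists_subset_card_eq hA2
  obtain ⟨B0', sB0, cB0⟩ := Finset.exists_subset_card_eq hB0
  obtain ⟨B1', sB1, cB1⟩ := Finset.exists_subset_card_eq hB1
  obtain ⟨B2', sB2, cB2⟩ := Finset.exists_subset_card_eq hB2
  suffices h : ∃ a0 ∈ A0', ∃ a1 ∈ A1', ∃ a2 ∈ A2', ∃ b0 ∈ B0', ∃ b1 ∈ B1', ∃ b2 ∈ B2',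
      a0 ≠ a1 ∧ a0 ≠ a2 ∧ a1 ≠ a2 ∧ b0 ≠ b1 ∧ b0 ≠ b2 ∧ b1 ≠ b2 ∧ a0 ≠ b0 ∧ a1 ≠ b1 ∧ a2 ≠ b2 by
    obtain ⟨a0, h0, a1, h1, a2, h2, b0, h3, b1, h4, b2, h5, h⟩ := h
    exact ⟨a0, sA0 h0, a1, sA1 h1, a2, sA2 h2, b0, sB0 h3, b1, sB1 h4, b2, sB2 h5, h⟩
  by_cases e1 : A0' = A1'
  swap
  · exact hor _ _ _ _ _ _ cA0 cA1 cA2 cB0 cB1 cB2 e1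
  by_cases e2 : A1' = A2'
  swap
  · obtain ⟨a1, h1, a2, h2, a0, h0, b1, h4, b2, h5, b0, h3, g1, g2, g3, g4, g5, g6, g7, g8, g9⟩ :=
      hor _ _ A0' B1' B2' B0' cA1 cA2 cA0 cB1 cB2 cB0 e2
    exact ⟨a0, h0, a1, h1, a2, h2, b0, h3, b1, h4, b2, h5, g2.symm, g3.symm, g1, g5.symm, g6.symm,
      g4, g9, g7, g8⟩
  by_cases e3 : A0' = B0'
  swap
  · exact vert _ _ _ _ _ _ cA0 cA1 cA2 cB0 cB1 cB2 e3
  by_cases e4 : A1' = B1'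
  swap
  · obtain ⟨a1, h1, a2, h2, a0, h0, b1, h4, b2, h5, b0, h3, g1, g2, g3, g4, g5, g6, g7, g8, g9⟩ :=
      vert A1' A2' A0' B1' B2' B0' cA1 cA2 cA0 cB1 cB2 cB0 e4
    exact ⟨a0, h0, a1, h1, a2, h2, b0, h3, b1, h4, b2, h5, g2.symm, g3.symm, g1, g5.symm, g6.symm,
      g4, g9, g7, g8⟩
  by_cases e5 : A2' = B2'
  swap
  · obtain ⟨a2, h2, a0, h0, a1, h1, b2, h5, b0, h3, b1, h4, g1, g2, g3, g4, g5, g6, g7, g8, g9⟩ :=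
      vert A2' A0' A1' B2' B0' B1' cA2 cA0 cA1 cB2 cB0 cB1 e5
    exact ⟨a0, h0, a1, h1, a2, h2, b0, h3, b1, h4, b2, h5, g3, g1.symm, g2.symm, g6, g4.symm,
      g5.symm, g8, g9, g7⟩
  subst e1 e2 e3
  rw [← e4, ← e5]
  obtain ⟨x, y, z, hxy, hxz, hyz, h⟩ := Finset.card_eq_three.1 cA0
  rw [h]
  exact ⟨x, by simp, y, by simp, z, by simp, y, by simp, z, by simp, x, by simp, hxy, hxz, hyz, hyz,
    hxy.symm, hxz.symm, hxy, hyz, hxz.symm⟩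

/-- The goal of the list colouring lemma for a 4-cycle with its pendant edges. -/
def C4Good (L0 L1 L2 L3 A0 A1 A2 A3 : Finset κ) (D02 D13 : Prop) : Prop :=
  ∃ f0 ∈ L0, ∃ f1 ∈ L1, ∃ f2 ∈ L2, ∃ f3 ∈ L3, ∃ e0 ∈ A0, ∃ e1 ∈ A1, ∃ e2 ∈ A2, ∃ e3 ∈ A3,
    (f0 ≠ f1 ∧ f1 ≠ f2 ∧ f2 ≠ f3 ∧ f3 ≠ f0) ∧ (D02 → f0 ≠ f2) ∧ (D13 → f1 ≠ f3) ∧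
    (e0 ≠ e2 ∧ e1 ≠ e3) ∧ (e0 ≠ f2 ∧ e0 ≠ f3) ∧ (e1 ≠ f3 ∧ e1 ≠ f0) ∧ (e2 ≠ f0 ∧ e2 ≠ f1) ∧
    (e3 ≠ f1 ∧ e3 ≠ f2)

theorem C4Good.rot {L0 L1 L2 L3 A0 A1 A2 A3 : Finset κ} {D02 D13 : Prop}
    (h : C4Good L1 L2 L3 L0 A1 A2 A3 A0 D13 D02) : C4Good L0 L1 L2 L3 A0 A1 A2 A3 D02 D13 := by
  obtain ⟨f1, h1, f2, h2, f3, h3, f0, h0, e1, k1, e2, k2, e3, k3, e0, k0, g1, g2, g3, g4, g5, g6,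
    g7, g8⟩ := h
  exact ⟨f0, h0, f1, h1, f2, h2, f3, h3, e0, k0, e1, k1, e2, k2, e3, k3,
    ⟨g1.2.2.2, g1.1, g1.2.1, g1.2.2.1⟩, fun h => (g3 h).symm, g2, ⟨g4.2.symm, g4.1⟩, g8, g5, g6, g7⟩

theorem C4Good.refl' {L0 L1 L2 L3 A0 A1 A2 A3 : Finset κ} {D02 D13 : Prop}
    (h : C4Good L0 L3 L2 L1 A3 A2 A1 A0 D02 D13) : C4Good L0 L1 L2 L3 A0 A1 A2 A3 D02 D13 := by
  obtain ⟨f0, h0, f3, h3, f2, h2, f1, h1, e3, k3, e2, k2, e1, k1, e0, k0, g1, g2, g3, g4, g5, g6,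
    g7, g8⟩ := h
  exact ⟨f0, h0, f1, h1, f2, h2, f3, h3, e0, k0, e1, k1, e2, k2, e3, k3,
    ⟨g1.2.2.2.symm, g1.2.2.1.symm, g1.2.1.symm, g1.1.symm⟩, g2, fun h => (g3 h).symm,
    ⟨g4.2.symm, g4.1.symm⟩, g8.symm, g7.symm, g6.symm, g5.symm⟩

/-- Colour two conflicting edges after their other conflicts; first criterion. -/
theorem pair_diff {A B : Finset κ} (hA : A.card = 3) (hB : B.card = 3) {p q r s : κ}
    (h : p ∉ A ∨ q ∉ A ∨ r ∉ B ∨ s ∉ B) :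
    ∃ x ∈ A, ∃ y ∈ B, x ≠ y ∧ (x ≠ p ∧ x ≠ q) ∧ (y ≠ r ∧ y ≠ s) := by
  rcases h with h | h | h | h
  · obtain ⟨y, hy, hy1, hy2⟩ := pick2 B r s (by omega)
    obtain ⟨x, hx, hx1, hx2⟩ := pick2 A q y (by omega)
    exact ⟨x, hx, y, hy, hx2, ⟨fun hh => h (hh ▸ hx), hx1⟩, hy1, hy2⟩
  · obtain ⟨y, hy, hy1, hy2⟩ := pick2 B r s (by omega)
    obtain ⟨x, hx, hx1, hx2⟩ := pick2 A p y (by omega)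
    exact ⟨x, hx, y, hy, hx2, ⟨hx1, fun hh => h (hh ▸ hx)⟩, hy1, hy2⟩
  · obtain ⟨x, hx, hx1, hx2⟩ := pick2 A p q (by omega)
    obtain ⟨y, hy, hy1, hy2⟩ := pick2 B s x (by omega)
    exact ⟨x, hx, y, hy, hy2.symm, ⟨hx1, hx2⟩, fun hh => h (hh ▸ hy), hy1⟩
  · obtain ⟨x, hx, hx1, hx2⟩ := pick2 A p q (by omega)
    obtain ⟨y, hy, hy1, hy2⟩ := pick2 B r x (by omega)
    exact ⟨x, hx, y, hy, hy2.symm, ⟨hx1, hx2⟩, hy1, fun hh => h (hh ▸ hy)⟩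

/-- The main case: some pendant list is not contained in the list of an opposite edge. -/
theorem C4Good.of_diff {L0 L1 L2 L3 A0 A1 A2 A3 : Finset κ} {D02 D13 : Prop}
    (l0 : 3 ≤ L0.card) (l1 : 3 ≤ L1.card) (l2 : 3 ≤ L2.card) (l3 : 3 ≤ L3.card)
    (d02 : D02 → 4 ≤ L0.card ∧ 4 ≤ L2.card) (d13 : D13 → 4 ≤ L1.card ∧ 4 ≤ L3.card)
    (c0 : A0.card = 3) (c1 : A1.card = 3) (c2 : A2.card = 3) (c3 : A3.card = 3)
    {α : κ} (hα : α ∈ L0) (hα2 : α ∉ A2) : C4Good L0 L1 L2 L3 A0 A1 A2 A3 D02 D13 := by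
  -- it suffices to colour the pendant edges and the second pair
  have red : ∀ f1 ∈ L1, ∀ f2 ∈ L2, ∀ f3 ∈ L3, (α ≠ f1 ∧ f1 ≠ f2 ∧ f2 ≠ f3 ∧ f3 ≠ α) →
      (D02 → α ≠ f2) → (D13 → f1 ≠ f3) →
      (∃ x ∈ A1, ∃ y ∈ A3, x ≠ y ∧ (x ≠ f3 ∧ x ≠ α) ∧ (y ≠ f1 ∧ y ≠ f2)) →
      C4Good L0 L1 L2 L3 A0 A1 A2 A3 D02 D13 := by
    rintro f1 h1 f2 h2 f3 h3 hp hd hd' ⟨x, hx, y, hy, hxy, hx', hy'⟩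
    obtain ⟨u, hu, v, hv, huv, hu', hv'⟩ :=
      pair_diff c0 c2 (p := f2) (q := f3) (r := α) (s := f1) (Or.inr (Or.inr (Or.inl hα2)))
    exact ⟨α, hα, f1, h1, f2, h2, f3, h3, u, hu, x, hx, v, hv, y, hy, hp, hd, hd', ⟨huv, hxy⟩, hu',
      hx', hv', hy'⟩
  have g1 : ∀ p q r, ∃ x ∈ L1, x ≠ p ∧ x ≠ q ∧ (D13 → x ≠ r) := by
    intro p q r
    by_cases hD : D13
    · obtain ⟨x, hx, h1, h2, h3⟩ := pick3 L1 p q r (d13 hD).1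
      exact ⟨x, hx, h1, h2, fun _ => h3⟩
    · obtain ⟨x, hx, h1, h2⟩ := pick2 L1 p q l1
      exact ⟨x, hx, h1, h2, fun h => absurd h hD⟩
  have g3 : ∀ p q r, ∃ x ∈ L3, x ≠ p ∧ x ≠ q ∧ (D13 → x ≠ r) := by
    intro p q r
    by_cases hD : D13
    · obtain ⟨x, hx, h1, h2, h3⟩ := pick3 L3 p q r (d13 hD).2
      exact ⟨x, hx, h1, h2, fun _ => h3⟩
    · obtain ⟨x, hx, h1, h2⟩ := pick2 L3 p q l3
      exact ⟨x, hx, h1, h2, fun h => absurd h hD⟩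
  have g2 : ∀ p q r, ∃ x ∈ L2, x ≠ p ∧ x ≠ q ∧ (D02 → x ≠ r) := by
    intro p q r
    by_cases hD : D02
    · obtain ⟨x, hx, h1, h2, h3⟩ := pick3 L2 p q r (d02 hD).2
      exact ⟨x, hx, h1, h2, fun _ => h3⟩
    · obtain ⟨x, hx, h1, h2⟩ := pick2 L2 p q l2
      exact ⟨x, hx, h1, h2, fun h => absurd h hD⟩
  by_cases a1 : α ∈ A1
  swap
  · obtain ⟨f1, h1, k1, -, -⟩ := g1 α α α
    obtain ⟨f3, h3, k3, -, k3'⟩ := g3 α α f1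
    obtain ⟨f2, h2, k2, k2', k2''⟩ := g2 f1 f3 α
    exact red f1 h1 f2 h2 f3 h3 ⟨k1.symm, k2.symm, k2', k3⟩ (fun h => (k2'' h).symm)
      (fun h => (k3' h).symm) (pair_diff c1 c3 (Or.inr (Or.inl a1)))
  by_cases a3 : ∃ f3 ∈ L3, f3 ∉ A1
  · obtain ⟨f3, h3, k3⟩ := a3
    have k3' : f3 ≠ α := fun h => k3 (h ▸ a1)
    obtain ⟨f1, h1, k1, -, k1'⟩ := g1 α α f3
    obtain ⟨f2, h2, k2, k2', k2''⟩ := g2 f1 f3 α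
    exact red f1 h1 f2 h2 f3 h3 ⟨k1.symm, k2.symm, k2', k3'⟩ (fun h => (k2'' h).symm)
      k1' (pair_diff c1 c3 (Or.inl k3))
  push Not at a3
  have e3 : L3 = A1 := Finset.eq_of_subset_of_card_le a3 (by omega)
  by_cases b1 : ∃ f1 ∈ L1, f1 ≠ α ∧ f1 ∉ A3
  · obtain ⟨f1, h1, k1, k1'⟩ := b1
    obtain ⟨f3, h3, k3, -, k3'⟩ := g3 α α f1
    obtain ⟨f2, h2, k2, k2', k2''⟩ := g2 f1 f3 α
    exact red f1 h1 f2 h2 f3 h3 ⟨k1.symm, k2.symm, k2', k3⟩ (fun h => (k2'' h).symm)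
      (fun h => (k3' h).symm) (pair_diff c1 c3 (Or.inr (Or.inr (Or.inl k1'))))
  push Not at b1
  by_cases b2 : ∃ f2 ∈ L2, (D02 → f2 ≠ α) ∧ f2 ∉ A3
  · obtain ⟨f2, h2, k2, k2'⟩ := b2
    obtain ⟨f1, h1, k1, k1', -⟩ := g1 α f2 α
    obtain ⟨f3, h3, k3, k3', k3''⟩ := g3 α f2 f1
    exact red f1 h1 f2 h2 f3 h3 ⟨k1.symm, k1', k3'.symm, k3⟩ (fun h => (k2 h).symm)
      (fun h => (k3'' h).symm) (pair_diff c1 c3 (Or.inr (Or.inr (Or.inr k2'))))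
  push Not at b2
  have nD13 : ¬ D13 := fun h => by
    have := (d13 h).2
    rw [e3] at this; omega
  have sub2 : A3 ⊆ L2 ∧ (D02 → α ∉ A3) := by
    by_cases hD : D02
    · have h4 := (d02 hD).2
      have hs : L2 ⊆ insert α A3 := by
        intro x hx
        by_cases hxa : x = α
        · simp [hxa]
        · exact Finset.mem_insert_of_mem (b2 x hx (fun _ => hxa))
      have hc := Finset.card_insert_le α A3
      have heq := Finset.eq_of_subset_of_card_le hs (by omega)
      refine ⟨heq ▸ Finset.subset_insert _ _, fun _ hm => ?_⟩
      rw [Finset.insert_eq_of_mem hm] at heq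
      rw [heq] at h4; omega
    · have hs : L2 ⊆ A3 := fun x hx => b2 x hx (fun h => absurd h hD)
      exact ⟨(Finset.eq_of_subset_of_card_le hs (by omega)).symm.subset, fun h => absurd h hD⟩
  obtain ⟨f1, h1, k1⟩ := pick1 L1 α (by omega)
  have m1 := b1 f1 h1 k1
  obtain ⟨u, v, huv, hu⟩ := Finset.card_eq_two.1
    (show (A3.erase f1).card = 2 by rw [Finset.card_erase_of_mem m1, c3])
  obtain ⟨w, z, hwz, hw⟩ := Finset.card_eq_two.1
    (show (A1.erase α).card = 2 by rw [Finset.card_erase_of_mem a1, c1])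
  have mu : u ∈ A3.erase f1 := by rw [hu]; simp
  have mv : v ∈ A3.erase f1 := by rw [hu]; simp
  have mw : w ∈ A1.erase α := by rw [hw]; simp
  have mz : z ∈ A1.erase α := by rw [hw]; simp
  rw [Finset.mem_erase] at mu mv mw mz
  have fin : ∀ u v w z, u ≠ v → w ≠ z → (u ≠ f1 ∧ u ∈ A3) → (v ≠ f1 ∧ v ∈ A3) →
      (w ≠ α ∧ w ∈ A1) → (z ≠ α ∧ z ∈ A1) → u ≠ w → v ≠ z →
      C4Good L0 L1 L2 L3 A0 A1 A2 A3 D02 D13 := by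
    intro u v w z huv hwz mu mv mw mz h h'
    exact red f1 h1 u (sub2.1 mu.2) w (e3 ▸ mw.2) ⟨k1.symm, mu.1.symm, h, mw.1⟩
      (fun hD hh => sub2.2 hD (hh ▸ mu.2)) (fun hD => absurd hD nD13)
      ⟨z, mz.2, v, mv.2, h'.symm, ⟨hwz.symm, mz.1⟩, mv.1, huv.symm⟩
  by_cases hc : u ≠ w ∧ v ≠ z
  · exact fin u v w z huv hwz mu mv mw mz hc.1 hc.2
  · refine fin u v z w huv hwz.symm mu mv mz mw ?_ ?_
    · rintro rfl; apply hc; exact ⟨hwz.symm, huv.symm⟩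
    · rintro rfl; apply hc; exact ⟨huv, hwz⟩

theorem c4_choose {L0 L1 L2 L3 A0 A1 A2 A3 : Finset κ} {D02 D13 : Prop}
    (l0 : 3 ≤ L0.card) (l1 : 3 ≤ L1.card) (l2 : 3 ≤ L2.card) (l3 : 3 ≤ L3.card)
    (d02 : D02 → 4 ≤ L0.card ∧ 4 ≤ L2.card) (d13 : D13 → 4 ≤ L1.card ∧ 4 ≤ L3.card)
    (c0 : 3 ≤ A0.card) (c1 : 3 ≤ A1.card) (c2 : 3 ≤ A2.card) (c3 : 3 ≤ A3.card) :
    C4Good L0 L1 L2 L3 A0 A1 A2 A3 D02 D13 := by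
  obtain ⟨B0, s0, c0⟩ := Finset.exists_subset_card_eq c0
  obtain ⟨B1, s1, c1⟩ := Finset.exists_subset_card_eq c1
  obtain ⟨B2, s2, c2⟩ := Finset.exists_subset_card_eq c2
  obtain ⟨B3, s3, c3⟩ := Finset.exists_subset_card_eq c3
  suffices h : C4Good L0 L1 L2 L3 B0 B1 B2 B3 D02 D13 by
    obtain ⟨f0, h0, f1, h1, f2, h2, f3, h3, e0, k0, e1, k1, e2, k2, e3, k3, h⟩ := h
    exact ⟨f0, h0, f1, h1, f2, h2, f3, h3, e0, s0 k0, e1, s1 k1, e2, s2 k2, e3, s3 k3, h⟩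
  have d02' : D02 → 4 ≤ L2.card ∧ 4 ≤ L0.card := fun h => (d02 h).symm
  have d13' : D13 → 4 ≤ L3.card ∧ 4 ≤ L1.card := fun h => (d13 h).symm
  by_contra hbad
  have p0 : L0 ⊆ B2 := fun x hx => by
    by_contra hn
    exact hbad (C4Good.of_diff l0 l1 l2 l3 d02 d13 c0 c1 c2 c3 hx hn)
  have p1 : L1 ⊆ B3 := fun x hx => by
    by_contra hn
    exact hbad (C4Good.of_diff l1 l2 l3 l0 d13 d02' c1 c2 c3 c0 hx hn).rot
  have p2 : L2 ⊆ B0 := fun x hx => by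
    by_contra hn
    exact hbad (C4Good.of_diff l2 l3 l0 l1 d02' d13' c2 c3 c0 c1 hx hn).rot.rot
  have p3 : L3 ⊆ B1 := fun x hx => by
    by_contra hn
    exact hbad (C4Good.of_diff l3 l0 l1 l2 d13' d02 c3 c0 c1 c2 hx hn).rot.rot.rot
  have q0 : L0 ⊆ B1 := fun x hx => by
    by_contra hn
    exact hbad (C4Good.of_diff l0 l3 l2 l1 d02 d13' c3 c2 c1 c0 hx hn).refl'
  have q1 : L1 ⊆ B2 := fun x hx => by
    by_contra hn
    exact hbad (C4Good.of_diff l1 l0 l3 l2 d13 d02 c0 c3 c2 c1 hx hn).refl'.rot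
  have q2 : L2 ⊆ B3 := fun x hx => by
    by_contra hn
    exact hbad (C4Good.of_diff l2 l1 l0 l3 d02' d13 c1 c0 c3 c2 hx hn).refl'.rot.rot
  have q3 : L3 ⊆ B0 := fun x hx => by
    by_contra hn
    exact hbad (C4Good.of_diff l3 l2 l1 l0 d13' d02' c2 c1 c0 c3 hx hn).refl'.rot.rot.rot
  have E0 := Finset.eq_of_subset_of_card_le p0 (by omega)
  have E1 := Finset.eq_of_subset_of_card_le p1 (by omega)
  have E2 := Finset.eq_of_subset_of_card_le p2 (by omega)
  have E3 := Finset.eq_of_subset_of_card_le p3 (by omega)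
  have F0 := Finset.eq_of_subset_of_card_le q0 (by omega)
  have F1 := Finset.eq_of_subset_of_card_le q1 (by omega)
  have F2 := Finset.eq_of_subset_of_card_le q2 (by omega)
  have F3 := Finset.eq_of_subset_of_card_le q3 (by omega)
  have n02 : ¬ D02 := fun h => by have := (d02 h).1; rw [E0] at this; omega
  have n13 : ¬ D13 := fun h => by have := (d13 h).1; rw [E1] at this; omega
  apply hbad
  obtain ⟨x, y, z, hxy, hxz, hyz, h⟩ := Finset.card_eq_three.1 c2
  have hB3 : B3 = {x, y, z} := by rw [← h, ← E1, F1]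
  have hB1 : B1 = {x, y, z} := by rw [← h, ← E0, F0]
  have hB0 : B0 = {x, y, z} := by rw [← hB3, ← E2, F2]
  rw [E0, E1, E2, E3, h, hB3, hB1, hB0]
  exact ⟨x, by simp, y, by simp, x, by simp, z, by simp, y, by simp, y, by simp, z, by simp, z,
    by simp, ⟨hxy, hxy.symm, hxz, hxz.symm⟩, fun h => absurd h n02, fun h => absurd h n13,
    ⟨hyz, hyz⟩, ⟨hxy.symm, hyz⟩, ⟨hyz, hxy.symm⟩, ⟨hxz.symm, hyz.symm⟩, ⟨hyz.symm, hxz.symm⟩⟩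

end Comb


section Girth
open Classical

/-- The conflict graph. -/
def confGraph {V : Type*} (G : SimpleGraph V) : SimpleGraph (Sym2 V) where
  Adj e₁ e₂ := e₁ ∈ G.edgeSet ∧ e₂ ∈ G.edgeSet ∧ EdgeConflict G e₁ e₂
  symm := ⟨by
    rintro e₁ e₂ ⟨h1, h2, h3, h4⟩
    refine ⟨h2, h1, h3.symm, ?_⟩
    rcases h4 with ⟨h4, u, hu, v, hv, huv⟩ | ⟨a, b, c, hab, hbc, hac, h5, h6⟩
    · exact Or.inl ⟨fun x hx hx' => h4 x hx' hx, v, hv, u, hu, huv.symm⟩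
    · exact Or.inr ⟨a, b, c, hab, hbc, hac, h6, h5⟩⟩
  loopless := ⟨fun e h => h.2.2.1 rfl⟩

/-- Triangle-free. -/
def NoTri {V : Type*} (G : SimpleGraph V) : Prop :=
  ∀ a b c, G.Adj a b → G.Adj b c → ¬ G.Adj a c

/-- No 4-cycle. -/
def NoC4 {V : Type*} (G : SimpleGraph V) : Prop :=
  ∀ a b c d, a ≠ c → b ≠ d → G.Adj a b → G.Adj b c → G.Adj c d → ¬ G.Adj a d

theorem conf_of_noTri {V : Type*} {G : SimpleGraph V} (hT : NoTri G) {e₁ e₂ : Sym2 V}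
    (h : (confGraph G).Adj e₁ e₂) :
    (∀ u ∈ e₁, u ∉ e₂) ∧ ∃ u ∈ e₁, ∃ v ∈ e₂, G.Adj u v := by
  obtain ⟨_, _, _, h4 | ⟨a, b, c, hab, hbc, hac, _⟩⟩ := h
  · exact h4
  · exact absurd hac (hT a b c hab hbc)

theorem conf_pair {V : Type*} {G : SimpleGraph V} (hT : NoTri G) {a b c d : V}
    (h : (confGraph G).Adj s(a, b) s(c, d)) :
    a ≠ c ∧ a ≠ d ∧ b ≠ c ∧ b ≠ d ∧ (G.Adj a c ∨ G.Adj a d ∨ G.Adj b c ∨ G.Adj b d) := by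
  obtain ⟨h1, u, hu, v, hv, huv⟩ := conf_of_noTri hT h
  have ha := h1 a (by simp)
  have hb := h1 b (by simp)
  simp only [Sym2.mem_iff, not_or] at ha hb hu hv
  refine ⟨ha.1, ha.2, hb.1, hb.2, ?_⟩
  rcases hu with rfl | rfl <;> rcases hv with rfl | rfl <;> simp [huv]

theorem conf_mk {V : Type*} {G : SimpleGraph V} {a b c d : V}
    (hab : G.Adj a b) (hcd : G.Adj c d) (h1 : a ≠ c) (h2 : a ≠ d) (h3 : b ≠ c) (h4 : b ≠ d)
    (h : G.Adj a c ∨ G.Adj a d ∨ G.Adj b c ∨ G.Adj b d) :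
    (confGraph G).Adj s(a, b) s(c, d) := by
  refine ⟨hab, hcd, ?_, Or.inl ⟨?_, ?_⟩⟩
  · intro h
    rw [Sym2.eq_iff] at h
    tauto
  · intro u hu hu'
    simp only [Sym2.mem_iff] at hu hu'
    rcases hu with rfl | rfl <;> rcases hu' with rfl | rfl <;> contradiction
  · rcases h with h | h | h | h
    · exact ⟨a, by simp, c, by simp, h⟩
    · exact ⟨a, by simp, d, by simp, h⟩
    · exact ⟨b, by simp, c, by simp, h⟩
    · exact ⟨b, by simp, d, by simp, h⟩

/-- The configuration spanned by four pairwise conflicting edges in girth at least five. -/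
structure Cfg {V : Type*} (G : SimpleGraph V) (a b a1 c a2 d b1 e : V) : Prop where
  hab : G.Adj a b
  haa1 : G.Adj a a1
  haa2 : G.Adj a a2
  hbb1 : G.Adj b b1
  ha1c : G.Adj a1 c
  ha2d : G.Adj a2 d
  hb1e : G.Adj b1 e
  hcd : G.Adj c d
  ha1e : G.Adj a1 e
  hdb1 : G.Adj d b1
  d12 : (confGraph G).Adj s(a, b) s(a1, c)
  d13 : (confGraph G).Adj s(a, b) s(a2, d)
  d14 : (confGraph G).Adj s(a, b) s(b1, e)
  d23 : (confGraph G).Adj s(a1, c) s(a2, d)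
  d24 : (confGraph G).Adj s(a1, c) s(b1, e)
  d34 : (confGraph G).Adj s(a2, d) s(b1, e)

theorem cfg_core {V : Type*} {G : SimpleGraph V} (hT : NoTri G) (hQ : NoC4 G)
    {a b a1 c a2 d b1 e : V} (hab : G.Adj a b) (haa1 : G.Adj a a1) (haa2 : G.Adj a a2)
    (hbb1 : G.Adj b b1) (ha1c : G.Adj a1 c) (ha2d : G.Adj a2 d) (hb1e : G.Adj b1 e)
    (d12 : (confGraph G).Adj s(a, b) s(a1, c)) (d13 : (confGraph G).Adj s(a, b) s(a2, d))
    (d14 : (confGraph G).Adj s(a, b) s(b1, e)) (d23 : (confGraph G).Adj s(a1, c) s(a2, d))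
    (d24 : (confGraph G).Adj s(a1, c) s(b1, e)) (d34 : (confGraph G).Adj s(a2, d) s(b1, e)) :
    Cfg G a b a1 c a2 d b1 e ∨ Cfg G a b a2 d a1 c b1 e := by
  have e12 := conf_pair hT d12
  have e13 := conf_pair hT d13
  have e14 := conf_pair hT d14
  have e23 := conf_pair hT d23
  have e24 := conf_pair hT d24
  have e34 := conf_pair hT d34
  have hcd : G.Adj c d := by
    obtain ⟨h1, h2, h3, h4, h | h | h | h⟩ := e23
    · exact absurd h (hT a1 a a2 haa1.symm haa2)
    · exact absurd haa2 (hQ a a1 d a2 e13.2.1 h1 haa1 h ha2d.symm)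
    · exact absurd haa2 (hQ a a1 c a2 e12.2.1 h1 haa1 ha1c h)
    · exact h
  have h24 : G.Adj a1 e ∨ G.Adj c b1 ∨ G.Adj c e := by
    obtain ⟨h1, h2, h3, h4, h | h | h | h⟩ := e24
    · exact absurd hab (hQ a a1 b1 b e14.1 e12.2.2.1.symm haa1 h hbb1.symm)
    · exact Or.inl h
    · exact Or.inr (Or.inl h)
    · exact Or.inr (Or.inr h)
  have h34 : G.Adj a2 e ∨ G.Adj d b1 ∨ G.Adj d e := by
    obtain ⟨h1, h2, h3, h4, h | h | h | h⟩ := e34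
    · exact absurd hab (hQ a a2 b1 b e14.1 e13.2.2.1.symm haa2 h hbb1.symm)
    · exact Or.inl h
    · exact Or.inr (Or.inl h)
    · exact Or.inr (Or.inr h)
  have hres : (G.Adj a1 e ∧ G.Adj d b1) ∨ (G.Adj a2 e ∧ G.Adj c b1) := by
    rcases h24 with h | h | h <;> rcases h34 with h' | h' | h'
    · exact absurd haa2 (hQ a a1 e a2 e14.2.1 e23.1 haa1 h h'.symm)
    · exact Or.inl ⟨h, h'⟩
    · exact absurd ha1c (hQ a1 e d c e23.2.1 e24.2.2.2.1.symm h h'.symm hcd.symm)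
    · exact Or.inr ⟨h', h⟩
    · exact absurd hcd (hT c b1 d h h'.symm)
    · exact absurd hcd (hQ c b1 e d e24.2.2.2.1 e34.2.2.1.symm h hb1e h'.symm)
    · exact absurd ha2d (hQ a2 e c d e23.2.2.1.symm e34.2.2.2.1.symm h' h.symm hcd)
    · exact absurd hcd (hQ c e b1 d e24.2.2.1 e34.2.2.2.1.symm h hb1e.symm h'.symm)
    · exact absurd hcd (hT c e d h h'.symm)
  rcases hres with ⟨h, h'⟩ | ⟨h, h'⟩
  · exact Or.inl ⟨hab, haa1, haa2, hbb1, ha1c, ha2d, hb1e, hcd, h, h', d12, d13, d14, d23, d24, d34⟩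
  · exact Or.inr ⟨hab, haa2, haa1, hbb1, ha2d, ha1c, hb1e, hcd.symm, h, h', d13, d12, d14,
      d23.symm, d34, d24⟩

/-- An edge conflicting with `s(a,b)` hangs on `a` or on `b`. -/
theorem conf_side {V : Type*} {G : SimpleGraph V} (hT : NoTri G) {a b : V} {q : Sym2 V}
    (h : (confGraph G).Adj s(a, b) q) :
    ∃ x y, q = s(x, y) ∧ G.Adj x y ∧ (G.Adj a x ∨ G.Adj b x) := by
  induction q using Sym2.ind with
  | _ x y =>
    have hxy : G.Adj x y := h.2.1
    obtain ⟨-, -, -, -, h | h | h | h⟩ := conf_pair hT h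
    · exact ⟨x, y, rfl, hxy, Or.inl h⟩
    · exact ⟨y, x, Sym2.eq_swap, hxy.symm, Or.inl h⟩
    · exact ⟨x, y, rfl, hxy, Or.inr h⟩
    · exact ⟨y, x, Sym2.eq_swap, hxy.symm, Or.inr h⟩

/-- A vertex has at most three neighbours. -/
def Sub3 {V : Type*} (G : SimpleGraph V) (N1 N2 : V → V → V) : Prop :=
  ∀ v u w, G.Adj v u → G.Adj v w → w = u ∨ w = N1 v u ∨ w = N2 v u

theorem Sub3.four {V : Type*} {G : SimpleGraph V} {N1 N2 : V → V → V} (hN : Sub3 G N1 N2)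
    {v p q r w : V} (hp : G.Adj v p) (hq : G.Adj v q) (hr : G.Adj v r) (hw : G.Adj v w)
    (hpq : p ≠ q) (hpr : p ≠ r) (hqr : q ≠ r) : w = p ∨ w = q ∨ w = r := by
  have h1 := hN v p q hp hq
  have h2 := hN v p r hp hr
  have h3 := hN v p w hp hw
  grind

theorem cfg_exists {V : Type*} {G : SimpleGraph V} (hT : NoTri G) (hQ : NoC4 G)
    {N1 N2 : V → V → V} (hN : Sub3 G N1 N2) (q1 q2 q3 q4 : Sym2 V)
    (d12 : (confGraph G).Adj q1 q2) (d13 : (confGraph G).Adj q1 q3)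
    (d14 : (confGraph G).Adj q1 q4) (d23 : (confGraph G).Adj q2 q3)
    (d24 : (confGraph G).Adj q2 q4) (d34 : (confGraph G).Adj q3 q4) :
    ∃ a b a1 c a2 d b1 e, Cfg G a b a1 c a2 d b1 e ∧
      ({s(a, b), s(a1, c), s(a2, d), s(b1, e)} : Set (Sym2 V)) = {q1, q2, q3, q4} := by
  -- the core, up to the order of the last three
  have core : ∀ a b x2 y2 x3 y3 x4 y4 : V, G.Adj a b → G.Adj a x2 → G.Adj a x3 → G.Adj b x4 →
      (confGraph G).Adj s(a, b) s(x2, y2) → (confGraph G).Adj s(a, b) s(x3, y3) →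
      (confGraph G).Adj s(a, b) s(x4, y4) → (confGraph G).Adj s(x2, y2) s(x3, y3) →
      (confGraph G).Adj s(x2, y2) s(x4, y4) → (confGraph G).Adj s(x3, y3) s(x4, y4) →
      ∃ p q a1 c a2 d b1 e, Cfg G p q a1 c a2 d b1 e ∧
      ({s(p, q), s(a1, c), s(a2, d), s(b1, e)} : Set (Sym2 V)) =
        {s(a, b), s(x2, y2), s(x3, y3), s(x4, y4)} := by
    intro a b x2 y2 x3 y3 x4 y4 hab h2 h3 h4 c12 c13 c14 c23 c24 c34
    rcases cfg_core hT hQ hab h2 h3 h4 c12.2.1 c13.2.1 c14.2.1 c12 c13 c14 c23 c24 c34 with h | h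
    · exact ⟨_, _, _, _, _, _, _, _, h, rfl⟩
    · refine ⟨_, _, _, _, _, _, _, _, h, ?_⟩
      ext z; simp only [Set.mem_insert_iff, Set.mem_singleton_iff]; tauto
  -- three on the same side is impossible
  have three : ∀ a b x2 y2 x3 y3 x4 y4 : V, G.Adj a b → G.Adj a x2 → G.Adj a x3 → G.Adj a x4 →
      (confGraph G).Adj s(a, b) s(x2, y2) → (confGraph G).Adj s(a, b) s(x3, y3) →
      (confGraph G).Adj s(a, b) s(x4, y4) → (confGraph G).Adj s(x2, y2) s(x3, y3) →
      (confGraph G).Adj s(x2, y2) s(x4, y4) → (confGraph G).Adj s(x3, y3) s(x4, y4) → False := by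
    intro a b x2 y2 x3 y3 x4 y4 hab h2 h3 h4 c12 c13 c14 c23 c24 c34
    have e12 := conf_pair hT c12
    have e13 := conf_pair hT c13
    have e14 := conf_pair hT c14
    have e23 := conf_pair hT c23
    have e24 := conf_pair hT c24
    have e34 := conf_pair hT c34
    rcases hN.four h2 h3 h4 hab e23.1 e24.1 e34.1 with h | h | h
    · exact e12.2.2.1 h
    · exact e13.2.2.1 h
    · exact e14.2.2.1 h
  induction q1 using Sym2.ind with
  | _ a b =>
    have hab : G.Adj a b := d12.1
    obtain ⟨x2, y2, rfl, h2, s2⟩ := conf_side hT d12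
    obtain ⟨x3, y3, rfl, h3, s3⟩ := conf_side hT d13
    obtain ⟨x4, y4, rfl, h4, s4⟩ := conf_side hT d14
    have sw : s(a, b) = s(b, a) := Sym2.eq_swap
    have fin : ∀ {S T : Set (Sym2 V)}, T = S → (∃ a b a1 c a2 d b1 e, Cfg G a b a1 c a2 d b1 e ∧
      ({s(a, b), s(a1, c), s(a2, d), s(b1, e)} : Set (Sym2 V)) = T) → 
      (∃ a b a1 c a2 d b1 e, Cfg G a b a1 c a2 d b1 e ∧
      ({s(a, b), s(a1, c), s(a2, d), s(b1, e)} : Set (Sym2 V)) = S) := by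
      rintro S T rfl h; exact h
    have d12' := d12; have d13' := d13; have d14' := d14
    rw [sw] at d12' d13' d14'
    rcases s2 with s2 | s2 <;> rcases s3 with s3 | s3 <;> rcases s4 with s4 | s4
    · exact (three _ _ _ _ _ _ _ _ hab s2 s3 s4 d12 d13 d14 d23 d24 d34).elim
    · exact core _ _ _ _ _ _ _ _ hab s2 s3 s4 d12 d13 d14 d23 d24 d34
    · refine fin ?_ (core _ _ _ _ _ _ _ _ hab s2 s4 s3 d12 d14 d13 d24 d23 d34.symm)
      ext z; simp only [Set.mem_insert_iff, Set.mem_singleton_iff]; tauto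
    · refine fin ?_ (core _ _ _ _ _ _ _ _ hab.symm s3 s4 s2 d13' d14' d12' d34 d23.symm d24.symm)
      rw [← sw]; ext z; simp only [Set.mem_insert_iff, Set.mem_singleton_iff]; tauto
    · refine fin ?_ (core _ _ _ _ _ _ _ _ hab s3 s4 s2 d13 d14 d12 d34 d23.symm d24.symm)
      ext z; simp only [Set.mem_insert_iff, Set.mem_singleton_iff]; tauto
    · refine fin ?_ (core _ _ _ _ _ _ _ _ hab.symm s2 s4 s3 d12' d14' d13' d24 d23 d34.symm)
      rw [← sw]; ext z; simp only [Set.mem_insert_iff, Set.mem_singleton_iff]; tauto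
    · refine fin ?_ (core _ _ _ _ _ _ _ _ hab.symm s2 s3 s4 d12' d13' d14' d23 d24 d34)
      rw [← sw]
    · exact (three _ _ _ _ _ _ _ _ hab.symm s2 s3 s4 d12' d13' d14' d23 d24 d34).elim

/-- `E` conflicts with a member of `Q` and shares a vertex with another one. -/
def NearQ {V : Type*} (G : SimpleGraph V) (Q : Set (Sym2 V)) (E : Sym2 V) : Prop :=
  (∃ q ∈ Q, (confGraph G).Adj q E) ∧ ∃ q ∈ Q, q ≠ E ∧ ∃ v ∈ q, v ∈ E

theorem cfg_near {V : Type*} {G : SimpleGraph V} (hT : NoTri G) (hQ : NoC4 G)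
    {a b a1 c a2 d b1 e : V} (h : Cfg G a b a1 c a2 d b1 e) {x z : V}
    (hx : G.Adj b x) (hxa : x ≠ a) (hxb : x ≠ b1) (hz : G.Adj c z) (hza : z ≠ a1) (hzd : z ≠ d) :
    (∀ E ∈ [s(b, b1), s(b, x), s(c, d), s(c, z)], (confGraph G).Adj s(a, a1) E ∧
      NearQ G {s(a, b), s(a1, c), s(a2, d), s(b1, e)} E) ∧
    NearQ G {s(a, b), s(a1, c), s(a2, d), s(b1, e)} s(a, a1) ∧
    [s(b, b1), s(b, x), s(c, d), s(c, z)].Nodup := by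
  obtain ⟨hab, haa1, haa2, hbb1, ha1c, ha2d, hb1e, hcd, ha1e, hdb1, d12, d13, d14, d23, d24, d34⟩ := h
  obtain ⟨n1, n2, n3, n4, -⟩ := conf_pair hT d12
  obtain ⟨n5, n6, n7, n8, -⟩ := conf_pair hT d13
  obtain ⟨n9, n10, n11, n12, -⟩ := conf_pair hT d14
  obtain ⟨n13, n14, n15, n16, -⟩ := conf_pair hT d23
  obtain ⟨n17, n18, n19, n20, -⟩ := conf_pair hT d24
  obtain ⟨n21, n22, n23, n24, -⟩ := conf_pair hT d34
  have hxa1 : x ≠ a1 := by rintro rfl; exact hT _ _ _ hab hx haa1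
  have hxe : x ≠ e := by rintro rfl; exact hT _ _ _ hbb1 hb1e hx
  have hxc : x ≠ c := by rintro rfl; exact hQ a b x a1 n2 n3 hab hx ha1c.symm haa1
  have hza0 : z ≠ a := by rintro rfl; exact hT _ _ _ ha1c hz haa1.symm
  have hza2 : z ≠ a2 := by rintro rfl; exact hT _ _ _ hz ha2d hcd
  have hzb : z ≠ b := by rintro rfl; exact hQ a z c a1 n2 n3 hab hz.symm ha1c.symm haa1
  have hab' := hab.ne
  have haa1' := haa1.ne
  have hbb1' := hbb1.ne
  have hcd' := hcd.ne
  have hdb1' := hdb1.ne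
  have hbx' := hx.ne
  have hcz' := hz.ne
  have hza' := ha1c.ne
  have ha2d' := ha2d.ne
  refine ⟨?_, ⟨⟨s(a2, d), by simp, ?_⟩, ⟨s(a, b), by simp, ?_, a, by simp, by simp⟩⟩, ?_⟩
  · intro E hE
    simp only [List.mem_cons, List.not_mem_nil, or_false] at hE
    rcases hE with rfl | rfl | rfl | rfl
    · refine ⟨conf_mk haa1 hbb1 hab' n9 n3.symm n17 (Or.inl hab), ⟨s(a2, d), by simp, 
        conf_mk ha2d hbb1 n7.symm n21 n8.symm n23 (by tauto)⟩, ⟨s(a, b), by simp, ?_, b, by simp, by simp⟩⟩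
      rw [Ne, Sym2.eq_iff]; grind
    · refine ⟨conf_mk haa1 hx hab' hxa.symm n3.symm hxa1.symm (Or.inl hab), ⟨s(b1, e), by simp, 
        conf_mk hb1e hx n11.symm hxb.symm n12.symm hxe.symm (Or.inl hbb1.symm)⟩, 
        ⟨s(a, b), by simp, ?_, b, by simp, by simp⟩⟩
      rw [Ne, Sym2.eq_iff]; grind
    · refine ⟨conf_mk haa1 hcd n2 n6 hza' n14 (by tauto), ⟨s(b1, e), by simp, 
        conf_mk hb1e hcd n19.symm n23.symm n20.symm n24.symm (Or.inr (Or.inl hdb1.symm))⟩, 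
        ⟨s(a1, c), by simp, ?_, c, by simp, by simp⟩⟩
      rw [Ne, Sym2.eq_iff]; grind
    · refine ⟨conf_mk haa1 hz n2 hza0.symm hza' hza.symm (by tauto), ⟨s(a2, d), by simp, 
        conf_mk ha2d hz n15.symm hza2.symm n16.symm hzd.symm (Or.inr (Or.inr (Or.inl hcd.symm)))⟩, 
        ⟨s(a1, c), by simp, ?_, c, by simp, by simp⟩⟩
      rw [Ne, Sym2.eq_iff]; grind
  · exact conf_mk ha2d haa1 n5.symm n13.symm n6.symm n14.symm (Or.inl haa2.symm)
  · rw [Ne, Sym2.eq_iff]; grind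
  · simp only [List.nodup_cons, List.mem_cons, List.not_mem_nil, or_false, not_or, Sym2.eq_iff]
    grind

end Girth


section Girth2
open Classical

theorem cfg_near5 {V : Type*} {G : SimpleGraph V} (hT : NoTri G) (hQ : NoC4 G)
    {a b a1 c a2 d b1 e : V} (h : Cfg G a b a1 c a2 d b1 e) {x z y : V}
    (hx : G.Adj b x) (hz : G.Adj c z) 
    (hy : G.Adj a2 y) (hya : y ≠ a) (hyd : y ≠ d) :
    (confGraph G).Adj s(a, a1) s(a2, y) ∧
      NearQ G {s(a, b), s(a1, c), s(a2, d), s(b1, e)} s(a2, y) ∧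
    s(a2, y) ∉ [s(b, b1), s(b, x), s(c, d), s(c, z)] := by
  obtain ⟨hab, haa1, haa2, hbb1, ha1c, ha2d, hb1e, hcd, ha1e, hdb1, d12, d13, d14, d23, d24, d34⟩ := h
  obtain ⟨n1, n2, n3, n4, -⟩ := conf_pair hT d12
  obtain ⟨n5, n6, n7, n8, -⟩ := conf_pair hT d13
  obtain ⟨n9, n10, n11, n12, -⟩ := conf_pair hT d14
  obtain ⟨n13, n14, n15, n16, -⟩ := conf_pair hT d23
  obtain ⟨n17, n18, n19, n20, -⟩ := conf_pair hT d24
  obtain ⟨n21, n22, n23, n24, -⟩ := conf_pair hT d34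
  have hyb : y ≠ b := by rintro rfl; exact hT _ _ _ haa2 hy hab
  have hya1 : y ≠ a1 := by rintro rfl; exact hT _ _ _ haa2 hy haa1
  have hyc : y ≠ c := by rintro rfl; exact hT _ _ _ hy hcd ha2d
  refine ⟨conf_mk haa1 hy haa2.ne hya.symm n13 hya1.symm (Or.inl haa2),
    ⟨⟨s(a, b), by simp, conf_mk hab hy haa2.ne hya.symm n7 hyb.symm (Or.inl haa2)⟩,
      s(a2, d), by simp, ?_, a2, by simp, by simp⟩, ?_⟩
  · rw [Ne, Sym2.eq_iff]; grind
  · simp only [List.mem_cons, List.not_mem_nil, or_false, not_or, Sym2.eq_iff]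
    have := ha2d.ne
    grind

theorem conf_cover {V : Type*} {G : SimpleGraph V} (hT : NoTri G)
    {N1 N2 : V → V → V} (hN : Sub3 G N1 N2) {a b : V} {q : Sym2 V}
    (h : (confGraph G).Adj s(a, b) q) :
    (∃ x, G.Adj a x ∧ x ≠ b ∧ (q = s(x, N1 x a) ∨ q = s(x, N2 x a))) ∨
    (∃ x, G.Adj b x ∧ x ≠ a ∧ (q = s(x, N1 x b) ∨ q = s(x, N2 x b))) := by
  obtain ⟨x, y, rfl, hxy, hs⟩ := conf_side hT h
  obtain ⟨n1, n2, n3, n4, -⟩ := conf_pair hT h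
  rcases hs with hs | hs
  · left
    refine ⟨x, hs, n3.symm, ?_⟩
    rcases hN x a y hs.symm hxy with h | h | h
    · exact absurd h.symm n2
    · left; rw [h]
    · right; rw [h]
  · right
    refine ⟨x, hs, n1.symm, ?_⟩
    rcases hN x b y hs.symm hxy with h | h | h
    · exact absurd h.symm n4
    · left; rw [h]
    · right; rw [h]

theorem conf_deg {V : Type*} [Fintype V] {G : SimpleGraph V} (hT : NoTri G)
    {N1 N2 : V → V → V} (hN : Sub3 G N1 N2) (q : Sym2 V) :
    (Finset.univ.filter ((confGraph G).Adj q)).card ≤ 8 := by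
  induction q using Sym2.ind with
  | _ a b =>
    by_cases hab : G.Adj a b
    · have hsub : Finset.univ.filter ((confGraph G).Adj s(a, b)) ⊆
        [s(N1 a b, N1 (N1 a b) a), s(N1 a b, N2 (N1 a b) a), s(N2 a b, N1 (N2 a b) a),
          s(N2 a b, N2 (N2 a b) a), s(N1 b a, N1 (N1 b a) b), s(N1 b a, N2 (N1 b a) b),
          s(N2 b a, N1 (N2 b a) b), s(N2 b a, N2 (N2 b a) b)].toFinset := by
        intro q hq
        simp only [Finset.mem_filter, Finset.mem_univ, true_and] at hq
        simp only [List.mem_toFinset, List.mem_cons, List.not_mem_nil, or_false]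
        rcases conf_cover hT hN hq with ⟨x, h1, h2, h3⟩ | ⟨x, h1, h2, h3⟩
        · rcases hN a b x hab h1 with h | h | h
          · exact absurd h h2
          · subst h; tauto
          · subst h; tauto
        · rcases hN b a x hab.symm h1 with h | h | h
          · exact absurd h h2
          · subst h; tauto
          · subst h; tauto
      exact (Finset.card_le_card hsub).trans (List.toFinset_card_le _)
    · have : Finset.univ.filter ((confGraph G).Adj s(a, b)) = ∅ := by
        ext q
        simp only [Finset.mem_filter, Finset.mem_univ, true_and, Finset.notMem_empty, iff_false]
        exact fun h => hab h.1
      rw [this]; simp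

theorem conf_third {V : Type*} [Fintype V] {G : SimpleGraph V} (hT : NoTri G)
    {N1 N2 : V → V → V} (hN : Sub3 G N1 N2) {p q : V} (r : V) (hpq : G.Adj p q) 
    (hd : 7 ≤ (Finset.univ.filter ((confGraph G).Adj s(p, q))).card) :
    ∃ w, G.Adj q w ∧ w ≠ p ∧ w ≠ r := by
  by_contra hcon
  push Not at hcon
  have hsub : Finset.univ.filter ((confGraph G).Adj s(p, q)) ⊆
        [s(N1 p q, N1 (N1 p q) p), s(N1 p q, N2 (N1 p q) p), s(N2 p q, N1 (N2 p q) p),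
          s(N2 p q, N2 (N2 p q) p), s(r, N1 r q), s(r, N2 r q)].toFinset := by
    intro E hE
    simp only [Finset.mem_filter, Finset.mem_univ, true_and] at hE
    simp only [List.mem_toFinset, List.mem_cons, List.not_mem_nil, or_false]
    rcases conf_cover hT hN hE with ⟨x, h1, h2, h3⟩ | ⟨x, h1, h2, h3⟩
    · rcases hN p q x hpq h1 with h | h | h
      · exact absurd h h2
      · subst h; tauto
      · subst h; tauto
    · have := hcon x h1 h2
      subst this; tauto
  have := (Finset.card_le_card hsub).trans (List.toFinset_card_le _)
  simp only [List.length_cons, List.length_nil] at this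
  omega

theorem near_out {V : Type*} [Fintype V] {G : SimpleGraph V} (hT : NoTri G) {P : Sym2 V → Prop}
    (Q : Finset (Sym2 V)) (k : ℕ) (hQc : Q.card = k + 1) (hP : ∀ q ∈ Q, P q)
    (hA : ∀ q ∈ Q, ∀ q' ∈ Q, q ≠ q' → (confGraph G).Adj q q')
    (hk : ∀ q, P q → (Finset.univ.filter (fun y => (confGraph G).Adj q y ∧ P y)).card ≤ k)
    {R : Set (Sym2 V)} (hR : ∀ q ∈ R, q ∈ Q) {E : Sym2 V} (hE : NearQ G R E) : ¬ P E := by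
  intro hPE
  obtain ⟨⟨q, hq, hqE⟩, q', hq', hne, v, hv, hv'⟩ := hE
  have hEQ : E ∉ Q := by
    intro hEQ
    exact (conf_of_noTri hT (hA q' (hR _ hq') E hEQ hne)).1 v hv hv'
  have hsub : insert E (Q.erase q) ⊆
      Finset.univ.filter (fun y => (confGraph G).Adj q y ∧ P y) := by
    intro y hy
    rw [Finset.mem_insert, Finset.mem_erase] at hy
    simp only [Finset.mem_filter, Finset.mem_univ, true_and]
    rcases hy with rfl | ⟨h1, h2⟩
    · exact ⟨hqE, hPE⟩
    · exact ⟨hA q (hR _ hq) y h2 h1.symm, hP y h2⟩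
  have h1 := Finset.card_le_card hsub
  rw [Finset.card_insert_of_notMem (by simp [hEQ]), Finset.card_erase_of_mem (hR _ hq), hQc] at h1
  have := hk q (hP q (hR _ hq))
  omega

theorem girth_case {V : Type*} [Fintype V] {G : SimpleGraph V} (hT : NoTri G) (hQ : NoC4 G)
    {N1 N2 : V → V → V} (hN : Sub3 G N1 N2) :
    ∃ f : Sym2 V → Fin 7, IsInjEdgeColoring G f := by
  obtain ⟨P, hP1, hP2⟩ := lovasz_partition (confGraph G)
  have hsum : ∀ q, (Finset.univ.filter (fun y => (confGraph G).Adj q y ∧ P y)).card +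
      (Finset.univ.filter (fun y => (confGraph G).Adj q y ∧ ¬ P y)).card =
      (Finset.univ.filter ((confGraph G).Adj q)).card := by
    intro q
    rw [← Finset.card_filter_add_card_filter_not (s := Finset.univ.filter ((confGraph G).Adj q)) P,
      Finset.filter_filter, Finset.filter_filter]
  have hk1 : ∀ q, P q → (Finset.univ.filter (fun y => (confGraph G).Adj q y ∧ P y)).card ≤ 3 := by
    intro q hq
    have h1 := hP1 q hq
    have h2 := hsum q
    have h3 := conf_deg hT hN q
    omega
  have hk2 : ∀ q, ¬ P q → 
      (Finset.univ.filter (fun y => (confGraph G).Adj q y ∧ ¬ P y)).card ≤ 4 := by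
    intro q hq
    have h1 := hP2 q hq
    have h2 := hsum q
    have h3 := conf_deg hT hN q
    omega
  have hk2' : ∀ R : Sym2 V → Prop, (R = fun q => ¬ P q) → ∀ q, R q →
      (Finset.univ.filter (fun y => (confGraph G).Adj q y ∧ R y)).card ≤ 4 := by
    intro R hR q hq
    refine le_trans (Finset.card_le_card ?_) (hk2 q (by rw [hR] at hq; exact hq))
    intro y hy
    simp only [hR, Finset.mem_filter, Finset.mem_univ, true_and] at hy ⊢
    exact hy
  -- restricted graphs
  let H : (Sym2 V → Prop) → SimpleGraph (Sym2 V) := fun R =>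
    { Adj := fun x y => R x ∧ R y ∧ (confGraph G).Adj x y
      symm := ⟨fun x y h => ⟨h.2.1, h.1, h.2.2.symm⟩⟩
      loopless := ⟨fun x h => (confGraph G).loopless.irrefl x h.2.2⟩ }
  have hHdeg : ∀ (R : Sym2 V → Prop) (k : ℕ), 
      (∀ q, R q → (Finset.univ.filter (fun y => (confGraph G).Adj q y ∧ R y)).card ≤ k) → 
      ∀ q, (Finset.univ.filter ((H R).Adj q)).card ≤ k := by
    intro R k hk q
    by_cases hq : R q
    · refine le_trans (Finset.card_le_card ?_) (hk q hq)
      intro y hy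
      simp only [Finset.mem_filter, Finset.mem_univ, true_and] at hy ⊢
      exact ⟨hy.2.2, hy.2.1⟩
    · have : Finset.univ.filter ((H R).Adj q) = ∅ := by
        ext y
        simp only [Finset.mem_filter, Finset.mem_univ, true_and, Finset.notMem_empty, iff_false]
        exact fun h => hq h.1
      rw [this]; simp
  have hcl1 : (H P).CliqueFree 4 := by
    by_contra hcon
    let q := SimpleGraph.topEmbeddingOfNotCliqueFree hcon
    have hq : ∀ i j, i ≠ j → P (q i) ∧ P (q j) ∧ (confGraph G).Adj (q i) (q j) := by
      intro i j hij
      exact q.map_rel_iff.2 hij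
    obtain ⟨a, b, a1, c, a2, d, b1, e, hc, hset⟩ := cfg_exists hT hQ hN (q 0) (q 1) (q 2) (q 3)
      (hq 0 1 (by decide)).2.2 (hq 0 2 (by decide)).2.2 (hq 0 3 (by decide)).2.2
      (hq 1 2 (by decide)).2.2 (hq 1 3 (by decide)).2.2 (hq 2 3 (by decide)).2.2
    have hPq : ∀ i, P (q i) := by
      intro i
      rcases eq_or_ne i 0 with h | h
      · subst h; exact (hq 0 1 (by decide)).1
      · exact (hq i 0 h).1
    have hRQ : ∀ E ∈ ({s(a, b), s(a1, c), s(a2, d), s(b1, e)} : Set (Sym2 V)), 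
        E ∈ Finset.univ.image q := by
      intro E hE
      rw [hset] at hE
      simp only [Set.mem_insert_iff, Set.mem_singleton_iff] at hE
      rcases hE with h | h | h | h <;> rw [h] <;> exact Finset.mem_image_of_mem _ (Finset.mem_univ _)
    have hPQ : ∀ E ∈ Finset.univ.image q, P E := by
      intro E hE
      obtain ⟨i, -, rfl⟩ := Finset.mem_image.1 hE
      exact hPq i
    have hout : ∀ E, NearQ G {s(a, b), s(a1, c), s(a2, d), s(b1, e)} E → ¬ P E := by
      intro E hE
      refine near_out hT (Finset.univ.image q) 3 ?_ hPQ ?_ hk1 hRQ hE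
      · rw [Finset.card_image_of_injective _ q.injective]; simp
      · intro x hx y hy hxy
        obtain ⟨i, -, rfl⟩ := Finset.mem_image.1 hx
        obtain ⟨j, -, rfl⟩ := Finset.mem_image.1 hy
        exact (hq i j (fun h => hxy (by rw [h]))).2.2
    have h7 : ∀ E ∈ Finset.univ.image q, 7 ≤ (Finset.univ.filter ((confGraph G).Adj E)).card := by
      intro E hE
      have h1 := hP1 E (hPQ E hE)
      have h2 := hsum E
      obtain ⟨i, -, rfl⟩ := Finset.mem_image.1 hE
      have h3 : (((Finset.univ : Finset (Fin 4)).erase i).image q) ⊆ 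
          Finset.univ.filter (fun y => (confGraph G).Adj (q i) y ∧ P y) := by
        intro y hy
        obtain ⟨j, hj, rfl⟩ := Finset.mem_image.1 hy
        simp only [Finset.mem_filter, Finset.mem_univ, true_and]
        exact ⟨(hq i j (Finset.ne_of_mem_erase hj).symm).2.2, hPq j⟩
      have h4 := Finset.card_le_card h3
      rw [Finset.card_image_of_injective _ q.injective, Finset.card_erase_of_mem (Finset.mem_univ _)] at h4
      simp only [Finset.card_univ, Fintype.card_fin] at h4
      omega
    obtain ⟨x, hx, hxa, hxb⟩ := conf_third hT hN b1 hc.hab (h7 _ (hRQ _ (by simp)))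
    obtain ⟨z, hz, hza, hzd⟩ := conf_third hT hN d hc.ha1c (h7 _ (hRQ _ (by simp)))
    obtain ⟨y, hy, hyd, hya⟩ := conf_third hT hN a hc.ha2d.symm 
      (by rw [Sym2.eq_swap]; exact h7 _ (hRQ _ (by simp)))
    obtain ⟨k1, k2, k3⟩ := cfg_near hT hQ hc hx hxa hxb hz hza hzd
    obtain ⟨k4, k5, k6⟩ := cfg_near5 hT hQ hc hx hz hy hya hyd
    have hsub : (s(a2, y) :: [s(b, b1), s(b, x), s(c, d), s(c, z)]).toFinset ⊆
        Finset.univ.filter (fun y => (confGraph G).Adj s(a, a1) y ∧ ¬ P y) := by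
      intro E hE
      rw [List.mem_toFinset, List.mem_cons] at hE
      simp only [Finset.mem_filter, Finset.mem_univ, true_and]
      rcases hE with rfl | hE
      · exact ⟨k4, hout _ k5⟩
      · exact ⟨(k1 E hE).1, hout _ (k1 E hE).2⟩
    have h8 := Finset.card_le_card hsub
    rw [List.toFinset_card_of_nodup (List.nodup_cons.2 ⟨k6, k3⟩)] at h8
    have := hk2 _ (hout _ k2)
    simp only [List.length_cons, List.length_nil] at h8
    omega
  have hcl2 : (H (fun q => ¬ P q)).CliqueFree 5 := by
    by_contra hcon
    let q := SimpleGraph.topEmbeddingOfNotCliqueFree hcon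
    have hq : ∀ i j, i ≠ j → ¬ P (q i) ∧ ¬ P (q j) ∧ (confGraph G).Adj (q i) (q j) := by
      intro i j hij
      exact q.map_rel_iff.2 hij
    obtain ⟨a, b, a1, c, a2, d, b1, e, hc, hset⟩ := cfg_exists hT hQ hN (q 0) (q 1) (q 2) (q 3)
      (hq 0 1 (by decide)).2.2 (hq 0 2 (by decide)).2.2 (hq 0 3 (by decide)).2.2
      (hq 1 2 (by decide)).2.2 (hq 1 3 (by decide)).2.2 (hq 2 3 (by decide)).2.2
    have hPq : ∀ i, ¬ P (q i) := by
      intro i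
      rcases eq_or_ne i 0 with h | h
      · subst h; exact (hq 0 1 (by decide)).1
      · exact (hq i 0 h).1
    have hRQ' : ∀ E ∈ ({s(a, b), s(a1, c), s(a2, d), s(b1, e)} : Set (Sym2 V)), 
        E ∈ Finset.univ.image q ∧ (confGraph G).Adj E (q 4) := by
      intro E hE
      rw [hset] at hE
      simp only [Set.mem_insert_iff, Set.mem_singleton_iff] at hE
      rcases hE with h | h | h | h <;> rw [h] <;> 
        exact ⟨Finset.mem_image_of_mem _ (Finset.mem_univ _), (hq _ _ (by decide)).2.2⟩
    have hRQ := fun E hE => (hRQ' E hE).1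
    have hPQ : ∀ E ∈ Finset.univ.image q, ¬ P E := by
      intro E hE
      obtain ⟨i, -, rfl⟩ := Finset.mem_image.1 hE
      exact hPq i
    have hout : ∀ E, NearQ G {s(a, b), s(a1, c), s(a2, d), s(b1, e)} E → P E := by
      intro E hE
      by_contra hPE
      refine near_out hT (P := fun q => ¬ P q) (Finset.univ.image q) 4 ?_ hPQ ?_ (hk2' _ rfl) hRQ hE hPE
      · rw [Finset.card_image_of_injective _ q.injective]; simp
      · intro x hx y hy hxy
        obtain ⟨i, -, rfl⟩ := Finset.mem_image.1 hx
        obtain ⟨j, -, rfl⟩ := Finset.mem_image.1 hy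
        exact (hq i j (fun h => hxy (by rw [h]))).2.2
    have hr : ∀ E ∈ ({s(a, b), s(a1, c), s(a2, d), s(b1, e)} : Set (Sym2 V)), ∀ v ∈ E, v ∉ q 4 :=
      fun E hE => (conf_of_noTri hT (hRQ' E hE).2).1
    obtain ⟨n1, n2, n3, n4, -⟩ := conf_pair hT hc.d12
    obtain ⟨n5, n6, n7, n8, -⟩ := conf_pair hT hc.d13
    obtain ⟨n9, n10, n11, n12, -⟩ := conf_pair hT hc.d14
    obtain ⟨n13, n14, n15, n16, -⟩ := conf_pair hT hc.d23
    obtain ⟨n17, n18, n19, n20, -⟩ := conf_pair hT hc.d24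
    have mem : ∀ v ∈ ({a, b, a1, c, a2, d, b1, e} : Set V), v ∉ q 4 := by
      intro v hv
      simp only [Set.mem_insert_iff, Set.mem_singleton_iff] at hv
      rcases hv with rfl | rfl | rfl | rfl | rfl | rfl | rfl | rfl
      · exact hr s(v, b) (by simp) v (by simp)
      · exact hr s(a, v) (by simp) v (by simp)
      · exact hr s(v, c) (by simp) v (by simp)
      · exact hr s(a1, v) (by simp) v (by simp)
      · exact hr s(v, d) (by simp) v (by simp)
      · exact hr s(a2, v) (by simp) v (by simp)
      · exact hr s(v, e) (by simp) v (by simp)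
      · exact hr s(b1, v) (by simp) v (by simp)
    obtain ⟨x, hx, hxq⟩ : ∃ x, G.Adj b x ∧ x ∈ q 4 := by
      obtain ⟨x, y, hxy, -, h | h⟩ := conf_side hT (hRQ' s(a, b) (by simp)).2
      · have hxq : x ∈ q 4 := by rw [hxy]; simp
        rcases hN.four hc.hab hc.haa1 hc.haa2 h n3 n7 n13 with rfl | rfl | rfl
        · exact absurd hxq (mem _ (by simp))
        · exact absurd hxq (mem _ (by simp))
        · exact absurd hxq (mem _ (by simp))
      · exact ⟨x, h, by rw [hxy]; simp⟩
    obtain ⟨z, hz, hzq⟩ : ∃ z, G.Adj c z ∧ z ∈ q 4 := by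
      obtain ⟨x, y, hxy, -, h | h⟩ := conf_side hT (hRQ' s(a1, c) (by simp)).2
      · have hxq : x ∈ q 4 := by rw [hxy]; simp
        rcases hN.four hc.haa1.symm hc.ha1c hc.ha1e h n2 n10 n20 with rfl | rfl | rfl
        · exact absurd hxq (mem _ (by simp))
        · exact absurd hxq (mem _ (by simp))
        · exact absurd hxq (mem _ (by simp))
      · exact ⟨x, h, by rw [hxy]; simp⟩
    obtain ⟨k1, k2, k3⟩ := cfg_near hT hQ hc hx (fun h => mem x (by simp [h]) hxq) 
      (fun h => mem x (by simp [h]) hxq) hz (fun h => mem z (by simp [h]) hzq) 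
      (fun h => mem z (by simp [h]) hzq)
    have hsub : ([s(b, b1), s(b, x), s(c, d), s(c, z)]).toFinset ⊆
        Finset.univ.filter (fun y => (confGraph G).Adj s(a, a1) y ∧ P y) := by
      intro E hE
      rw [List.mem_toFinset] at hE
      simp only [Finset.mem_filter, Finset.mem_univ, true_and]
      exact ⟨(k1 E hE).1, hout _ (k1 E hE).2⟩
    have h8 := Finset.card_le_card hsub
    rw [List.toFinset_card_of_nodup k3] at h8
    have := hk1 _ (hout _ k2)
    simp only [List.length_cons, List.length_nil] at h8
    omega
  obtain ⟨f1, hf1⟩ := brooks (H P) 3 le_rfl (fun q => by convert hHdeg P 3 hk1 q) hcl1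
  obtain ⟨f2, hf2⟩ := brooks (H (fun q => ¬ P q)) 4 (by norm_num) (fun q => by convert hHdeg _ 4 (hk2' _ rfl) q) hcl2
  refine ⟨fun q => if P q then ⟨f1 q, by omega⟩ else ⟨3 + f2 q, by omega⟩, ?_⟩
  intro e₁ h1 e₂ h2 hc
  have hadj : (confGraph G).Adj e₁ e₂ := ⟨h1, h2, hc⟩
  have q1 := (f1 e₁).2
  have q2 := (f1 e₂).2
  by_cases p1 : P e₁ <;> by_cases p2 : P e₂ <;> simp only [p1, p2, if_true, if_false, Ne, Fin.mk.injEq]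
  · have := hf1 e₁ e₂ ⟨p1, p2, hadj⟩
    exact fun h => this (Fin.ext h)
  · omega
  · omega
  · have := hf2 e₁ e₂ ⟨p1, p2, hadj⟩
    exact fun h => this (Fin.ext (by omega))

end Girth2


section Reduce
open Classical

/-- Delete all edges meeting `S`. -/
def delG {V : Type*} (G : SimpleGraph V) (S : Set V) : SimpleGraph V where
  Adj u v := G.Adj u v ∧ u ∉ S ∧ v ∉ S
  symm := ⟨fun _ _ h => ⟨h.1.symm, h.2.2, h.2.1⟩⟩
  loopless := ⟨fun _ h => G.loopless.irrefl _ h.1⟩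

theorem delG_edge {V : Type*} {G : SimpleGraph V} {S : Set V} {e : Sym2 V} (he : e ∈ G.edgeSet)
    (hS : ∀ v ∈ e, v ∉ S) : e ∈ (delG G S).edgeSet := by
  induction e using Sym2.ind with
  | _ a b => exact ⟨he, hS a (by simp), hS b (by simp)⟩

theorem delG_conf {V : Type*} {G : SimpleGraph V} {S : Set V} {e₁ e₂ : Sym2 V}
    (h : EdgeConflict G e₁ e₂) (h1 : ∀ v ∈ e₁, v ∉ S) (h2 : ∀ v ∈ e₂, v ∉ S) :
    EdgeConflict (delG G S) e₁ e₂ := by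
  obtain ⟨hne, ⟨hd, u, hu, v, hv, huv⟩ | ⟨a, b, c, hab, hbc, hac, m1, m2⟩⟩ := h
  · exact ⟨hne, Or.inl ⟨hd, u, hu, v, hv, huv, h1 u hu, h2 v hv⟩⟩
  · have key : a ∉ S ∧ b ∉ S ∧ c ∉ S := by
      simp only [Set.mem_insert_iff, Set.mem_singleton_iff] at m1 m2
      rcases m1 with rfl | rfl | rfl <;> rcases m2 with rfl | rfl | rfl <;>
        first
        | exact absurd rfl hne
        | (simp only [Sym2.mem_iff, forall_eq_or_imp, forall_eq] at h1 h2; tauto)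
    exact ⟨hne, Or.inr ⟨a, b, c, ⟨hab, key.1, key.2.1⟩, ⟨hbc, key.2.1, key.2.2⟩,
      ⟨hac, key.1, key.2.2⟩, m1, m2⟩⟩

/-- Colours available for `E` after colouring the edges avoiding `S`. -/
noncomputable def avail {V : Type*} (G : SimpleGraph V) (S : Set V) (f' : Sym2 V → Fin 7)
    (E : Sym2 V) : Finset (Fin 7) :=
  Finset.univ.filter (fun c => ∀ e, (confGraph G).Adj E e → (∀ v ∈ e, v ∉ S) → c ≠ f' e)

theorem avail_card {V : Type*} {G : SimpleGraph V} {S : Set V} (f' : Sym2 V → Fin 7)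
    {E : Sym2 V} (l : List (Sym2 V))
    (hl : ∀ e, (confGraph G).Adj E e → (∀ v ∈ e, v ∉ S) → e ∈ l) :
    7 - l.length ≤ (avail G S f' E).card := by
  have h1 : (Finset.univ : Finset (Fin 7)) ⊆ avail G S f' E ∪ (l.map f').toFinset := by
    intro c _
    by_cases hc : c ∈ avail G S f' E
    · exact Finset.mem_union_left _ hc
    · simp only [avail, Finset.mem_filter, Finset.mem_univ, true_and] at hc
      push Not at hc
      obtain ⟨e, he, he', rfl⟩ := hc
      exact Finset.mem_union_right _ (List.mem_toFinset.2 (List.mem_map_of_mem (hl e he he')))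
  have h2 := (Finset.card_le_card h1).trans (Finset.card_union_le _ _)
  have h3 := List.toFinset_card_le (l.map f')
  simp only [List.length_map, Finset.card_univ, Fintype.card_fin] at h2 h3
  omega

theorem extend_items {V : Type*} {G : SimpleGraph V} {S : Set V} {f' : Sym2 V → Fin 7}
    (hf' : IsInjEdgeColoring (delG G S) f') (items : List (Sym2 V × Fin 7))
    (hcov : ∀ e ∈ G.edgeSet, (∃ v ∈ e, v ∈ S) → ∃ p ∈ items, p.1 = e)
    (hav : ∀ p ∈ items, p.2 ∈ avail G S f' p.1)
    (hpw : items.Pairwise (fun p q => (confGraph G).Adj p.1 q.1 → p.2 ≠ q.2)) :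
    ∃ f : Sym2 V → Fin 7, IsInjEdgeColoring G f := by
  have hall : ∀ p ∈ items, ∀ q ∈ items, (confGraph G).Adj p.1 q.1 → p.2 ≠ q.2 := by
    intro p hp q hq
    haveI : Std.Symm (fun p q : Sym2 V × Fin 7 => (confGraph G).Adj p.1 q.1 → p.2 ≠ q.2) :=
      ⟨fun p q h h' => (h h'.symm).symm⟩
    exact List.Pairwise.forall_of_forall (R := fun p q : Sym2 V × Fin 7 =>
      (confGraph G).Adj p.1 q.1 → p.2 ≠ q.2)
      (fun p _ h => absurd h ((confGraph G).loopless.irrefl _)) hpw hp hq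
  have hav' : ∀ p ∈ items, ∀ e, (confGraph G).Adj p.1 e → (∀ v ∈ e, v ∉ S) → p.2 ≠ f' e := by
    intro p hp
    have := hav p hp
    simpa only [avail, Finset.mem_filter, Finset.mem_univ, true_and] using this
  refine ⟨fun e => if h : ∃ p ∈ items, p.1 = e then h.choose.2 else f' e, ?_⟩
  intro e₁ h1 e₂ h2 hc
  have hadj : (confGraph G).Adj e₁ e₂ := ⟨h1, h2, hc⟩
  have hno : ∀ e ∈ G.edgeSet, (¬ ∃ p ∈ items, p.1 = e) → ∀ v ∈ e, v ∉ S := by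
    intro e he hn v hv hvS
    exact hn (hcov e he ⟨v, hv, hvS⟩)
  by_cases k1 : ∃ p ∈ items, p.1 = e₁ <;> by_cases k2 : ∃ p ∈ items, p.1 = e₂
  · simp only [dif_pos k1, dif_pos k2]
    refine hall _ k1.choose_spec.1 _ k2.choose_spec.1 ?_
    rw [k1.choose_spec.2, k2.choose_spec.2]; exact hadj
  · simp only [dif_pos k1, dif_neg k2]
    refine hav' _ k1.choose_spec.1 _ ?_ (hno _ h2 k2)
    rw [k1.choose_spec.2]; exact hadj
  · simp only [dif_neg k1, dif_pos k2]
    refine (hav' _ k2.choose_spec.1 _ ?_ (hno _ h1 k1)).symm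
    rw [k2.choose_spec.2]; exact hadj.symm
  · simp only [dif_neg k1, dif_neg k2]
    exact hf' _ (delG_edge h1 (hno _ h1 k1)) _ (delG_edge h2 (hno _ h2 k2))
      (delG_conf hc (hno _ h1 k1) (hno _ h2 k2))

/-- The third neighbour of a vertex (the vertex itself if there is none). -/
theorem Sub3.third {V : Type*} {G : SimpleGraph V} {N1 N2 : V → V → V} (hN : Sub3 G N1 N2)
    {v u w : V} (hu : G.Adj v u) (hw : G.Adj v w) (huw : u ≠ w) :
    ∃ d, (d = v ∨ (G.Adj v d ∧ d ≠ u ∧ d ≠ w)) ∧ ∀ y, G.Adj v y → y = u ∨ y = w ∨ y = d := by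
  by_cases h : ∃ d, G.Adj v d ∧ d ≠ u ∧ d ≠ w
  · obtain ⟨d, hd, h1, h2⟩ := h
    exact ⟨d, Or.inr ⟨hd, h1, h2⟩, fun y hy => hN.four hu hw hd hy huw h1.symm h2.symm⟩
  · push Not at h
    refine ⟨v, Or.inl rfl, fun y hy => ?_⟩
    by_cases hyu : y = u
    · exact Or.inl hyu
    · exact Or.inr (Or.inl (h y hy hyu))

/-- External conflicts of an edge inside `S`. -/
theorem ext_e {V : Type*} {G : SimpleGraph V} {S : Set V} {c c' d d' : V} {e : Sym2 V}
    (hcS : c ∈ S) (hcS' : c' ∈ S) (hc : ∀ w, G.Adj c w → w ∈ S ∨ w = d)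
    (hc' : ∀ w, G.Adj c' w → w ∈ S ∨ w = d')
    (h : (confGraph G).Adj s(c, c') e) (hS : ∀ v ∈ e, v ∉ S) :
    ∃ y, y ∉ S ∧ ((e = s(d, y) ∧ G.Adj d y ∧ G.Adj c d) ∨
      (e = s(d', y) ∧ G.Adj d' y ∧ G.Adj c' d')) := by
  obtain ⟨_, h2, hne, ⟨hd, u, hu, v, hv, huv⟩ | ⟨a, b, x, hab, hbc, hac, m1, m2⟩⟩ := h
  · obtain ⟨y, rfl⟩ := Sym2.mem_iff_exists.1 hv
    refine ⟨y, hS y (by simp), ?_⟩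
    rw [Sym2.mem_iff] at hu
    rcases hu with rfl | rfl
    · rcases hc v huv with h | rfl
      · exact absurd h (hS v (by simp))
      · exact Or.inl ⟨rfl, h2, huv⟩
    · rcases hc' v huv with h | rfl
      · exact absurd h (hS v (by simp))
      · exact Or.inr ⟨rfl, h2, huv⟩
  · exfalso
    have k1 := hS c
    have k2 := hS c'
    clear hS hc hc' hne
    simp only [Set.mem_insert_iff, Set.mem_singleton_iff] at m1 m2
    rcases m2 with rfl | rfl | rfl <;> simp only [Sym2.mem_iff] at k1 k2 <;>
      simp only [Sym2.eq_iff] at m1 <;> grind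

/-- External conflicts of a pendant edge of `S`. -/
theorem ext_f {V : Type*} {G : SimpleGraph V} {S : Set V} {c d : V} {e : Sym2 V}
    (hcS : c ∈ S) (hc : ∀ w, G.Adj c w → w ∈ S ∨ w = d)
    (h : (confGraph G).Adj s(c, d) e) (hS : ∀ v ∈ e, v ∉ S) :
    ∃ x y, e = s(x, y) ∧ G.Adj d x ∧ G.Adj x y ∧ x ∉ S ∧ y ∉ S ∧ y ≠ d ∧ G.Adj c d := by
  obtain ⟨h1, h2, hne, ⟨hd, u, hu, v, hv, huv⟩ | ⟨a, b, x, hab, hbc, hac, m1, m2⟩⟩ := h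
  · obtain ⟨y, rfl⟩ := Sym2.mem_iff_exists.1 hv
    have hdv : d ∉ s(v, y) := hd d (by simp)
    simp only [Sym2.mem_iff, not_or] at hdv
    rw [Sym2.mem_iff] at hu
    rcases hu with rfl | rfl
    · rcases hc v huv with h | rfl
      · exact absurd h (hS v (by simp))
      · exact absurd rfl hdv.1
    · exact ⟨v, y, rfl, huv, h2, hS v (by simp), hS y (by simp), fun h => hdv.2 h.symm, h1⟩
  · exfalso
    have k1 := hS c
    have g1 := hc a
    have g2 := hc b
    have g3 := hc x
    have f1 := hS a
    have f2 := hS b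
    have f3 := hS x
    have s1 := hab.symm
    have s2 := hbc.symm
    have s3 := hac.symm
    have n1 := hab.ne
    have n2 := hbc.ne
    have n3 := hac.ne
    clear hS hc h1 h2
    simp only [Set.mem_insert_iff, Set.mem_singleton_iff] at m1 m2
    rcases m2 with rfl | rfl | rfl <;> simp only [Sym2.mem_iff] at k1 f1 f2 f3 <;>
      simp only [Sym2.eq_iff] at m1 <;> grind

theorem cover_e {V : Type*} {G : SimpleGraph V} {S : Set V} {N1 N2 : V → V → V}
    (hN : Sub3 G N1 N2) {c c' d d' : V} (f' : Sym2 V → Fin 7)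
    (hcS : c ∈ S) (hcS' : c' ∈ S) (hc : ∀ w, G.Adj c w → w ∈ S ∨ w = d)
    (hc' : ∀ w, G.Adj c' w → w ∈ S ∨ w = d') : 3 ≤ (avail G S f' s(c, c')).card := by
  refine avail_card f' [s(d, N1 d c), s(d, N2 d c), s(d', N1 d' c'), s(d', N2 d' c')] ?_
  intro e he hS
  obtain ⟨y, hy, ⟨rfl, h1, h2⟩ | ⟨rfl, h1, h2⟩⟩ := ext_e hcS hcS' hc hc' he hS
  · rcases hN d c y h2.symm h1 with h | h | h
    · exact absurd hcS (h ▸ hy)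
    · rw [h]; simp
    · rw [h]; simp
  · rcases hN d' c' y h2.symm h1 with h | h | h
    · exact absurd hcS' (h ▸ hy)
    · rw [h]; simp
    · rw [h]; simp

theorem cover_f {V : Type*} {G : SimpleGraph V} {S : Set V} {N1 N2 : V → V → V}
    (hN : Sub3 G N1 N2) {c d : V} (f' : Sym2 V → Fin 7)
    (hcS : c ∈ S) (hc : ∀ w, G.Adj c w → w ∈ S ∨ w = d) :
    3 ≤ (avail G S f' s(c, d)).card := by
  refine avail_card f' [s(N1 d c, N1 (N1 d c) d), s(N1 d c, N2 (N1 d c) d),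
    s(N2 d c, N1 (N2 d c) d), s(N2 d c, N2 (N2 d c) d)] ?_
  intro e he hS
  obtain ⟨x, y, rfl, h1, h2, h3, h4, h5, h6⟩ := ext_f hcS hc he hS
  have hy := hN x d y h1.symm h2
  rcases hN d c x h6.symm h1 with h | h | h
  · exact absurd hcS (h ▸ h3)
  · subst h
    rcases hy with h | h | h
    · exact absurd h h5
    · rw [← h]; simp
    · rw [← h]; simp
  · subst h
    rcases hy with h | h | h
    · exact absurd h h5
    · rw [← h]; simp
    · rw [← h]; simp

theorem conf_share {V : Type*} {G : SimpleGraph V} {a b d : V}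
    (h : (confGraph G).Adj s(a, b) s(a, d)) : G.Adj b d := by
  obtain ⟨h1, h2, hne, ⟨hd, _⟩ | ⟨x, y, z, hab, hbc, hac, m1, m2⟩⟩ := h
  · exact absurd (by simp) (hd a (by simp))
  · have s1 := hab.symm
    have s2 := hbc.symm
    have s3 := hac.symm
    simp only [Set.mem_insert_iff, Set.mem_singleton_iff, Sym2.eq_iff] at m1 m2
    have hbd : b ≠ d := fun h => hne (by rw [h])
    have n1 := hab.ne
    have n2 := hbc.ne
    have n3 := hac.ne
    clear hne h1 h2
    grind

/-- Diamonds are reducible. -/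
theorem red_diamond {V : Type*} {G : SimpleGraph V} {N1 N2 : V → V → V}
    (hN : Sub3 G N1 N2) {c0 c1 c2 d : V} (h01 : G.Adj c0 c1) (h12 : G.Adj c1 c2)
    (h02 : G.Adj c0 c2) (hd : d ≠ c2) (h0 : G.Adj c0 d) (h1 : G.Adj c1 d) {f' : Sym2 V → Fin 7}
    (hf' : IsInjEdgeColoring (delG G {c0, c1, c2}) f') :
    ∃ f : Sym2 V → Fin 7, IsInjEdgeColoring G f := by
  have m0 : c0 ∈ ({c0, c1, c2} : Set V) := by simp
  have m1 : c1 ∈ ({c0, c1, c2} : Set V) := by simp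
  have m2 : c2 ∈ ({c0, c1, c2} : Set V) := by simp
  obtain ⟨d2, -, hd2⟩ := hN.third h02.symm h12.symm h01.ne
  obtain ⟨m, -, hm⟩ := hN.third h0.symm h1.symm h01.ne
  have a0 := fun y hy => hN.four h01 h02 h0 (w := y) hy h12.ne h1.ne hd.symm
  have a1 := fun y hy => hN.four h01.symm h12 h1 (w := y) hy h02.ne h0.ne hd.symm
  have o0 : ∀ w, G.Adj c0 w → w ∈ ({c0, c1, c2} : Set V) ∨ w = d := by
    intro w hw
    simp only [Set.mem_insert_iff, Set.mem_singleton_iff]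
    have := a0 w hw
    tauto
  have o1 : ∀ w, G.Adj c1 w → w ∈ ({c0, c1, c2} : Set V) ∨ w = d := by
    intro w hw
    simp only [Set.mem_insert_iff, Set.mem_singleton_iff]
    have := a1 w hw
    tauto
  have o2 : ∀ w, G.Adj c2 w → w ∈ ({c0, c1, c2} : Set V) ∨ w = d2 := by
    intro w hw
    simp only [Set.mem_insert_iff, Set.mem_singleton_iff]
    have := hd2 w hw
    tauto
  have hm' : ∀ y, y ∉ ({c0, c1, c2} : Set V) → G.Adj d y → y = m := by
    intro y hy hdy
    simp only [Set.mem_insert_iff, Set.mem_singleton_iff] at hy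
    have := hm y hdy
    tauto
  have k0 : 6 ≤ (avail G {c0, c1, c2} f' s(c0, c1)).card := by
    refine avail_card f' [s(d, m)] ?_
    intro e he hS
    obtain ⟨y, hy, ⟨rfl, h1, h2⟩ | ⟨rfl, h1, h2⟩⟩ := ext_e m0 m1 o0 o1 he hS
    · rw [hm' y hy h1]; simp
    · rw [hm' y hy h1]; simp
  have ke : ∀ c, c ∈ ({c0, c1, c2} : Set V) →
      (∀ w, G.Adj c w → w ∈ ({c0, c1, c2} : Set V) ∨ w = d) →
      4 ≤ (avail G {c0, c1, c2} f' s(c, c2)).card := by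
    intro c hc oc
    refine avail_card f' [s(d, m), s(d2, N1 d2 c2), s(d2, N2 d2 c2)] ?_
    intro e he hS
    obtain ⟨y, hy, ⟨rfl, h1, h2⟩ | ⟨rfl, h1, h2⟩⟩ := ext_e hc m2 oc o2 he hS
    · rw [hm' y hy h1]; simp
    · rcases hN d2 c2 y h2.symm h1 with h | h | h
      · exact absurd m2 (h ▸ hy)
      · rw [h]; simp
      · rw [h]; simp
  have kf : ∀ c, c ∈ ({c0, c1, c2} : Set V) →
      (∀ w, G.Adj c w → w ∈ ({c0, c1, c2} : Set V) ∨ w = d) →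
      5 ≤ (avail G {c0, c1, c2} f' s(c, d)).card := by
    intro c hc oc
    refine avail_card f' [s(m, N1 m d), s(m, N2 m d)] ?_
    intro e he hS
    obtain ⟨x, y, rfl, h1, h2, h3, h4, h5, h6⟩ := ext_f hc oc he hS
    have := hm' x h3 h1
    subst this
    rcases hN x d y h1.symm h2 with h | h | h
    · exact absurd h h5
    · rw [← h]; simp
    · rw [← h]; simp
  have k2 := cover_f hN f' m2 o2
  obtain ⟨x1, p1, -⟩ := pick_out _ [] (lt_of_lt_of_le (by simp) k2)
  obtain ⟨x2, p2, q2⟩ := pick_out _ [x1] (lt_of_lt_of_le (by simp) (ke c0 m0 o0))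
  obtain ⟨x3, p3, q3⟩ := pick_out _ [x1, x2] (lt_of_lt_of_le (by simp) (ke c1 m1 o1))
  obtain ⟨x4, p4, q4⟩ := pick_out _ [x1, x2, x3] (lt_of_lt_of_le (by simp) (kf c0 m0 o0))
  obtain ⟨x5, p5, q5⟩ := pick_out _ [x1, x2, x3, x4] (lt_of_lt_of_le (by simp) (kf c1 m1 o1))
  obtain ⟨x6, p6, q6⟩ := pick_out _ [x1, x2, x3, x4, x5] (lt_of_lt_of_le (by simp) k0)
  simp only [List.mem_cons, List.not_mem_nil, or_false, not_or] at q2 q3 q4 q5 q6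
  refine extend_items hf' [(s(c0, c1), x6), (s(c1, d), x5), (s(c0, d), x4), (s(c1, c2), x3),
    (s(c0, c2), x2), (s(c2, d2), x1)] ?_ ?_ ?_
  · rintro e he ⟨v, hv, hvS⟩
    obtain ⟨w, rfl⟩ := Sym2.mem_iff_exists.1 hv
    have he : G.Adj v w := he
    simp only [Set.mem_insert_iff, Set.mem_singleton_iff] at hvS
    simp only [List.mem_cons, List.not_mem_nil, or_false, exists_eq_or_imp, exists_eq_left]
    rcases hvS with rfl | rfl | rfl
    · rcases a0 w he with rfl | rfl | rfl <;> simp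
    · rcases a1 w he with rfl | rfl | rfl <;> simp
    · rcases hd2 w he with rfl | rfl | rfl <;> simp
  · simp only [List.mem_cons, List.not_mem_nil, or_false, forall_eq_or_imp, forall_eq]
    exact ⟨p6, p5, p4, p3, p2, p1⟩
  · simp only [List.pairwise_cons, List.mem_cons, List.not_mem_nil, or_false, forall_eq_or_imp,
      forall_eq, List.Pairwise.nil, and_true]
    simp only [Ne]
    tauto

/-- Triangles are reducible when there is no diamond. -/
theorem red_prism {V : Type*} {G : SimpleGraph V} {N1 N2 : V → V → V} (hN : Sub3 G N1 N2)
    (hnd : ∀ a b c d, G.Adj a b → G.Adj b c → G.Adj a c → d ≠ c → G.Adj a d → ¬ G.Adj b d)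
    {c0 c1 c2 : V} (h01 : G.Adj c0 c1) (h12 : G.Adj c1 c2) (h02 : G.Adj c0 c2)
    {f' : Sym2 V → Fin 7} (hf' : IsInjEdgeColoring (delG G {c0, c1, c2}) f') :
    ∃ f : Sym2 V → Fin 7, IsInjEdgeColoring G f := by
  have m0 : c0 ∈ ({c0, c1, c2} : Set V) := by simp
  have m1 : c1 ∈ ({c0, c1, c2} : Set V) := by simp
  have m2 : c2 ∈ ({c0, c1, c2} : Set V) := by simp
  obtain ⟨d0, r0, a0⟩ := hN.third h01 h02 h12.ne
  obtain ⟨d1, r1, a1⟩ := hN.third h01.symm h12 h02.ne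
  obtain ⟨d2, r2, a2⟩ := hN.third h02.symm h12.symm h01.ne
  have n01 := h01.ne
  have n02 := h02.ne
  have n12 := h12.ne
  have r0 : d0 ≠ c1 ∧ d0 ≠ c2 := by
    rcases r0 with rfl | h
    · exact ⟨n01, n02⟩
    · exact h.2
  have r1 : d1 ≠ c0 ∧ d1 ≠ c2 := by
    rcases r1 with rfl | h
    · exact ⟨n01.symm, n12⟩
    · exact h.2
  have r2 : d2 ≠ c0 ∧ d2 ≠ c1 := by
    rcases r2 with rfl | h
    · exact ⟨n02.symm, n12.symm⟩
    · exact h.2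
  have o0 : ∀ w, G.Adj c0 w → w ∈ ({c0, c1, c2} : Set V) ∨ w = d0 := by
    intro w hw
    simp only [Set.mem_insert_iff, Set.mem_singleton_iff]
    have := a0 w hw
    tauto
  have o1 : ∀ w, G.Adj c1 w → w ∈ ({c0, c1, c2} : Set V) ∨ w = d1 := by
    intro w hw
    simp only [Set.mem_insert_iff, Set.mem_singleton_iff]
    have := a1 w hw
    tauto
  have o2 : ∀ w, G.Adj c2 w → w ∈ ({c0, c1, c2} : Set V) ∨ w = d2 := by
    intro w hw
    simp only [Set.mem_insert_iff, Set.mem_singleton_iff]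
    have := a2 w hw
    tauto
  have nc : ∀ a b c d, G.Adj a b → G.Adj b c → G.Adj a c → d ≠ c →
      ¬ (confGraph G).Adj s(a, b) s(a, d) := by
    intro a b c d h1 h2 h3 h4 h5
    exact hnd a b c d h1 h2 h3 h4 h5.2.1 (conf_share h5)
  have nc' : ∀ a b c d, G.Adj a b → G.Adj b c → G.Adj a c → d ≠ c →
      ¬ (confGraph G).Adj s(b, a) s(a, d) := by
    intro a b c d h1 h2 h3 h4 h5
    rw [Sym2.eq_swap] at h5
    exact nc a b c d h1 h2 h3 h4 h5
  obtain ⟨x0, p0, x1, p1, x2, p2, y2, q2, y0, q0, y1, q1, g1, g2, g3, g4, g5, g6, g7, g8, g9⟩ :=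
    prism_choose _ _ _ _ _ _ (cover_e hN f' m0 m1 o0 o1) (cover_e hN f' m1 m2 o1 o2)
      (cover_e hN f' m0 m2 o0 o2) (cover_f hN f' m2 o2) (cover_f hN f' m0 o0) (cover_f hN f' m1 o1)
  refine extend_items hf' [(s(c0, c1), x0), (s(c1, c2), x1), (s(c0, c2), x2), (s(c0, d0), y0),
    (s(c1, d1), y1), (s(c2, d2), y2)] ?_ ?_ ?_
  · rintro e he ⟨v, hv, hvS⟩
    obtain ⟨w, rfl⟩ := Sym2.mem_iff_exists.1 hv
    have he : G.Adj v w := he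
    simp only [Set.mem_insert_iff, Set.mem_singleton_iff] at hvS
    simp only [List.mem_cons, List.not_mem_nil, or_false, exists_eq_or_imp, exists_eq_left]
    rcases hvS with rfl | rfl | rfl
    · rcases a0 w he with rfl | rfl | rfl <;> simp
    · rcases a1 w he with rfl | rfl | rfl <;> simp
    · rcases a2 w he with rfl | rfl | rfl <;> simp
  · simp only [List.mem_cons, List.not_mem_nil, or_false, forall_eq_or_imp, forall_eq]
    exact ⟨p0, p1, p2, q0, q1, q2⟩
  · simp only [List.pairwise_cons, List.mem_cons, List.not_mem_nil, or_false, forall_eq_or_imp,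
      forall_eq, List.Pairwise.nil, and_true]
    refine ⟨⟨fun _ => g1, fun _ => g2, fun h => absurd h ?_, fun h => absurd h ?_, fun _ => g7⟩,
      ⟨fun _ => g3, fun _ => g8, fun h => absurd h ?_, fun h => absurd h ?_⟩,
      ⟨fun h => absurd h ?_, fun _ => g9, fun h => absurd h ?_⟩, ⟨fun _ => g6, fun _ => g4.symm⟩,
      fun _ => g5.symm, ?_⟩
    · exact nc c0 c1 c2 d0 h01 h12 h02 r0.2
    · exact nc' c1 c0 c2 d1 h01.symm h02 h12 r1.2
    · exact nc c1 c2 c0 d1 h12 h02.symm h01.symm r1.1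
    · exact nc' c2 c1 c0 d2 h12.symm h01.symm h02.symm r2.1
    · exact nc c0 c2 c1 d0 h02 h12.symm h01 r0.1
    · exact nc' c2 c0 c1 d2 h02.symm h01 h12.symm r2.2
    · simp

/-- A larger list when opposite pendant edges conflict. -/
theorem cover_diag {V : Type*} {G : SimpleGraph V} {S : Set V} {N1 N2 : V → V → V}
    (hN : Sub3 G N1 N2) {c d c' d' : V} (f' : Sym2 V → Fin 7)
    (hcS : c ∈ S) (hcS' : c' ∈ S) (hc : ∀ w, G.Adj c w → w ∈ S ∨ w = d)
    (h : G.Adj c d) (h' : G.Adj c' d') (hdd : G.Adj d d') (hn : c ≠ d') (hn' : c' ≠ d) :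
    4 ≤ (avail G S f' s(c, d)).card := by
  obtain ⟨m, -, hm⟩ := hN.third h.symm hdd hn
  obtain ⟨m', -, hm'⟩ := hN.third h'.symm hdd.symm hn'
  refine avail_card f' [s(d', m'), s(m, N1 m d), s(m, N2 m d)] ?_
  intro e he hS
  obtain ⟨x, y, rfl, h1, h2, h3, h4, h5, h6⟩ := ext_f hcS hc he hS
  rcases hm x h1 with rfl | rfl | rfl
  · exact absurd hcS h3
  · rcases hm' y h2 with rfl | rfl | rfl
    · exact absurd hcS' h4
    · exact absurd rfl h5
    · simp
  · rcases hN x d y h1.symm h2 with h | h | h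
    · exact absurd h h5
    · rw [← h]; simp
    · rw [← h]; simp

set_option maxHeartbeats 1000000 in
/-- Four-cycles are reducible in triangle-free graphs. -/
theorem red_c4 {V : Type*} {G : SimpleGraph V} {N1 N2 : V → V → V} (hN : Sub3 G N1 N2)
    (hT : NoTri G) {c0 c1 c2 c3 : V} (n02 : c0 ≠ c2) (n13 : c1 ≠ c3) (h01 : G.Adj c0 c1)
    (h12 : G.Adj c1 c2) (h23 : G.Adj c2 c3) (h03 : G.Adj c0 c3)
    {f' : Sym2 V → Fin 7} (hf' : IsInjEdgeColoring (delG G {c0, c1, c2, c3}) f') :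
    ∃ f : Sym2 V → Fin 7, IsInjEdgeColoring G f := by
  have m0 : c0 ∈ ({c0, c1, c2, c3} : Set V) := by simp
  have m1 : c1 ∈ ({c0, c1, c2, c3} : Set V) := by simp
  have m2 : c2 ∈ ({c0, c1, c2, c3} : Set V) := by simp
  have m3 : c3 ∈ ({c0, c1, c2, c3} : Set V) := by simp
  obtain ⟨d0, r0, a0⟩ := hN.third h01 h03 n13
  obtain ⟨d1, r1, a1⟩ := hN.third h01.symm h12 n02
  obtain ⟨d2, r2, a2⟩ := hN.third h12.symm h23 n13
  obtain ⟨d3, r3, a3⟩ := hN.third h03.symm h23.symm n02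
  have r0 : d0 ≠ c1 ∧ d0 ≠ c3 := by
    rcases r0 with rfl | h
    · exact ⟨h01.ne, h03.ne⟩
    · exact h.2
  have r1 : d1 ≠ c0 ∧ d1 ≠ c2 := by
    rcases r1 with rfl | h
    · exact ⟨h01.ne', h12.ne⟩
    · exact h.2
  have r2 : d2 ≠ c1 ∧ d2 ≠ c3 := by
    rcases r2 with rfl | h
    · exact ⟨h12.ne', h23.ne⟩
    · exact h.2
  have r3 : d3 ≠ c0 ∧ d3 ≠ c2 := by
    rcases r3 with rfl | h
    · exact ⟨h03.ne', h23.ne'⟩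
    · exact h.2
  have o0 : ∀ w, G.Adj c0 w → w ∈ ({c0, c1, c2, c3} : Set V) ∨ w = d0 := by
    intro w hw
    rcases a0 w hw with h | h | h <;> subst h <;> simp
  have o1 : ∀ w, G.Adj c1 w → w ∈ ({c0, c1, c2, c3} : Set V) ∨ w = d1 := by
    intro w hw
    rcases a1 w hw with h | h | h <;> subst h <;> simp
  have o2 : ∀ w, G.Adj c2 w → w ∈ ({c0, c1, c2, c3} : Set V) ∨ w = d2 := by
    intro w hw
    rcases a2 w hw with h | h | h <;> subst h <;> simp
  have o3 : ∀ w, G.Adj c3 w → w ∈ ({c0, c1, c2, c3} : Set V) ∨ w = d3 := by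
    intro w hw
    rcases a3 w hw with h | h | h <;> subst h <;> simp
  have nsh : ∀ (x : V) {E F : Sym2 V} {P : Prop}, x ∈ E → x ∈ F → (confGraph G).Adj E F → P := by
    intro x E F P h1 h2 h3
    exact absurd h2 ((conf_of_noTri hT h3).1 x h1)
  have D02 : (confGraph G).Adj s(c0, d0) s(c2, d2) →
      4 ≤ (avail G {c0, c1, c2, c3} f' s(c0, d0)).card ∧
      4 ≤ (avail G {c0, c1, c2, c3} f' s(c2, d2)).card := by
    intro h
    obtain ⟨k1, k2, k3, k4, h4⟩ := conf_pair hT h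
    have hdd : G.Adj d0 d2 := by
      rcases h4 with h4 | h4 | h4 | h4
      · exact absurd h4 (hT _ _ _ h01 h12)
      · rcases a0 _ h4 with h5 | h5 | h5
        · exact absurd h5 r2.1
        · exact absurd h5 r2.2
        · exact absurd h5.symm k4
      · rcases a2 _ h4.symm with h5 | h5 | h5
        · exact absurd h5 r0.1
        · exact absurd h5 r0.2
        · exact absurd h5 k4
      · exact h4
    exact ⟨cover_diag hN f' m0 m2 o0 h.1 h.2.1 hdd k2 k3.symm,
      cover_diag hN f' m2 m0 o2 h.2.1 h.1 hdd.symm k3.symm k2⟩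
  have D13 : (confGraph G).Adj s(c1, d1) s(c3, d3) →
      4 ≤ (avail G {c0, c1, c2, c3} f' s(c1, d1)).card ∧
      4 ≤ (avail G {c0, c1, c2, c3} f' s(c3, d3)).card := by
    intro h
    obtain ⟨k1, k2, k3, k4, h4⟩ := conf_pair hT h
    have hdd : G.Adj d1 d3 := by
      rcases h4 with h4 | h4 | h4 | h4
      · exact absurd h4 (hT _ _ _ h12 h23)
      · rcases a1 _ h4 with h5 | h5 | h5
        · exact absurd h5 r3.1
        · exact absurd h5 r3.2
        · exact absurd h5.symm k4
      · rcases a3 _ h4.symm with h5 | h5 | h5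
        · exact absurd h5 r1.1
        · exact absurd h5 r1.2
        · exact absurd h5 k4
      · exact h4
    exact ⟨cover_diag hN f' m1 m3 o1 h.1 h.2.1 hdd k2 k3.symm,
      cover_diag hN f' m3 m1 o3 h.2.1 h.1 hdd.symm k3.symm k2⟩
  obtain ⟨y0, q0, y1, q1, y2, q2, y3, q3, x0, p0, x1, p1, x2, p2, x3, p3, g1, g2, g3, g4, g5, g6,
    g7, g8⟩ := c4_choose (cover_f hN f' m0 o0) (cover_f hN f' m1 o1) (cover_f hN f' m2 o2)
      (cover_f hN f' m3 o3) D02 D13 (cover_e hN f' m0 m1 o0 o1) (cover_e hN f' m1 m2 o1 o2)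
      (cover_e hN f' m2 m3 o2 o3) (cover_e hN f' m3 m0 o3 o0)
  refine extend_items hf' [(s(c0, c1), x0), (s(c1, c2), x1), (s(c2, c3), x2), (s(c3, c0), x3),
    (s(c0, d0), y0), (s(c1, d1), y1), (s(c2, d2), y2), (s(c3, d3), y3)] ?_ ?_ ?_
  · rintro e he ⟨v, hv, hvS⟩
    obtain ⟨w, rfl⟩ := Sym2.mem_iff_exists.1 hv
    have he : G.Adj v w := he
    simp only [Set.mem_insert_iff, Set.mem_singleton_iff] at hvS
    simp only [List.mem_cons, List.not_mem_nil, or_false, exists_eq_or_imp, exists_eq_left]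
    rcases hvS with rfl | rfl | rfl | rfl
    · rcases a0 w he with rfl | rfl | rfl <;> simp
    · rcases a1 w he with rfl | rfl | rfl <;> simp
    · rcases a2 w he with rfl | rfl | rfl <;> simp
    · rcases a3 w he with rfl | rfl | rfl <;> simp
  · simp only [List.mem_cons, List.not_mem_nil, or_false, forall_eq_or_imp, forall_eq]
    exact ⟨p0, p1, p2, p3, q0, q1, q2, q3⟩
  · simp only [List.pairwise_cons, List.mem_cons, List.not_mem_nil, or_false, forall_eq_or_imp,
      forall_eq, List.Pairwise.nil, and_true]
    refine ⟨⟨nsh c1 ?_ ?_, fun _ => g4.1, nsh c0 ?_ ?_, nsh c0 ?_ ?_, nsh c1 ?_ ?_, fun _ => g5.1,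
        fun _ => g5.2⟩,
      ⟨nsh c2 ?_ ?_, fun _ => g4.2, fun _ => g6.2, nsh c1 ?_ ?_, nsh c2 ?_ ?_, fun _ => g6.1⟩,
      ⟨nsh c3 ?_ ?_, fun _ => g7.1, fun _ => g7.2, nsh c2 ?_ ?_, nsh c3 ?_ ?_⟩,
      ⟨nsh c0 ?_ ?_, fun _ => g8.1, fun _ => g8.2, nsh c3 ?_ ?_⟩,
      ⟨fun _ => g1.1, g2, fun _ => g1.2.2.2.symm⟩, ⟨fun _ => g1.2.1, g3⟩, fun _ => g1.2.2.1, ?_⟩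
    all_goals simp

theorem main_ind {V : Type*} [Fintype V] {N1 N2 : V → V → V} : ∀ (n : ℕ) (G : SimpleGraph V),
    (Finset.univ.filter (fun p : V × V => G.Adj p.1 p.2)).card = n → Sub3 G N1 N2 →
    ∃ f : Sym2 V → Fin 7, IsInjEdgeColoring G f := by
  intro n
  induction n using Nat.strong_induction_on with
  | _ n ih =>
    intro G hn hN
    have step : ∀ (S : Set V) (a b : V), a ∈ S → G.Adj a b →
        ∃ f : Sym2 V → Fin 7, IsInjEdgeColoring (delG G S) f := by
      intro S a b ha hab
      refine ih _ ?_ (delG G S) rfl (fun v u w h1 h2 => hN v u w h1.1 h2.1)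
      rw [← hn]
      apply Finset.card_lt_card
      rw [Finset.ssubset_iff_of_subset]
      · refine ⟨(a, b), by simpa using hab, ?_⟩
        simp only [Finset.mem_filter, Finset.mem_univ, true_and]
        exact fun h => h.2.1 ha
      · intro p hp
        simp only [Finset.mem_filter, Finset.mem_univ, true_and] at hp ⊢
        exact hp.1
    by_cases hT : NoTri G
    · by_cases hQ : NoC4 G
      · exact girth_case hT hQ hN
      · unfold NoC4 at hQ
        push Not at hQ
        obtain ⟨a, b, c, d, h1, h2, h3, h4, h5, h6⟩ := hQ
        obtain ⟨f', hf'⟩ := step {a, b, c, d} a b (by simp) h3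
        exact red_c4 hN hT h1 h2 h3 h4 h5 h6 hf'
    · unfold NoTri at hT
      push Not at hT
      obtain ⟨a, b, c, h1, h2, h3⟩ := hT
      by_cases hnd : ∀ a b c d, G.Adj a b → G.Adj b c → G.Adj a c → d ≠ c → G.Adj a d → ¬ G.Adj b d
      · obtain ⟨f', hf'⟩ := step {a, b, c} a b (by simp) h1
        exact red_prism hN hnd h1 h2 h3 hf'
      · push Not at hnd
        obtain ⟨a, b, c, d, h1, h2, h3, h4, h5, h6⟩ := hnd
        obtain ⟨f', hf'⟩ := step {a, b, c} a b (by simp) h1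
        exact red_diamond hN h1 h2 h3 h4 h5 h6 hf'

theorem exists_sub3 {V : Type*} [Fintype V] (G : SimpleGraph V) [DecidableRel G.Adj]
    (hG : ∀ v : V, G.degree v ≤ 3) : ∃ N1 N2 : V → V → V, Sub3 G N1 N2 := by
  have key : ∀ v u, ∃ p : V × V, G.Adj v u → ∀ w, G.Adj v w → w = u ∨ w = p.1 ∨ w = p.2 := by
    intro v u
    by_cases hvu : G.Adj v u
    · have hc : ((G.neighborFinset v).erase u).card ≤ 2 := by
        rw [Finset.card_erase_of_mem (by simpa using hvu), G.card_neighborFinset_eq_degree]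
        have := hG v
        omega
      obtain ⟨p, hp⟩ : ∃ p : V × V, ∀ w ∈ (G.neighborFinset v).erase u, w = p.1 ∨ w = p.2 := by
        rcases Nat.lt_or_ge ((G.neighborFinset v).erase u).card 2 with h | h
        · by_cases he : ((G.neighborFinset v).erase u) = ∅
          · exact ⟨(v, v), by simp [he]⟩
          · obtain ⟨x, hx⟩ := Finset.nonempty_iff_ne_empty.2 he
            refine ⟨(x, x), fun w hw => Or.inl ?_⟩
            exact Finset.card_le_one.1 (by omega) w hw x hx
        · obtain ⟨x, y, -, hxy⟩ := Finset.card_eq_two.1 (le_antisymm hc h)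
          exact ⟨(x, y), fun w hw => by rw [hxy] at hw; simpa using hw⟩
      refine ⟨p, fun _ w hw => ?_⟩
      by_cases hwu : w = u
      · exact Or.inl hwu
      · exact Or.inr (hp w (by simpa [hwu] using hw))
    · exact ⟨(v, v), fun h => absurd h hvu⟩
  choose p hp using key
  exact ⟨fun v u => (p v u).1, fun v u => (p v u).2, fun v u w h1 h2 => hp v u h1 w h2⟩

end Reduce

/-- For every subcubic graph `G`, `χ'_inj(G) ≤ 7`. -/
theorem injChromIndex_le_seven_of_subcubic {V : Type*} [Fintype V] (G : SimpleGraph V)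
    [DecidableRel G.Adj] (hG : ∀ v : V, G.degree v ≤ 3) :
    injChromIndex G ≤ 7 := by
  obtain ⟨N1, N2, hN⟩ := exists_sub3 G hG
  obtain ⟨f, hf⟩ := main_ind _ G rfl hN
  exact Nat.sInf_le ⟨f, hf⟩
end

section
/- Let G be a finite simple graph with maximum degree Δ and chromatic number χ, where 2 ≤ χ ≤ Δ. Then the injective chromatic index of G satisfies χ'_inj(G) ≤ (χ − 1)·⌈27 Δ ln Δ⌉. -/
open SimpleGraph

/-! ### A symmetric local lemma by counting -/

open Finset in
/-- Simple symmetric form of the Lovász local lemma, `4 p D ≤ 1`. -/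
theorem lll_step {Ω ι : Type*} [Fintype Ω] [DecidableEq Ω] [DecidableEq ι]
    (A : ι → Finset Ω) (T : Finset ι) (nbr : ι → ι → Prop) [∀ i, DecidablePred (nbr i)]
    (p : ℝ) (D : ℕ) (hp : 0 ≤ p)
    (hD : ∀ i ∈ T, #(T.filter (nbr i)) ≤ D) (hpD : 4 * p * D ≤ 1)
    (hind : ∀ i ∈ T, ∀ S ⊆ T, (∀ j ∈ S, ¬ nbr i j) →
      (#(univ.filter fun ω => ω ∈ A i ∧ ∀ j ∈ S, ω ∉ A j) : ℝ) ≤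
        p * #(univ.filter fun ω => ∀ j ∈ S, ω ∉ A j)) (n : ℕ) :
    ∀ S ⊆ T, #S ≤ n → ∀ i ∈ T,
      (#(univ.filter fun ω => ω ∈ A i ∧ ∀ j ∈ S, ω ∉ A j) : ℝ) ≤
        2 * p * #(univ.filter fun ω => ∀ j ∈ S, ω ∉ A j) := by
  induction n with
  | zero =>
    intro S hS hn i hi
    have : S = ∅ := by simpa using hn
    subst this
    refine (hind i hi ∅ (by simp) (by simp)).trans ?_
    have : (0:ℝ) ≤ #(univ.filter fun ω : Ω => ∀ j ∈ (∅ : Finset ι), ω ∉ A j) := by positivity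
    nlinarith
  | succ n ih =>
    intro S hS hn i hi
    set S1 := S.filter (nbr i) with hS1
    set S2 := S.filter (fun j => ¬ nbr i j) with hS2
    have hS2T : S2 ⊆ T := (filter_subset _ _).trans hS
    have hcard : #S1 + #S2 = #S := card_filter_add_card_filter_not (nbr i)
    have h1 := hind i hi S2 hS2T (by intro j hj; exact (mem_filter.1 hj).2)
    have hmono : (#(univ.filter fun ω => ω ∈ A i ∧ ∀ j ∈ S, ω ∉ A j) : ℝ) ≤
        #(univ.filter fun ω => ω ∈ A i ∧ ∀ j ∈ S2, ω ∉ A j) := by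
      exact_mod_cast card_le_card (by
        intro ω hω
        simp only [mem_filter, mem_univ, true_and] at hω ⊢
        exact ⟨hω.1, fun j hj => hω.2 j (filter_subset _ _ hj)⟩)
    have hlow : (#(univ.filter fun ω => ∀ j ∈ S2, ω ∉ A j) : ℝ) ≤
        2 * #(univ.filter fun ω => ∀ j ∈ S, ω ∉ A j) := by
      by_cases h0 : S1 = ∅
      · have hSS : S2 = S := by
          apply eq_of_subset_of_card_le (filter_subset _ _)
          rw [← hcard, h0]; simp [hS2]
        rw [hSS]
        have : (0:ℝ) ≤ #(univ.filter fun ω => ∀ j ∈ S, ω ∉ A j) := by positivity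
        linarith
      · have hlt : #S2 ≤ n := by
          have : 0 < #S1 := card_pos.2 (nonempty_iff_ne_empty.2 h0)
          omega
        have hsub : (univ.filter fun ω => ∀ j ∈ S2, ω ∉ A j) ⊆
            (univ.filter fun ω => ∀ j ∈ S, ω ∉ A j) ∪
              S1.biUnion (fun l => univ.filter fun ω => ω ∈ A l ∧ ∀ j ∈ S2, ω ∉ A j) := by
          intro ω hω
          simp only [mem_filter, mem_univ, true_and, mem_union, mem_biUnion] at hω ⊢
          by_cases hh : ∀ j ∈ S, ω ∉ A j
          · exact Or.inl hh
          · right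
            push Not at hh
            obtain ⟨j, hj, hjA⟩ := hh
            refine ⟨j, ?_, hjA, hω⟩
            by_contra hc
            refine hω j ?_ hjA
            simp only [hS1, hS2, mem_filter] at hc ⊢
            exact ⟨hj, fun h => hc ⟨hj, h⟩⟩
        have hc1 : (#(univ.filter fun ω => ∀ j ∈ S2, ω ∉ A j) : ℝ) ≤
            #(univ.filter fun ω => ∀ j ∈ S, ω ∉ A j) +
              ∑ l ∈ S1, (#(univ.filter fun ω => ω ∈ A l ∧ ∀ j ∈ S2, ω ∉ A j) : ℝ) := by
          exact_mod_cast (card_le_card hsub).trans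
            ((card_union_le _ _).trans (Nat.add_le_add_left card_biUnion_le _))
        have hc2 : ∑ l ∈ S1, (#(univ.filter fun ω => ω ∈ A l ∧ ∀ j ∈ S2, ω ∉ A j) : ℝ) ≤
            #S1 * (2 * p * #(univ.filter fun ω => ∀ j ∈ S2, ω ∉ A j)) := by
          rw [← nsmul_eq_mul]
          apply sum_le_card_nsmul
          intro l hl
          exact ih S2 hS2T hlt l (hS (filter_subset _ _ hl))
        have hS1D : (#S1 : ℝ) ≤ D := by
          exact_mod_cast (card_le_card (filter_subset_filter _ hS)).trans (hD i hi)
        have hN : (0:ℝ) ≤ #(univ.filter fun ω => ∀ j ∈ S2, ω ∉ A j) := by positivity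
        have : (#S1 : ℝ) * (2 * p * #(univ.filter fun ω => ∀ j ∈ S2, ω ∉ A j)) ≤
            1 / 2 * #(univ.filter fun ω => ∀ j ∈ S2, ω ∉ A j) := by
          rw [← mul_assoc]
          apply mul_le_mul_of_nonneg_right _ hN
          nlinarith
        linarith
    calc _ ≤ _ := hmono
      _ ≤ _ := h1
      _ ≤ p * (2 * #(univ.filter fun ω => ∀ j ∈ S, ω ∉ A j)) :=
        mul_le_mul_of_nonneg_left hlow hp
      _ = _ := by ring

open Finset in
theorem lll {Ω ι : Type*} [Fintype Ω] [Nonempty Ω] [DecidableEq Ω] [DecidableEq ι]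
    (A : ι → Finset Ω) (T : Finset ι) (nbr : ι → ι → Prop) [∀ i, DecidablePred (nbr i)]
    (p : ℝ) (D : ℕ) (hp : 0 ≤ p) (hp4 : 4 * p ≤ 1)
    (hD : ∀ i ∈ T, #(T.filter (nbr i)) ≤ D) (hpD : 4 * p * D ≤ 1)
    (hind : ∀ i ∈ T, ∀ S ⊆ T, (∀ j ∈ S, ¬ nbr i j) →
      (#(univ.filter fun ω => ω ∈ A i ∧ ∀ j ∈ S, ω ∉ A j) : ℝ) ≤
        p * #(univ.filter fun ω => ∀ j ∈ S, ω ∉ A j)) :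
    ∃ ω, ∀ j ∈ T, ω ∉ A j := by
  have key : ∀ S ⊆ T, (0:ℝ) < #(univ.filter fun ω => ∀ j ∈ S, ω ∉ A j) := by
    intro S
    induction S using Finset.induction_on with
    | empty => intro _; simp [Fintype.card_pos]
    | insert i S hi ih =>
      intro hS
      have hST : S ⊆ T := (subset_insert _ _).trans hS
      have h1 := ih hST
      have h2 := lll_step A T nbr p D hp hD hpD hind _ S hST le_rfl i (hS (mem_insert_self _ _))
      have hsub : (univ.filter fun ω => ∀ j ∈ S, ω ∉ A j) ⊆
          (univ.filter fun ω => ∀ j ∈ insert i S, ω ∉ A j) ∪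
            (univ.filter fun ω => ω ∈ A i ∧ ∀ j ∈ S, ω ∉ A j) := by
        intro ω hω
        simp only [mem_filter, mem_univ, true_and, mem_union, forall_mem_insert] at hω ⊢
        tauto
      have h3 : (#(univ.filter fun ω => ∀ j ∈ S, ω ∉ A j) : ℝ) ≤
          #(univ.filter fun ω => ∀ j ∈ insert i S, ω ∉ A j) +
            #(univ.filter fun ω => ω ∈ A i ∧ ∀ j ∈ S, ω ∉ A j) := by
        exact_mod_cast (card_le_card hsub).trans (card_union_le _ _)
      nlinarith
  have := key T le_rfl
  have h' : 0 < #(univ.filter fun ω => ∀ j ∈ T, ω ∉ A j) := by exact_mod_cast this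
  obtain ⟨ω, hω⟩ := card_pos.1 h'
  exact ⟨ω, (mem_filter.1 hω).2⟩

open Finset in
/-- Independence of events supported on disjoint coordinate sets. -/
theorem card_indep {V α : Type*} [Fintype V] [DecidableEq V] [Fintype α] [DecidableEq α]
    (R : Finset V) (P Q : (V → α) → Prop) [DecidablePred P] [DecidablePred Q]
    (hP : ∀ f g : V → α, (∀ x ∈ R, f x = g x) → (P f ↔ P g))
    (hQ : ∀ f g : V → α, (∀ x ∉ R, f x = g x) → (Q f ↔ Q g)) :
    #(univ.filter fun ω : V → α => P ω ∧ Q ω) * Fintype.card (V → α) =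
      #(univ.filter fun ω : V → α => P ω) * #(univ.filter fun ω : V → α => Q ω) := by
  rw [← card_univ, ← card_product, ← card_product]
  let sw : (V → α) × (V → α) → (V → α) × (V → α) := fun fg =>
    (fun x => if x ∈ R then fg.1 x else fg.2 x, fun x => if x ∈ R then fg.2 x else fg.1 x)
  have hsw : ∀ fg, sw (sw fg) = fg := by
    rintro ⟨f, g⟩
    simp only [sw, Prod.mk.injEq]
    constructor <;> funext x <;> by_cases hx : x ∈ R <;> simp [hx]
  have hP1 : ∀ fg, P (sw fg).1 ↔ P fg.1 := fun fg => hP _ _ (by intro x hx; simp [sw, hx])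
  have hQ1 : ∀ fg, Q (sw fg).1 ↔ Q fg.2 := fun fg => hQ _ _ (by intro x hx; simp [sw, hx])
  have hQ2 : ∀ fg, Q (sw fg).2 ↔ Q fg.1 := fun fg => hQ _ _ (by intro x hx; simp [sw, hx])
  refine card_nbij' sw sw ?_ ?_ (fun x _ => hsw x) (fun x _ => hsw x)
  · intro fg h
    simp only [coe_product, coe_filter, mem_univ, true_and, Set.mem_prod, Set.mem_ofPred_eq,
      coe_univ, Set.mem_univ, and_true] at h ⊢
    rw [hP1, hQ2]; exact h
  · intro fg h
    simp only [coe_product, coe_filter, mem_univ, true_and, Set.mem_prod, Set.mem_ofPred_eq,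
      coe_univ, Set.mem_univ, and_true] at h ⊢
    rw [hP1, hQ1]; exact h

open Finset in
/-- Number of single-color patterns that are good. -/
theorem card_good {V : Type*} [Fintype V] [DecidableEq V] (m : ℕ) [NeZero m]
    (R : Finset V) (a : V) (ha : a ∈ R) (hR : #R ≤ m) :
    (1 / m : ℝ) * (1 - 1 / m) ^ (m - 1) * Fintype.card (V → Fin m) ≤
      #(univ.filter fun σ : V → Fin m => σ a = 0 ∧ ∀ x ∈ R, x ≠ a → σ x ≠ 0) := by
  have hm0 : (0:ℝ) < m := by exact_mod_cast Nat.pos_of_ne_zero (NeZero.ne m)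
  have hm1 : (1:ℝ) ≤ m := by exact_mod_cast Nat.pos_of_ne_zero (NeZero.ne m)
  have heq : (univ.filter fun σ : V → Fin m => σ a = 0 ∧ ∀ x ∈ R, x ≠ a → σ x ≠ 0) =
      Fintype.piFinset (fun x => if x = a then ({0} : Finset (Fin m)) else
        if x ∈ R then univ.erase 0 else univ) := by
    ext σ
    simp only [mem_filter, mem_univ, true_and, Fintype.mem_piFinset]
    constructor
    · rintro ⟨h0, h1⟩ x
      by_cases hx : x = a
      · subst hx; simp [h0]
      · by_cases hxR : x ∈ R
        · simp [hx, hxR, h1 x hxR hx]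
        · simp [hx, hxR]
    · intro h
      refine ⟨by simpa using h a, fun x hx hxa => ?_⟩
      have := h x
      simpa [hx, hxa] using this
  rw [heq, Fintype.card_piFinset]
  push_cast
  have hterm : ∀ x : V, ((#(if x = a then ({0} : Finset (Fin m)) else
        if x ∈ R then univ.erase 0 else univ) : ℕ) : ℝ) =
      m * (if x ∈ R then (if x = a then (1 / m : ℝ) else (1 - 1 / m)) else 1) := by
    intro x
    by_cases hx : x = a
    · subst hx; simp [ha, hm0.ne']
    · by_cases hxR : x ∈ R
      · have : 1 ≤ m := Nat.pos_of_ne_zero (NeZero.ne m)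
        simp only [hx, hxR, if_true, if_false]
        rw [card_erase_of_mem (mem_univ _), card_univ, Fintype.card_fin, Nat.cast_sub this]
        field_simp
        simp
      · simp [hx, hxR]
  rw [prod_congr rfl (fun x _ => hterm x), prod_mul_distrib, prod_ite_mem, univ_inter,
    ← mul_prod_erase R _ ha]
  have h2 : ∏ x ∈ R.erase a, (if x = a then (1 / m : ℝ) else (1 - 1 / m)) =
      (1 - 1 / m) ^ (#R - 1) := by
    rw [prod_congr rfl (fun x hx => if_neg (ne_of_mem_erase hx)), prod_const,
      card_erase_of_mem ha]
  rw [h2]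
  simp only [if_true, prod_const, card_univ, Fintype.card_fun, Fintype.card_fin]
  push_cast
  have h3 : (1 - 1 / m : ℝ) ^ (m - 1) ≤ (1 - 1 / m) ^ (#R - 1) := by
    apply pow_le_pow_of_le_one
    · rw [sub_nonneg, div_le_one hm0]; exact hm1
    · have : (0:ℝ) ≤ 1 / m := by positivity
      linarith
    · omega
  rw [mul_comm ((m:ℝ) ^ _)]
  gcongr

open Finset in
/-- Probability that no color is good. -/
theorem card_bad {V : Type*} [Fintype V] [DecidableEq V] (m k : ℕ) [NeZero m]
    (R : Finset V) (a : V) (ha : a ∈ R) (hR : #R ≤ m) :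
    (#(univ.filter fun ω : V → Fin k → Fin m =>
        ¬ ∃ t, ω a t = 0 ∧ ∀ x ∈ R, x ≠ a → ω x t ≠ 0) : ℝ) ≤
      (1 - (1 / m : ℝ) * (1 - 1 / m) ^ (m - 1)) ^ k * Fintype.card (V → Fin k → Fin m) := by
  set B := univ.filter fun σ : V → Fin m => ¬ (σ a = 0 ∧ ∀ x ∈ R, x ≠ a → σ x ≠ 0) with hB
  have h1 : #(univ.filter fun ω : V → Fin k → Fin m =>
        ¬ ∃ t, ω a t = 0 ∧ ∀ x ∈ R, x ≠ a → ω x t ≠ 0) = #B ^ k := by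
    have : #B ^ k = #(Fintype.piFinset (fun _ : Fin k => B)) := by
      rw [Fintype.card_piFinset]; simp
    rw [this]
    refine card_nbij' (fun ω t x => ω x t) (fun ω x t => ω t x) ?_ ?_
      (fun _ _ => rfl) (fun _ _ => rfl)
    · intro ω h
      simp only [coe_filter, mem_univ, true_and, Set.mem_ofPred_eq, mem_coe,
        Fintype.mem_piFinset, hB, mem_filter] at h ⊢
      exact fun t ht => h ⟨t, ht⟩
    · intro ω h
      simp only [coe_filter, mem_univ, true_and, Set.mem_ofPred_eq, mem_coe,
        Fintype.mem_piFinset, hB, mem_filter] at h ⊢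
      rintro ⟨t, ht⟩
      exact h t ht
  have h2 : (Fintype.card (V → Fin k → Fin m) : ℝ) = (Fintype.card (V → Fin m) : ℝ) ^ k := by
    simp only [Fintype.card_fun, Fintype.card_fin]
    push_cast
    rw [← pow_mul, ← pow_mul, mul_comm]
  rw [h1, h2, ← mul_pow]
  push_cast
  have h3 := card_good m R a ha hR
  have h4 := card_filter_add_card_filter_not (s := (univ : Finset (V → Fin m)))
    (fun σ : V → Fin m => σ a = 0 ∧ ∀ x ∈ R, x ≠ a → σ x ≠ 0)
  rw [card_univ] at h4
  have h5 : (#(univ.filter fun σ : V → Fin m => σ a = 0 ∧ ∀ x ∈ R, x ≠ a → σ x ≠ 0) : ℝ)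
      + #B = Fintype.card (V → Fin m) := by exact_mod_cast h4
  apply pow_le_pow_left₀ (by positivity)
  linarith

theorem numeric_bound (Δ : ℕ) (h : 2 ≤ Δ) :
    4 * (1 - (1 / (2 * Δ - 1 : ℕ) : ℝ) * (1 - 1 / (2 * Δ - 1 : ℕ)) ^ ((2 * Δ - 1) - 1)) ^
      ⌈(27 : ℝ) * Δ * Real.log Δ⌉₊ * (((2 * Δ - 1) * Δ ^ 2 : ℕ) : ℝ) ≤ 1 := by
  obtain ⟨n, hn⟩ : ∃ n, 2 * Δ - 1 = n + 1 := ⟨2 * Δ - 2, by omega⟩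
  have hΔ2 : (2:ℝ) ≤ Δ := by exact_mod_cast h
  have hnn : 2 ≤ n := by omega
  have hn0 : (2:ℝ) ≤ n := by exact_mod_cast hnn
  have hnR : (n:ℝ) + 1 = 2 * Δ - 1 := by
    have : 2 * Δ = n + 2 := by omega
    have : (2:ℝ) * Δ = n + 2 := by exact_mod_cast this
    linarith
  rw [hn]
  set k := ⌈(27 : ℝ) * Δ * Real.log Δ⌉₊ with hk
  have hkle : (27 : ℝ) * Δ * Real.log Δ ≤ k := Nat.le_ceil _
  simp only [Nat.add_sub_cancel]
  push_cast
  have hbase : (1 - 1 / ((n:ℝ) + 1)) = (1 + 1 / (n:ℝ))⁻¹ := by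
    field_simp
    ring
  have hexp : (1 + 1 / (n:ℝ)) ^ n ≤ Real.exp 1 := by
    have h1 : 1 + 1 / (n:ℝ) ≤ Real.exp (1 / n) := by
      rw [add_comm]; exact Real.add_one_le_exp _
    calc _ ≤ (Real.exp (1 / n)) ^ n := pow_le_pow_left₀ (by positivity) h1 _
      _ = Real.exp 1 := by
        rw [← Real.exp_nat_mul]; congr 1; field_simp
  set q := (1 / ((n:ℝ) + 1)) * (1 - 1 / ((n:ℝ) + 1)) ^ n with hq
  have hqlow : 1 / ((2 * Δ - 1) * Real.exp 1) ≤ q := by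
    rw [hq, hbase, ← hnR, inv_pow, one_div_mul_eq_div, one_div, mul_inv, div_eq_mul_inv, mul_comm]
    have : (Real.exp 1)⁻¹ ≤ ((1 + 1 / (n:ℝ)) ^ n)⁻¹ := by
      apply inv_anti₀ (by positivity) hexp
    gcongr
  have hqle : q ≤ 1 := by
    have h1 : (1 / ((n:ℝ) + 1)) ≤ 1 := by
      rw [div_le_one (by positivity)]; linarith
    have h0 : 0 ≤ 1 / ((n:ℝ) + 1) := by positivity
    have h2 : (1 - 1 / ((n:ℝ) + 1)) ^ n ≤ 1 := pow_le_one₀ (by linarith) (by linarith)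
    rw [hq]
    exact mul_le_one₀ h1 (pow_nonneg (by linarith) _) h2
  have hpow : (1 - q) ^ k ≤ Real.exp (-(q * k)) := by
    calc _ ≤ (Real.exp (-q)) ^ k :=
          pow_le_pow_left₀ (by linarith) (Real.one_sub_le_exp_neg q) _
      _ = _ := by rw [← Real.exp_nat_mul]; congr 1; ring
  have he : Real.exp 1 < 2.7182818286 := Real.exp_one_lt_d9
  have he0 : 0 < Real.exp 1 := Real.exp_pos 1
  have hlog0 : 0 < Real.log Δ := Real.log_pos (by linarith)
  have hqk : 27 * Δ * Real.log Δ / ((2 * Δ - 1) * Real.exp 1) ≤ q * k := by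
    have hpos : (0:ℝ) < (2 * Δ - 1) * Real.exp 1 := mul_pos (by linarith) he0
    calc _ = 1 / ((2 * Δ - 1) * Real.exp 1) * (27 * Δ * Real.log Δ) := by ring
      _ ≤ q * k := by
        apply mul_le_mul hqlow hkle (by positivity)
        exact le_trans (by positivity) hqlow
  have hmain : Real.log (8 * (Δ:ℝ) ^ 3) ≤
      27 * Δ * Real.log Δ / ((2 * Δ - 1) * Real.exp 1) := by
    have hpos : (0:ℝ) < (2 * Δ - 1) * Real.exp 1 := mul_pos (by linarith) he0
    have hl8 : Real.log (8 * (Δ:ℝ) ^ 3) = 3 * Real.log 2 + 3 * Real.log Δ := by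
      rw [Real.log_mul (by norm_num) (by positivity), Real.log_pow,
        show (8:ℝ) = 2 ^ 3 by norm_num, Real.log_pow]
      norm_num
    have hl2 : 0 < Real.log 2 := Real.log_pos (by norm_num)
    rw [hl8, le_div_iff₀ hpos]
    rcases Nat.eq_or_lt_of_le h with h2 | h3
    · subst h2
      push_cast
      nlinarith
    · have h3' : (3:ℝ) ≤ Δ := by exact_mod_cast h3
      have hl3 : Real.log 3 ≤ Real.log Δ := Real.log_le_log (by norm_num) h3'
      have h30 : 30 * Real.log 2 ≤ 19 * Real.log 3 := by
        have : Real.log ((2:ℝ) ^ 30) ≤ Real.log ((3:ℝ) ^ 19) :=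
          Real.log_le_log (by norm_num) (by norm_num)
        rw [Real.log_pow, Real.log_pow] at this
        exact_mod_cast this
      have hb : 3 * Real.log 2 + 3 * Real.log Δ ≤ 4.9 * Real.log Δ := by linarith
      calc (3 * Real.log 2 + 3 * Real.log Δ) * ((2 * Δ - 1) * Real.exp 1)
          ≤ (4.9 * Real.log Δ) * ((2 * Δ) * 2.72) := by
            apply mul_le_mul hb _ hpos.le (by positivity)
            apply mul_le_mul (by linarith) (by linarith) he0.le (by positivity)
        _ = 26.656 * (Δ * Real.log Δ) := by ring
        _ ≤ 27 * Δ * Real.log Δ := by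
            have : 0 < Δ * Real.log Δ := by positivity
            linarith
  have hfin : (1 - q) ^ k ≤ (8 * (Δ:ℝ) ^ 3)⁻¹ := by
    have hp8 : (0:ℝ) < 8 * (Δ:ℝ) ^ 3 := by positivity
    calc _ ≤ _ := hpow
      _ ≤ Real.exp (-Real.log (8 * (Δ:ℝ) ^ 3)) := by
        apply Real.exp_le_exp.2; linarith
      _ = _ := by rw [Real.exp_neg, Real.exp_log hp8]
  rw [hnR]
  calc 4 * (1 - q) ^ k * ((2 * (Δ:ℝ) - 1) * (Δ:ℝ) ^ 2)
      ≤ 4 * (8 * (Δ:ℝ) ^ 3)⁻¹ * ((2 * (Δ:ℝ)) * (Δ:ℝ) ^ 2) := by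
        have : 0 ≤ (1 - q) ^ k := pow_nonneg (by linarith) _
        apply mul_le_mul (by linarith) _ (by apply mul_nonneg <;> [linarith; positivity])
          (by positivity)
        apply mul_le_mul_of_nonneg_right (by linarith) (by positivity)
    _ = 1 := by field_simp; norm_num

open Finset in
/-- The random choice: centers for each color. -/
theorem exists_pattern {V : Type*} [Fintype V] [DecidableEq V] (G : SimpleGraph V)
    [DecidableRel G.Adj] (Δ χ : ℕ) (hΔ : G.maxDegree = Δ) (h2 : 2 ≤ Δ) (C : V → Fin χ)
    (hC : ∀ x y, G.Adj x y → C x ≠ C y) :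
    ∃ c : V → Fin ⌈(27 : ℝ) * Δ * Real.log Δ⌉₊ → Prop, ∀ a b, G.Adj a b → C b < C a →
      ∃ t, c a t ∧ ∀ x, (G.Adj a x ∨ G.Adj b x) → x ≠ b → x ≠ a → ¬ c x t := by
  set k := ⌈(27 : ℝ) * Δ * Real.log Δ⌉₊ with hk
  set m := 2 * Δ - 1 with hm
  have : NeZero m := ⟨by omega⟩
  let R : V × V → Finset V := fun i =>
    (G.neighborFinset i.1 ∪ G.neighborFinset i.2).erase i.2
  let T : Finset (V × V) := univ.filter fun i => G.Adj i.1 i.2 ∧ C i.2 < C i.1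
  let bad : V × V → (V → Fin k → Fin m) → Prop := fun i ω =>
    ¬ ∃ t, ω i.1 t = 0 ∧ ∀ x ∈ R i, x ≠ i.1 → ω x t ≠ 0
  classical
  let A : V × V → Finset (V → Fin k → Fin m) := fun i => univ.filter (bad i)
  have hdeg : ∀ x, #(G.neighborFinset x) ≤ Δ := fun x => by
    rw [G.card_neighborFinset_eq_degree, ← hΔ]; exact G.degree_le_maxDegree x
  have haR : ∀ i ∈ T, i.1 ∈ R i := by
    intro i hi
    obtain ⟨h1, -⟩ := (mem_filter.1 hi).2
    simp only [R, mem_erase, mem_union, SimpleGraph.mem_neighborFinset]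
    exact ⟨h1.ne, Or.inr h1.symm⟩
  have hRc : ∀ i ∈ T, #(R i) ≤ m := by
    intro i hi
    obtain ⟨h1, -⟩ := (mem_filter.1 hi).2
    have hb : i.2 ∈ G.neighborFinset i.1 ∪ G.neighborFinset i.2 := by
      simp [h1]
    simp only [R]
    rw [card_erase_of_mem hb]
    have := card_union_le (G.neighborFinset i.1) (G.neighborFinset i.2)
    have := hdeg i.1
    have := hdeg i.2
    omega
  set p : ℝ := (1 - (1 / m : ℝ) * (1 - 1 / m) ^ (m - 1)) ^ k with hp
  have hnum : 4 * p * ((m * Δ ^ 2 : ℕ) : ℝ) ≤ 1 := numeric_bound Δ h2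
  have hm1 : (1:ℝ) ≤ m := by exact_mod_cast (show 1 ≤ m by omega)
  have hp0 : 0 ≤ p := by
    apply pow_nonneg
    have h1 : 1 / (m:ℝ) ≤ 1 := by rw [div_le_one (by linarith)]; exact hm1
    have h0 : 0 ≤ 1 / (m:ℝ) := by positivity
    have := mul_le_one₀ h1 (pow_nonneg (by linarith) (m-1)) 
      (pow_le_one₀ (n := m - 1) (by linarith) (by linarith : 1 - 1 / (m:ℝ) ≤ 1))
    linarith
  have hp4 : 4 * p ≤ 1 := by
    have : (1:ℝ) ≤ ((m * Δ ^ 2 : ℕ) : ℝ) := by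
      have : 1 ≤ m * Δ ^ 2 := Nat.mul_pos (by omega) (by positivity)
      exact_mod_cast this
    nlinarith
  have hex : ∃ ω, ∀ j ∈ T, ω ∉ A j := by
    refine lll A T (fun i j => ¬ Disjoint (R i) (R j)) p (m * Δ ^ 2) hp0 hp4 ?_ hnum ?_
    · intro i hi
      have hsub : (T.filter fun j => ¬ Disjoint (R i) (R j)) ⊆
          (R i).biUnion fun x => (G.neighborFinset x).biUnion fun y =>
            (G.neighborFinset y).image fun z => if C z < C y then (y, z) else (z, y) := by
        rintro ⟨c, d⟩ hj
        obtain ⟨hjT, hnd⟩ := mem_filter.1 hj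
        obtain ⟨hcd, hlt⟩ := (mem_filter.1 hjT).2
        simp only at hcd hlt
        obtain ⟨x, hx1, hx2⟩ := not_disjoint_iff.1 hnd
        simp only [mem_biUnion, mem_image, SimpleGraph.mem_neighborFinset]
        refine ⟨x, hx1, ?_⟩
        simp only [R, mem_erase, mem_union, SimpleGraph.mem_neighborFinset] at hx2
        rcases hx2.2 with h | h
        · exact ⟨c, h.symm, d, hcd, by simp [hlt]⟩
        · exact ⟨d, h.symm, c, hcd.symm, by simp [hlt.not_gt]⟩
      refine (card_le_card hsub).trans ?_
      refine (card_biUnion_le_card_mul _ _ (Δ ^ 2) ?_).trans (Nat.mul_le_mul_right _ (hRc i hi))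
      intro x _
      refine (card_biUnion_le_card_mul _ _ Δ ?_).trans ?_
      · intro y _
        exact card_image_le.trans (hdeg y)
      · rw [pow_two]; exact Nat.mul_le_mul_right _ (hdeg x)
    · intro i hi S hS hdis
      have hloc : ∀ j, j ∈ T → ∀ f g : V → Fin k → Fin m, (∀ x ∈ R j, f x = g x) →
          (bad j f ↔ bad j g) := by
        intro j hj f g hfg
        simp only [bad]
        rw [hfg j.1 (haR j hj)]
        apply not_congr
        refine exists_congr fun t => and_congr_right fun _ => ?_
        refine forall_congr' fun x => forall_congr' fun hx => ?_
        rw [hfg x hx]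
      have hcI := card_indep (R i) (fun ω => ω ∈ A i) (fun ω => ∀ j ∈ S, ω ∉ A j)
        (by
          intro f g hfg
          simp only [A, mem_filter, mem_univ, true_and]
          exact hloc i hi f g hfg)
        (by
          intro f g hfg
          simp only [A, mem_filter, mem_univ, true_and]
          refine forall_congr' fun j => forall_congr' fun hj => not_congr ?_
          refine hloc j (hS hj) f g fun x hx => hfg x fun hxi => ?_
          exact hdis j hj (fun hd => (Finset.disjoint_left.1 hd) hxi hx))
      have hb := card_bad m k (R i) i.1 (haR i hi) (hRc i hi)
      have hAi : (#(univ.filter fun ω => ω ∈ A i) : ℝ) ≤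
          p * Fintype.card (V → Fin k → Fin m) := by
        convert hb using 3
        simp [A, bad]
      have hcI' : (#(univ.filter fun ω => ω ∈ A i ∧ ∀ j ∈ S, ω ∉ A j) : ℝ) *
          Fintype.card (V → Fin k → Fin m) =
          #(univ.filter fun ω => ω ∈ A i) * #(univ.filter fun ω => ∀ j ∈ S, ω ∉ A j) := by
        exact_mod_cast hcI
      have hN : (0:ℝ) < Fintype.card (V → Fin k → Fin m) := by
        exact_mod_cast Fintype.card_pos
      have h0 : (0:ℝ) ≤ #(univ.filter fun ω => ∀ j ∈ S, ω ∉ A j) := by positivity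
      have hgoal : (#(univ.filter fun ω => ω ∈ A i ∧ ∀ j ∈ S, ω ∉ A j) : ℝ) ≤
          p * #(univ.filter fun ω => ∀ j ∈ S, ω ∉ A j) := by
        refine le_of_mul_le_mul_right ?_ hN
        rw [hcI']
        calc _ ≤ p * Fintype.card (V → Fin k → Fin m) *
              (#(univ.filter fun ω => ∀ j ∈ S, ω ∉ A j) : ℝ) := mul_le_mul_of_nonneg_right hAi h0
          _ = _ := by ring
      convert hgoal
  obtain ⟨ω, hω⟩ := hex
  refine ⟨fun x t => ω x t = 0, fun a b hab hlt => ?_⟩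
  have h1 := hω (a, b) (by simp [T, hab, hlt])
  simp only [A, mem_filter, mem_univ, true_and, bad, not_not] at h1
  obtain ⟨t, ht, hx⟩ := h1
  refine ⟨t, ht, fun x hx1 hxb hxa => hx x ?_ hxa⟩
  simp [R, hxb, hx1]

/-- Theorem 4 (main): if `G` has maximum degree `Δ` and chromatic number `χ` with
`2 ≤ χ ≤ Δ`, then `χ'_inj(G) ≤ (χ - 1) * ⌈27 Δ ln Δ⌉`. -/
theorem injChromIndex_le_of_chromaticNumber {V : Type*} [Fintype V] (G : SimpleGraph V)
    [DecidableRel G.Adj] (Δ χ : ℕ) (hΔ : G.maxDegree = Δ)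
    (hχ : G.chromaticNumber = χ) (h2 : 2 ≤ χ) (hχΔ : χ ≤ Δ) :
    injChromIndex G ≤ (χ - 1) * ⌈(27 : ℝ) * Δ * Real.log Δ⌉₊ := by
  classical
  obtain ⟨C⟩ : G.Colorable χ := SimpleGraph.chromaticNumber_le_iff_colorable.1 hχ.le
  have hC : ∀ x y, G.Adj x y → C x ≠ C y := fun x y h => C.valid h
  have hΔ2 : 2 ≤ Δ := h2.trans hχΔ
  have hpat := exists_pattern G Δ χ hΔ hΔ2 C hC
  set k := ⌈(27 : ℝ) * Δ * Real.log Δ⌉₊ with hk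
  obtain ⟨c, hc⟩ := hpat
  have hkpos : 0 < k := by
    rw [hk, Nat.ceil_pos]
    have h1 : (2:ℝ) ≤ Δ := by exact_mod_cast hΔ2
    have := Real.log_pos (show (1:ℝ) < Δ by linarith)
    positivity
  -- every edge has a center `a`, a leaf `b` and a color `t`
  have hedge : ∀ e ∈ G.edgeSet, ∃ (n : Fin ((χ - 1) * k)) (a b : V) (l : Fin (χ - 1)) (t : Fin k),
      n = finProdFinEquiv (l, t) ∧ e = s(a, b) ∧ G.Adj a b ∧ C b < C a ∧ (C b : ℕ) = l ∧ c a t ∧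
      ∀ x, (G.Adj a x ∨ G.Adj b x) → x ≠ b → x ≠ a → ¬ c x t := by
    have aux : ∀ a b, G.Adj a b → C b < C a → ∃ (n : Fin ((χ - 1) * k)) (a' b' : V)
        (l : Fin (χ - 1)) (t : Fin k),
        n = finProdFinEquiv (l, t) ∧ s(a, b) = s(a', b') ∧ G.Adj a' b' ∧ C b' < C a' ∧
        (C b' : ℕ) = l ∧ c a' t ∧
        ∀ x, (G.Adj a' x ∨ G.Adj b' x) → x ≠ b' → x ≠ a' → ¬ c x t := by
      intro a b hab hlt
      obtain ⟨t, ht, hx⟩ := hc a b hab hlt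
      have hl : (C b : ℕ) < χ - 1 := by
        have h1 : (C b : ℕ) < C a := hlt
        have h2 := (C a).isLt
        omega
      exact ⟨_, a, b, ⟨C b, hl⟩, t, rfl, rfl, hab, hlt, rfl, ht, hx⟩
    intro e he
    induction e using Sym2.ind with
    | _ a b =>
      have hab : G.Adj a b := he
      rcases lt_or_gt_of_ne (hC a b hab) with h | h
      · rw [Sym2.eq_swap]; exact aux b a hab.symm h
      · exact aux a b hab h
  have hpos : 0 < (χ - 1) * k := Nat.mul_pos (by omega) hkpos
  refine Nat.sInf_le ⟨fun e => if he : e ∈ G.edgeSet then (hedge e he).choose else ⟨0, hpos⟩, ?_⟩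
  intro e₁ he₁ e₂ he₂ hconf heq
  simp only [he₁, he₂, dif_pos] at heq
  obtain ⟨a, b, l, t, hn, hE, hab, hlt, hl, hct, hx⟩ := (hedge e₁ he₁).choose_spec
  obtain ⟨a', b', l', t', hn', hE', hab', hlt', hl', hct', hx'⟩ := (hedge e₂ he₂).choose_spec
  rw [hn, hn'] at heq
  have hp := finProdFinEquiv.injective heq
  simp only [Prod.mk.injEq] at hp
  obtain ⟨rfl, rfl⟩ := hp
  have hbb : C b = C b' := Fin.ext (hl.trans hl'.symm)
  have nbb : ¬ G.Adj b b' := fun h => hC _ _ h hbb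
  have hab'ne : a ≠ b' := by rintro rfl; exact absurd hbb hlt.ne
  have ha'bne : a' ≠ b := by rintro rfl; exact absurd hbb.symm hlt'.ne
  have naa : ¬ G.Adj a a' := fun h => hx a' (Or.inl h) ha'bne h.ne' hct'
  subst hE hE'
  obtain ⟨hne, hcase⟩ := hconf
  rcases hcase with ⟨hdisj, u, hu, v, hv, huv⟩ | ⟨x, y, z, hxy, hyz, hxz, h1, h2⟩
  · have haa : a ≠ a' := by
      rintro rfl
      exact hdisj a (by simp) (by simp)
    rw [Sym2.mem_iff] at hu hv
    rcases hu with rfl | rfl <;> rcases hv with rfl | rfl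
    · exact naa huv
    · exact hx' u (Or.inr huv.symm) hab'ne haa hct
    · exact hx v (Or.inr huv) ha'bne haa.symm hct'
    · exact nbb huv
  · have mem3 : ∀ e ∈ ({s(x, y), s(y, z), s(x, z)} : Set (Sym2 V)), ∀ w ∈ e,
        w = x ∨ w = y ∨ w = z := by
      intro e he w hw
      simp only [Set.mem_insert_iff, Set.mem_singleton_iff] at he
      rcases he with rfl | rfl | rfl <;> rw [Sym2.mem_iff] at hw <;> tauto
    have adj3 : ∀ v w, (v = x ∨ v = y ∨ v = z) → (w = x ∨ w = y ∨ w = z) → v ≠ w →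
        G.Adj v w := by
      rintro v w (rfl | rfl | rfl) (rfl | rfl | rfl) hvw <;>
        first
        | exact absurd rfl hvw
        | assumption
        | (apply SimpleGraph.Adj.symm; assumption)
    by_cases haa : a = a'
    · by_cases hbb' : b = b'
      · exact hne (by rw [haa, hbb'])
      · exact nbb (adj3 b b' (mem3 _ h1 _ (by simp)) (mem3 _ h2 _ (by simp)) hbb')
    · exact naa (adj3 a a' (mem3 _ h1 _ (by simp)) (mem3 _ h2 _ (by simp)) haa)
end

section
/- Let Δ ≥ 41 be an integer and set k = ⌈27 Δ ln Δ⌉. Let G be a finite simple graph with maximum degree at most Δ and let Y be an independent set of vertices of G. Then the set of edges of G with exactly one endpoint in Y can be partitioned into k sets, each of which is G-good. -/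
open SimpleGraph

/-- A set `F` of edges is `G`-good if no two (distinct) edges in `F` conflict. -/
def GGood {V : Type*} (G : SimpleGraph V) (F : Set (Sym2 V)) : Prop :=
  ∀ e₁ ∈ F, ∀ e₂ ∈ F, ¬ EdgeConflict G e₁ e₂

open Classical in
/-- Counting form of the symmetric local lemma. -/
theorem lll_aux {Ω ι : Type*} [Fintype Ω] [DecidableEq ι] (B : ι → Ω → Prop)
    (nb : ι → Finset ι) (D : ℕ) (q : ℝ) (hq0 : 0 ≤ q) (hD : ∀ e, (nb e).card ≤ D)
    (hDq : 4 * D * q ≤ 1)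
    (hind : ∀ e, ∀ T : Finset ι, Disjoint T (nb e) →
      ((Finset.univ.filter (fun w => B e w ∧ ∀ f ∈ T, ¬ B f w)).card : ℝ)
        ≤ q * (Finset.univ.filter (fun w => ∀ f ∈ T, ¬ B f w)).card) :
    ∀ n : ℕ, ∀ T : Finset ι, T.card = n → ∀ e,
      ((Finset.univ.filter (fun w => B e w ∧ ∀ f ∈ T, ¬ B f w)).card : ℝ)
        ≤ 2 * q * (Finset.univ.filter (fun w => ∀ f ∈ T, ¬ B f w)).card := by
  intro n
  induction n using Nat.strong_induction_on with
  | _ n ih =>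
  intro T hT e
  by_cases hdis : Disjoint T (nb e)
  · refine (hind e T hdis).trans ?_
    have : (0:ℝ) ≤ (Finset.univ.filter (fun w => ∀ f ∈ T, ¬ B f w)).card := by positivity
    nlinarith [mul_nonneg hq0 this]
  set T2 := T \ nb e with hT2
  set T1 := T ∩ nb e with hT1
  have hlt : T2.card < n := by
    rw [← hT]
    apply Finset.card_lt_card
    rw [Finset.ssubset_iff_subset_ne]
    refine ⟨Finset.sdiff_subset, fun h => hdis ?_⟩
    rw [← h]
    exact Finset.sdiff_disjoint
  have h1 : ((Finset.univ.filter (fun w => B e w ∧ ∀ f ∈ T, ¬ B f w)).card : ℝ)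
      ≤ (Finset.univ.filter (fun w => B e w ∧ ∀ f ∈ T2, ¬ B f w)).card := by
    exact_mod_cast Finset.card_le_card (by
      intro w hw
      simp only [Finset.mem_filter, Finset.mem_univ, true_and] at hw ⊢
      exact ⟨hw.1, fun f hf => hw.2 f (Finset.sdiff_subset hf)⟩)
  have h2 := hind e T2 Finset.sdiff_disjoint
  have h3 : ((Finset.univ.filter (fun w => ∀ f ∈ T2, ¬ B f w)).card : ℝ)
      ≤ (Finset.univ.filter (fun w => ∀ f ∈ T, ¬ B f w)).card
        + ∑ f ∈ T1, ((Finset.univ.filter (fun w => B f w ∧ ∀ g ∈ T2, ¬ B g w)).card : ℝ) := by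
    have hsub : (Finset.univ.filter (fun w => ∀ f ∈ T2, ¬ B f w)) ⊆
        (Finset.univ.filter (fun w => ∀ f ∈ T, ¬ B f w)) ∪
        T1.biUnion (fun f => Finset.univ.filter (fun w => B f w ∧ ∀ g ∈ T2, ¬ B g w)) := by
      intro w hw
      simp only [Finset.mem_filter, Finset.mem_univ, true_and, Finset.mem_union,
        Finset.mem_biUnion] at hw ⊢
      by_contra hcon
      push Not at hcon
      obtain ⟨⟨f, hf, hB⟩, h⟩ := hcon
      by_cases hfn : f ∈ nb e
      · obtain ⟨g, hg, hgB⟩ := h f (Finset.mem_inter.2 ⟨hf, hfn⟩) hB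
        exact hw g hg hgB
      · exact hw f (Finset.mem_sdiff.2 ⟨hf, hfn⟩) hB
    have := (Finset.card_le_card hsub).trans ((Finset.card_union_le _ _).trans
      (Nat.add_le_add_left Finset.card_biUnion_le _))
    exact_mod_cast this
  set M : ℝ := ((Finset.univ.filter (fun w => ∀ f ∈ T2, ¬ B f w)).card : ℝ) with hM
  have hM0 : 0 ≤ M := by positivity
  have h4 : ∑ f ∈ T1, ((Finset.univ.filter (fun w => B f w ∧ ∀ g ∈ T2, ¬ B g w)).card : ℝ)
      ≤ D * (2 * q * M) := by
    refine (Finset.sum_le_card_nsmul T1 _ (2 * q * M) (fun f _ => ih _ hlt T2 rfl f)).trans ?_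
    rw [nsmul_eq_mul]
    have : (T1.card : ℝ) ≤ D := by
      exact_mod_cast (Finset.card_le_card Finset.inter_subset_right).trans (hD e)
    exact mul_le_mul_of_nonneg_right this (by positivity)
  have h5 : D * (2 * q * M) ≤ M / 2 := by nlinarith
  nlinarith

open Classical in
theorem lll_s5 {Ω ι : Type*} [Fintype Ω] [Nonempty Ω] [DecidableEq ι] (B : ι → Ω → Prop)
    (nb : ι → Finset ι) (D : ℕ) (q : ℝ) (hq0 : 0 ≤ q) (hq1 : 2 * q < 1)
    (hD : ∀ e, (nb e).card ≤ D)
    (hDq : 4 * D * q ≤ 1)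
    (hind : ∀ e, ∀ T : Finset ι, Disjoint T (nb e) →
      ((Finset.univ.filter (fun w => B e w ∧ ∀ f ∈ T, ¬ B f w)).card : ℝ)
        ≤ q * (Finset.univ.filter (fun w => ∀ f ∈ T, ¬ B f w)).card) (T : Finset ι) :
    ∃ w, ∀ f ∈ T, ¬ B f w := by
  have key : 0 < (Finset.univ.filter (fun w => ∀ f ∈ T, ¬ B f w)).card := by
    induction T using Finset.induction_on with
    | empty => simp [Fintype.card_pos]
    | insert a s ha ihs =>
      have h := lll_aux B nb D q hq0 hD hDq hind _ s rfl a
      have hsub : (Finset.univ.filter (fun w => ∀ f ∈ s, ¬ B f w)) ⊆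
          (Finset.univ.filter (fun w => ∀ f ∈ insert a s, ¬ B f w)) ∪
          Finset.univ.filter (fun w => B a w ∧ ∀ f ∈ s, ¬ B f w) := by
        intro w hw
        simp only [Finset.mem_filter, Finset.mem_univ, true_and, Finset.mem_union,
          Finset.mem_insert, forall_eq_or_imp] at hw ⊢
        tauto
      have h2 := (Finset.card_le_card hsub).trans (Finset.card_union_le _ _)
      have h3 : ((Finset.univ.filter (fun w => ∀ f ∈ s, ¬ B f w)).card : ℝ) ≤
          (Finset.univ.filter (fun w => ∀ f ∈ insert a s, ¬ B f w)).card +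
          (Finset.univ.filter (fun w => B a w ∧ ∀ f ∈ s, ¬ B f w)).card := by
        exact_mod_cast h2
      have h4 : (0:ℝ) < (Finset.univ.filter (fun w => ∀ f ∈ s, ¬ B f w)).card := by
        exact_mod_cast ihs
      have : (0:ℝ) < (Finset.univ.filter (fun w => ∀ f ∈ insert a s, ¬ B f w)).card := by
        nlinarith
      exact_mod_cast this
  obtain ⟨w, hw⟩ := Finset.card_pos.1 key
  exact ⟨w, (Finset.mem_filter.1 hw).2⟩

/-- Mix two configurations. -/
def mixCfg {K V α : Type*} (S : Finset V) [DecidableEq V] (a b : K → V → α) : K → V → α :=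
  fun i v => if v ∈ S then a i v else b i v

open Classical in
theorem indep_count {K V α : Type*} [Fintype K] [DecidableEq K] [DecidableEq V] [Fintype V] [Fintype α]
    (S : Finset V) (P Q : (K → V → α) → Prop)
    (hP : ∀ a b : K → V → α, (∀ i, ∀ v ∈ S, a i v = b i v) → P a → P b)
    (hQ : ∀ a b : K → V → α, (∀ i, ∀ v ∉ S, a i v = b i v) → Q a → Q b) :
    (Finset.univ.filter (fun w => P w ∧ Q w)).card * Fintype.card (K → V → α)
      = (Finset.univ.filter P).card * (Finset.univ.filter Q).card := by
  rw [← Finset.card_univ, ← Finset.card_product, ← Finset.card_product]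
  refine Finset.card_bij' (fun p _ => (mixCfg S p.1 p.2, mixCfg S p.2 p.1))
    (fun p _ => (mixCfg S p.1 p.2, mixCfg S p.2 p.1)) ?_ ?_ ?_ ?_
  · intro p hp
    simp only [Finset.mem_product, Finset.mem_filter, Finset.mem_univ, true_and, and_true] at hp ⊢
    refine ⟨hP p.1 _ ?_ hp.1, hQ p.1 _ ?_ hp.2⟩
    · intro i v hv; simp [mixCfg, hv]
    · intro i v hv; simp [mixCfg, hv]
  · intro p hp
    simp only [Finset.mem_product, Finset.mem_filter, Finset.mem_univ, true_and, and_true] at hp ⊢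
    refine ⟨hP p.1 _ ?_ hp.1, hQ p.2 _ ?_ hp.2⟩
    · intro i v hv; simp [mixCfg, hv]
    · intro i v hv; simp [mixCfg, hv]
  · intro p hp
    ext i v <;> by_cases hv : v ∈ S <;> simp [mixCfg, hv]
  · intro p hp
    ext i v <;> by_cases hv : v ∈ S <;> simp [mixCfg, hv]

/-- A layer isolates `x` in `W`. -/
def Isol {V : Type*} {m : ℕ} (W : Finset V) (x : V) (w : V → Fin (m + 1)) : Prop :=
  w x = 0 ∧ ∀ z ∈ W, z ≠ x → w z ≠ 0

open Classical in
theorem isol_count {V : Type*} [Fintype V] (m : ℕ) (hm : 1 ≤ m) (W : Finset V) (x : V)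
    (hx : x ∈ W) (hW : W.card ≤ m + 1) :
    ((m : ℝ) + 1) ^ (Fintype.card V) / ((m + 1) * Real.exp 1) ≤
      ((Finset.univ.filter (fun w : V → Fin (m + 1) => Isol W x w)).card : ℝ) := by
  have heq : (Finset.univ.filter (fun w : V → Fin (m + 1) => Isol W x w)) =
      Fintype.piFinset (fun v => if v = x then ({0} : Finset (Fin (m + 1)))
        else if v ∈ W then Finset.univ.erase 0 else Finset.univ) := by
    ext w
    simp only [Finset.mem_filter, Finset.mem_univ, true_and, Fintype.mem_piFinset]
    unfold Isol
    constructor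
    · rintro ⟨h1, h2⟩ v
      split_ifs with h3 h4
      · simp [h3, h1]
      · simp [h2 v h4 h3]
      · simp
    · intro h
      refine ⟨by simpa using h x, fun z hz hzx => ?_⟩
      have := h z
      simpa [hz, hzx] using this
  rw [heq, Fintype.card_piFinset]
  have hm0 : (0:ℝ) < m := by exact_mod_cast hm
  push_cast
  have hprod : (∏ v : V, (((if v = x then ({0} : Finset (Fin (m + 1)))
        else if v ∈ W then Finset.univ.erase 0 else Finset.univ).card : ℕ) : ℝ))
      = ((m:ℝ)+1) ^ (Fintype.card V) * ((1 / (m+1)) * ((m:ℝ)/(m+1)) ^ (W.card - 1)) := by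
    have h1 : ∀ v : V, (((if v = x then ({0} : Finset (Fin (m + 1)))
        else if v ∈ W then Finset.univ.erase 0 else Finset.univ).card : ℕ) : ℝ)
        = ((m:ℝ)+1) * ((if v = x then 1 / ((m:ℝ)+1) else 1) *
          (if v ∈ W.erase x then (m:ℝ)/(m+1) else 1)) := by
      intro v
      by_cases hv : v = x
      · subst hv; simp; field_simp
      · by_cases hvW : v ∈ W
        · simp [hv, hvW]; field_simp
        · simp [hv, hvW]
    rw [Finset.prod_congr rfl (fun v _ => h1 v), Finset.prod_mul_distrib,
      Finset.prod_mul_distrib, Finset.prod_const, Finset.card_univ,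
      Finset.prod_ite_eq' Finset.univ x, if_pos (Finset.mem_univ _), Finset.prod_ite_mem,
      Finset.univ_inter, Finset.prod_const, Finset.card_erase_of_mem hx]
  rw [hprod]
  have hr : (m:ℝ)/(m+1) ≤ 1 := by rw [div_le_one (by positivity)]; linarith
  have h2 : ((m:ℝ)/(m+1)) ^ m ≤ ((m:ℝ)/(m+1)) ^ (W.card - 1) :=
    pow_le_pow_of_le_one (by positivity) hr (by omega)
  have h3 : (Real.exp 1)⁻¹ ≤ ((m:ℝ)/(m+1)) ^ m := by
    have h4 : ((m:ℝ)+1)/m ≤ Real.exp (1/m) := by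
      have := Real.add_one_le_exp (1/(m:ℝ))
      have h5 : ((m:ℝ)+1)/m = 1/m + 1 := by field_simp; ring
      linarith
    have h6 : (((m:ℝ)+1)/m)^m ≤ Real.exp 1 := by
      calc (((m:ℝ)+1)/m)^m ≤ (Real.exp (1/m))^m := pow_le_pow_left₀ (by positivity) h4 m
        _ = Real.exp 1 := by rw [← Real.exp_nat_mul]; congr 1; field_simp
    have h7 : ((m:ℝ)/(m+1)) ^ m = ((((m:ℝ)+1)/m)^m)⁻¹ := by rw [← inv_pow, inv_div]
    rw [h7]
    exact inv_anti₀ (by positivity) h6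
  rw [div_eq_mul_inv, mul_inv, ← one_div ((m:ℝ)+1)]
  gcongr
  exact h3.trans h2

open Classical in
theorem bad_count {V : Type*} [Fintype V] (k m : ℕ) (hm : 1 ≤ m) (W : Finset V) (x : V)
    (hx : x ∈ W) (hW : W.card ≤ m + 1) :
    ((Finset.univ.filter (fun w : Fin k → V → Fin (m + 1) => ∀ i, ¬ Isol W x (w i))).card : ℝ)
      ≤ Real.exp (-(k / ((m + 1) * Real.exp 1))) *
        Fintype.card (Fin k → V → Fin (m + 1)) := by
  have heq : (Finset.univ.filter (fun w : Fin k → V → Fin (m + 1) => ∀ i, ¬ Isol W x (w i))) =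
      Fintype.piFinset (fun _ => Finset.univ.filter (fun w : V → Fin (m + 1) => ¬ Isol W x w)) := by
    ext w; simp
  rw [heq, Fintype.card_piFinset_const]
  have h1 := isol_count m hm W x hx hW
  have h2 := Finset.card_filter_add_card_filter_not (s := (Finset.univ : Finset (V → Fin (m+1))))
    (fun w => Isol W x w)
  have h3 : ((Finset.univ.filter (fun w : V → Fin (m + 1) => Isol W x w)).card : ℝ) +
      (Finset.univ.filter (fun w : V → Fin (m + 1) => ¬ Isol W x w)).card
      = ((m:ℝ)+1) ^ (Fintype.card V) := by
    have h4 : (Finset.univ : Finset (V → Fin (m+1))).card = (m+1)^(Fintype.card V) := by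
      simp [Finset.card_univ]
    rw [h4] at h2
    exact_mod_cast h2
  set N : ℝ := ((m:ℝ)+1) ^ (Fintype.card V) with hN
  set t : ℝ := 1 / (((m:ℝ)+1) * Real.exp 1) with ht
  have h5 : ((Finset.univ.filter (fun w : V → Fin (m + 1) => ¬ Isol W x w)).card : ℝ)
      ≤ Real.exp (-t) * N := by
    have h6 := Real.add_one_le_exp (-t)
    have h7 : 0 ≤ N := by positivity
    have h8 : N / (((m:ℝ)+1) * Real.exp 1) = t * N := by rw [ht]; ring
    rw [h8] at h1
    nlinarith
  have h9 : (Fintype.card (Fin k → V → Fin (m + 1)) : ℝ) = N ^ k := by simp [hN]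
  rw [h9]
  push_cast
  calc _ ≤ (Real.exp (-t) * N) ^ k := pow_le_pow_left₀ (by positivity) h5 k
    _ = _ := by
      rw [mul_pow, ← Real.exp_nat_mul]
      congr 2
      rw [ht]; ring

theorem numeric (Δ k : ℕ) (hΔ : 41 ≤ Δ) (hk : (27 : ℝ) * Δ * Real.log Δ ≤ k) :
    Real.exp (-(k / (2 * Δ * Real.exp 1))) ≤ 1 / (16 * (Δ:ℝ) ^ 3) := by
  have hΔr : (41:ℝ) ≤ Δ := by exact_mod_cast hΔ
  have hlog : 0 ≤ Real.log Δ := Real.log_nonneg (by linarith)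
  have he : Real.exp 1 ≤ 27 / 8 := by linarith [Real.exp_one_lt_d9]
  have he0 := Real.exp_pos 1
  have h1 : 4 * Real.log Δ ≤ k / (2 * Δ * Real.exp 1) := by
    rw [le_div_iff₀ (by positivity)]
    have : 0 ≤ Δ * Real.log Δ := by positivity
    nlinarith
  calc Real.exp (-(k / (2 * Δ * Real.exp 1))) ≤ Real.exp (-(4 * Real.log Δ)) := by
        apply Real.exp_le_exp.2; linarith
    _ = 1 / (Δ:ℝ)^4 := by
        have : (4:ℝ) * Real.log Δ = Real.log ((Δ:ℝ)^4) := by simp [Real.log_pow]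
        rw [Real.exp_neg, this, Real.exp_log (by positivity), one_div]
    _ ≤ 1 / (16 * (Δ:ℝ)^3) := by
        apply one_div_le_one_div_of_le (by positivity)
        have : (0:ℝ) ≤ (Δ:ℝ)^3 := by positivity
        nlinarith

open Classical in
theorem exists_config {V : Type*} [Fintype V] (G : SimpleGraph V)
    [DecidableRel G.Adj] (Δ k : ℕ) (hΔ : 41 ≤ Δ) (hdeg : ∀ v : V, G.degree v ≤ Δ)
    (hk : (27 : ℝ) * Δ * Real.log Δ ≤ k) :
    ∃ w : Fin k → V → Fin (2 * Δ - 1 + 1), ∀ x y, G.Adj x y →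
      ∃ i, Isol (G.neighborFinset x ∪ G.neighborFinset y) x (w i) := by
  set m := 2 * Δ - 1 with hm
  have hm1 : m + 1 = 2 * Δ := by omega
  let W : V × V → Finset V := fun e => G.neighborFinset e.1 ∪ G.neighborFinset e.2
  let B : V × V → (Fin k → V → Fin (m + 1)) → Prop :=
    fun e w => G.Adj e.1 e.2 ∧ ∀ i, ¬ Isol (W e) e.1 (w i)
  let nz : V → Finset (V × V) := fun z =>
    (G.neighborFinset z).biUnion (fun a => (G.neighborFinset a).image (fun b => (a, b))) ∪
    (G.neighborFinset z).biUnion (fun a => (G.neighborFinset a).image (fun b => (b, a)))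
  let nb : V × V → Finset (V × V) := fun e => (W e).biUnion nz
  have hWc : ∀ e, (W e).card ≤ 2 * Δ := by
    intro e
    refine (Finset.card_union_le _ _).trans ?_
    have h1 := hdeg e.1
    have h2 := hdeg e.2
    simp only [SimpleGraph.card_neighborFinset_eq_degree]
    omega
  have hnz : ∀ z, (nz z).card ≤ 2 * (Δ * Δ) := by
    intro z
    refine (Finset.card_union_le _ _).trans ?_
    have hd : (G.neighborFinset z).card ≤ Δ := by
      rw [SimpleGraph.card_neighborFinset_eq_degree]; exact hdeg z
    have h1 : ∀ f : V → V → V × V, ((G.neighborFinset z).biUnion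
        (fun a => (G.neighborFinset a).image (f a))).card ≤ Δ * Δ := by
      intro f
      refine (Finset.card_biUnion_le_card_mul _ _ Δ ?_).trans (Nat.mul_le_mul_right _ hd)
      intro a _
      refine Finset.card_image_le.trans ?_
      rw [SimpleGraph.card_neighborFinset_eq_degree]; exact hdeg a
    have h2 := h1 (fun a b => (a, b))
    have h3 := h1 (fun a b => (b, a))
    linarith
  have hnb : ∀ e, (nb e).card ≤ 4 * Δ ^ 3 := by
    intro e
    refine (Finset.card_biUnion_le_card_mul _ _ (2 * (Δ * Δ)) (fun z _ => hnz z)).trans ?_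
    refine (Nat.mul_le_mul_right _ (hWc e)).trans (le_of_eq ?_)
    ring
  have hΔr : (41:ℝ) ≤ Δ := by exact_mod_cast hΔ
  have hΔ3 : (41:ℝ)^3 ≤ (Δ:ℝ)^3 := pow_le_pow_left₀ (by norm_num) hΔr 3
  obtain ⟨w, hw⟩ := lll_s5 B nb (4 * Δ ^ 3) (1 / (16 * (Δ:ℝ)^3)) (by positivity)
    (by
      have : 1 / (16 * (Δ:ℝ)^3) ≤ 1 / 16 :=
        one_div_le_one_div_of_le (by norm_num) (by nlinarith)
      linarith) hnb
    (by push_cast; apply le_of_eq; field_simp; norm_num) (by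
      intro e T hT
      suffices hgoal : ((Finset.univ.filter (fun w => B e w ∧ ∀ f ∈ T, ¬ B f w)).card : ℝ)
        ≤ (1 / (16 * (Δ:ℝ)^3)) * (Finset.univ.filter (fun w => ∀ f ∈ T, ¬ B f w)).card by
          convert hgoal
      by_cases hadj : G.Adj e.1 e.2
      swap
      · have : (Finset.univ.filter (fun w => B e w ∧ ∀ f ∈ T, ¬ B f w)) = ∅ := by
          apply Finset.filter_eq_empty_iff.2
          intro w _ h
          exact hadj h.1.1
        rw [this]
        simp only [Finset.card_empty, Nat.cast_zero]
        positivity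
      have hxW : e.1 ∈ W e := by simp [W, hadj.symm]
      have hcount := indep_count (W e) (B e) (fun w => ∀ f ∈ T, ¬ B f w)
        (by
          rintro a b hab ⟨h1, h2⟩
          refine ⟨h1, fun i hi => h2 i ⟨?_, ?_⟩⟩
          · rw [hab i _ hxW]; exact hi.1
          · intro z hz hzx
            rw [hab i z hz]; exact hi.2 z hz hzx)
        (by
          rintro a b hab h f hf ⟨h1, h2⟩
          have hdisj : ∀ z ∈ W f, z ∉ W e := by
            intro z hz hze
            refine Finset.disjoint_left.1 hT hf ?_
            refine Finset.mem_biUnion.2 ⟨z, hze, ?_⟩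
            rcases f with ⟨f1, f2⟩
            simp only [W, Finset.mem_union, SimpleGraph.mem_neighborFinset] at hz
            simp only [nz, Finset.mem_union, Finset.mem_biUnion, Finset.mem_image,
              SimpleGraph.mem_neighborFinset]
            rcases hz with hz | hz
            · exact Or.inl ⟨f1, hz.symm, f2, h1, rfl⟩
            · exact Or.inr ⟨f2, hz.symm, f1, h1.symm, rfl⟩
          have hfW : f.1 ∈ W f := by simp [W, SimpleGraph.Adj.symm h1]
          refine h f hf ⟨h1, fun i hi => h2 i ⟨?_, ?_⟩⟩
          · rw [← hab i _ (hdisj _ hfW)]; exact hi.1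
          · intro z hz hzx
            rw [← hab i z (hdisj z hz)]; exact hi.2 z hz hzx)
      have hbad := bad_count k m (by omega) (W e) e.1 hxW (by rw [hm1]; exact hWc e)
      have hBeq : Finset.univ.filter (B e) = Finset.univ.filter
          (fun w : Fin k → V → Fin (m + 1) => ∀ i, ¬ Isol (W e) e.1 (w i)) := by
        ext w; simp [B, hadj]
      rw [← hBeq] at hbad
      have hnum := numeric Δ k hΔ hk
      have hcast : ((m:ℝ) + 1) = 2 * Δ := by exact_mod_cast hm1
      rw [hcast] at hbad
      have hcR : ((Finset.univ.filter (fun w => B e w ∧ ∀ f ∈ T, ¬ B f w)).card : ℝ) *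
          (Fintype.card (Fin k → V → Fin (m + 1)) : ℝ) =
          ((Finset.univ.filter (B e)).card : ℝ) *
            (Finset.univ.filter (fun w => ∀ f ∈ T, ¬ B f w)).card := by
        rw [← Nat.cast_mul, ← Nat.cast_mul]
        congr 1
        convert hcount
      have hNpos : (0:ℝ) < (Fintype.card (Fin k → V → Fin (m + 1)) : ℝ) := by
        exact_mod_cast Fintype.card_pos
      refine le_of_mul_le_mul_right ?_ hNpos
      rw [hcR]
      have hb2 := hbad.trans (mul_le_mul_of_nonneg_right hnum hNpos.le)
      refine (mul_le_mul_of_nonneg_right hb2 (by positivity)).trans (le_of_eq ?_)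
      ring) Finset.univ
  refine ⟨w, fun x y hxy => ?_⟩
  have := hw (x, y) (Finset.mem_univ _)
  by_contra hcon
  push Not at hcon
  exact this ⟨hxy, hcon⟩

theorem triangle_pair {V : Type*} {G : SimpleGraph V} {a b c : V} {e₁ e₂ : Sym2 V}
    (hab : G.Adj a b) (hbc : G.Adj b c) (hac : G.Adj a c) (hne : e₁ ≠ e₂)
    (h1 : e₁ ∈ ({s(a, b), s(b, c), s(a, c)} : Set (Sym2 V)))
    (h2 : e₂ ∈ ({s(a, b), s(b, c), s(a, c)} : Set (Sym2 V))) :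
    ∃ p q r, e₁ = s(p, q) ∧ e₂ = s(p, r) ∧ G.Adj q r := by
  simp only [Set.mem_insert_iff, Set.mem_singleton_iff] at h1 h2
  rcases h1 with rfl | rfl | rfl <;> rcases h2 with rfl | rfl | rfl
  · exact absurd rfl hne
  · exact ⟨b, a, c, Sym2.eq_swap, rfl, hac⟩
  · exact ⟨a, b, c, rfl, rfl, hbc⟩
  · exact ⟨b, c, a, rfl, Sym2.eq_swap, hac.symm⟩
  · exact absurd rfl hne
  · exact ⟨c, b, a, Sym2.eq_swap, Sym2.eq_swap, hab.symm⟩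
  · exact ⟨a, c, b, rfl, rfl, hbc.symm⟩
  · exact ⟨c, a, b, Sym2.eq_swap, Sym2.eq_swap, hab⟩
  · exact absurd rfl hne

theorem partition_into_good_sets {V : Type*} [Fintype V] (G : SimpleGraph V)
    [DecidableRel G.Adj] (Δ : ℕ) (hΔ : 41 ≤ Δ) (hdeg : ∀ v : V, G.degree v ≤ Δ)
    (Y : Set V) (hY : ∀ u ∈ Y, ∀ v ∈ Y, ¬ G.Adj u v) :
    ∃ P : Fin (⌈(27 : ℝ) * Δ * Real.log Δ⌉₊) → Set (Sym2 V),
      (∀ i, GGood G (P i)) ∧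
      (∀ i j, i ≠ j → Disjoint (P i) (P j)) ∧
      (⋃ i, P i) = {e | e ∈ G.edgeSet ∧ ∃ x y : V, e = s(x, y) ∧ y ∈ Y ∧ x ∉ Y} := by
  classical
  obtain ⟨w, hw⟩ := exists_config G Δ _ hΔ hdeg (Nat.le_ceil ((27 : ℝ) * Δ * Real.log Δ))
  have hex : ∀ e : Sym2 V, ∃ i : Fin (⌈(27 : ℝ) * Δ * Real.log Δ⌉₊),
      (e ∈ G.edgeSet ∧ ∃ x y : V, e = s(x, y) ∧ y ∈ Y ∧ x ∉ Y) →
      ∃ x y, e = s(x, y) ∧ y ∈ Y ∧ x ∉ Y ∧ G.Adj x y ∧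
        Isol (G.neighborFinset x ∪ G.neighborFinset y) x (w i) := by
    intro e
    by_cases h : e ∈ G.edgeSet ∧ ∃ x y : V, e = s(x, y) ∧ y ∈ Y ∧ x ∉ Y
    · obtain ⟨he, x, y, rfl, hy, hx⟩ := h
      obtain ⟨i, hi⟩ := hw x y he
      exact ⟨i, fun _ => ⟨x, y, rfl, hy, hx, he, hi⟩⟩
    · have hpos : 0 < ⌈(27 : ℝ) * Δ * Real.log Δ⌉₊ := by
        have hΔr : (41:ℝ) ≤ Δ := by exact_mod_cast hΔ
        have := Real.log_pos (show (1:ℝ) < Δ by linarith)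
        exact Nat.ceil_pos.2 (by positivity)
      exact ⟨⟨0, hpos⟩, fun h' => absurd h' h⟩
  choose col hcol using hex
  refine ⟨fun i => {e | (e ∈ G.edgeSet ∧ ∃ x y : V, e = s(x, y) ∧ y ∈ Y ∧ x ∉ Y) ∧ col e = i},
    ?_, ?_, ?_⟩
  · rintro i e₁ ⟨h1, hc1⟩ e₂ ⟨h2, hc2⟩ ⟨hne, hconf⟩
    have k1 := hcol e₁ h1
    have k2 := hcol e₂ h2
    rw [hc1] at k1
    rw [hc2] at k2
    obtain ⟨x, y, rfl, hy, hx, hxy, hw1, hw1'⟩ := k1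
    obtain ⟨x', y', rfl, hy', hx', hxy', hw2, hw2'⟩ := k2
    have hxx : ¬ G.Adj x x' := fun h =>
      hw1' x' (by simp [h]) h.ne' hw2
    have hxy2 : x ≠ x' → ¬ G.Adj x y' := fun hne' h =>
      hw2' x (by simp [h.symm]) hne' hw1
    have hxy3 : x ≠ x' → ¬ G.Adj x' y := fun hne' h =>
      hw1' x' (by simp [h.symm]) hne'.symm hw2
    rcases hconf with ⟨hd, u, hu, v, hv, huv⟩ | ⟨a, b, c, hab, hbc, hac, m1, m2⟩
    · have hne' : x ≠ x' := by
        rintro rfl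
        exact hd x (by simp) (by simp)
      simp only [Sym2.mem_iff] at hu hv
      rcases hu with rfl | rfl <;> rcases hv with rfl | rfl
      · exact hxx huv
      · exact hxy2 hne' huv
      · exact hxy3 hne' huv.symm
      · exact hY _ hy _ hy' huv
    · obtain ⟨p, q, r, e1, e2, hqr⟩ := triangle_pair hab hbc hac hne m1 m2
      rw [Sym2.eq_iff] at e1 e2
      rcases e1 with ⟨rfl, rfl⟩ | ⟨rfl, rfl⟩ <;> rcases e2 with ⟨rfl, rfl⟩ | ⟨rfl, rfl⟩
      · exact hY _ hy _ hy' hqr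
      · exact hx hy'
      · exact hx' hy
      · exact hxx hqr
  · intro i j hij
    rw [Set.disjoint_left]
    rintro e ⟨_, h1⟩ ⟨_, h2⟩
    exact hij (h1.symm.trans h2)
  · ext e
    simp only [Set.mem_iUnion, Set.mem_setOf_eq]
    constructor
    · rintro ⟨i, h, _⟩; exact h
    · intro h; exact ⟨col e, h, rfl⟩
end
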